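/- arXiv:2202.13697 — 17 statements merged into one kernel-verified Lean document; each statement's English description precedes it below -/
import Mathlib

section
/- Every separable metric space M admits a metric c₀(ℕ)-frame; that is, there exist a sequence (f_n)_{n∈ℕ} of Lipschitz functions f_n : M → ℝ such that (f_n(x))_n converges to 0 for every x ∈ M, and constants a, b > 0 such that a·d(x,y) ≤ sup_n |f_n(x) − f_n(y)| ≤ b·d(x,y) for all x, y ∈ M. -/
/-- The building block at scale `s`, with index `n`. -/
noncomputable def bump {M : Type*} [MetricSpace M] (u : ℕ → M) (s : ℝ) (n : ℕ) (x : M) : ℝ :=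
  max 0 (min (3 * s - dist x (u (n + 1))) (Metric.infDist x (Set.image u (Set.Iic n)) - s))

lemma bump_lip {M : Type*} [MetricSpace M] (u : ℕ → M) (s : ℝ) (n : ℕ) :
    LipschitzWith 1 (bump u s n) := by
  have h1 : LipschitzWith 1 (fun x : M => 3 * s - dist x (u (n + 1))) := by
    refine LipschitzWith.of_le_add fun x y => ?_
    have := dist_triangle y x (u (n + 1))
    rw [dist_comm y x] at this
    linarith
  have h2 : LipschitzWith 1 (fun x : M => Metric.infDist x (Set.image u (Set.Iic n)) - s) := by
    refine LipschitzWith.of_le_add fun x y => ?_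
    have := Metric.infDist_le_infDist_add_dist (s := Set.image u (Set.Iic n)) (x := x) (y := y)
    linarith
  have h3 := (h1.min h2).const_max 0
  rw [max_self] at h3
  exact h3

lemma bump_nonneg {M : Type*} [MetricSpace M] (u : ℕ → M) (s : ℝ) (n : ℕ) (x : M) :
    0 ≤ bump u s n x := le_max_left _ _

lemma bump_le {M : Type*} [MetricSpace M] (u : ℕ → M) (s : ℝ) (hs : 0 ≤ s) (n : ℕ) (x : M) :
    bump u s n x ≤ 3 * s := by
  refine max_le (by positivity) ((min_le_left _ _).trans ?_)
  linarith [dist_nonneg (x := x) (y := u (n + 1))]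

lemma bump_zero {M : Type*} [MetricSpace M] (u : ℕ → M) (s : ℝ) (n m : ℕ) (hm : m ≤ n) (x : M)
    (h : dist x (u m) ≤ s) : bump u s n x = 0 := by
  refine max_eq_left ((min_le_right _ _).trans ?_)
  have : Metric.infDist x (Set.image u (Set.Iic n)) ≤ dist x (u m) :=
    Metric.infDist_le_dist_of_mem ⟨m, hm, rfl⟩
  linarith

lemma bump_sep {M : Type*} [MetricSpace M] (u : ℕ → M) (hu : DenseRange u) (s : ℝ) (hs : 0 < s)
    (x y : M) (hxy : 5 * s ≤ dist x y) (hx : 2 * s ≤ dist x (u 0)) :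
    ∃ n, s ≤ |bump u s n x - bump u s n y| := by
  classical
  have hex : ∃ n, dist x (u n) < 2 * s := hu.exists_dist_lt x (by positivity)
  obtain ⟨n, hn, hmin⟩ : ∃ n, dist x (u n) < 2 * s ∧ ∀ m < n, 2 * s ≤ dist x (u m) :=
    ⟨Nat.find hex, Nat.find_spec hex, fun m hm => not_lt.1 (Nat.find_min hex hm)⟩
  cases n with
  | zero => linarith
  | succ n =>
    refine ⟨n, ?_⟩
    have h1 : s ≤ bump u s n x := by
      refine le_max_of_le_right (le_min (by linarith) ?_)
      have : 2 * s ≤ Metric.infDist x (Set.image u (Set.Iic n)) := by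
        refine (Metric.le_infDist (Set.Nonempty.image u ⟨0, Nat.zero_le n⟩)).2 ?_
        rintro _ ⟨m, hm, rfl⟩
        exact hmin m (Nat.lt_succ_of_le hm)
      linarith
    have h2 : bump u s n y = 0 := by
      refine max_eq_left ((min_le_left _ _).trans ?_)
      have := dist_triangle_right x y (u (n + 1))
      linarith
    rw [h2, sub_zero]
    exact h1.trans (le_abs_self _)

lemma bump_sep_symm {M : Type*} [MetricSpace M] (u : ℕ → M) (hu : DenseRange u) (s : ℝ)
    (hs : 0 < s) (x y : M) (hxy : 5 * s ≤ dist x y) :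
    ∃ n, s ≤ |bump u s n x - bump u s n y| := by
  by_cases hx : 2 * s ≤ dist x (u 0)
  · exact bump_sep u hu s hs x y hxy hx
  · have := dist_triangle_right x y (u 0)
    obtain ⟨n, hn⟩ := bump_sep u hu s hs y x (by rwa [dist_comm]) (by linarith)
    exact ⟨n, by rwa [abs_sub_comm]⟩

lemma bump_c0 {M : Type*} [MetricSpace M] (u : ℕ → M) (hu : DenseRange u) (x : M) :
    Filter.Tendsto (fun p : ℤ × ℕ => bump u ((2 : ℝ) ^ p.1) p.2 x) Filter.cofinite (nhds 0) := by
  rw [Metric.tendsto_nhds]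
  intro ε hε
  rw [Filter.eventually_cofinite]
  have hpos : ∀ k : ℤ, (0 : ℝ) < 2 ^ k := fun k => zpow_pos two_pos k
  choose m hm using fun k : ℤ => hu.exists_dist_lt x (hpos k)
  obtain ⟨k0, hk0, -⟩ := exists_mem_Ico_zpow (show (0 : ℝ) < ε / 3 by positivity) one_lt_two
  obtain ⟨k1, -, hk1⟩ := exists_mem_Ico_zpow
    (show (0 : ℝ) < dist x (u 0) + 1 by positivity) one_lt_two
  refine Set.Finite.subset
    ((Set.finite_Icc k0 (k1 + 1)).biUnion
      (fun k _ => (Set.finite_Iio (m k)).image (fun n => (k, n)))) ?_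
  rintro ⟨k, n⟩ h
  simp only [Set.mem_ofPred_eq, not_lt, Real.dist_eq, sub_zero,
    abs_of_nonneg (bump_nonneg u _ _ _)] at h
  have hne : bump u ((2 : ℝ) ^ k) n x ≠ 0 := by
    intro h0
    rw [h0] at h
    linarith
  simp only [Set.mem_iUnion]
  refine ⟨k, ⟨?_, ?_⟩, n, ?_, rfl⟩
  · by_contra hk
    push Not at hk
    have h1 := bump_le u _ (hpos k).le n x
    have h2 : (2 : ℝ) ^ k < 2 ^ k0 := zpow_lt_zpow_right₀ one_lt_two hk
    linarith
  · by_contra hk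
    push Not at hk
    have h2 : (2 : ℝ) ^ (k1 + 1) < 2 ^ k := zpow_lt_zpow_right₀ one_lt_two hk
    exact hne (bump_zero u _ n 0 (Nat.zero_le _) x (by linarith))
  · by_contra hk
    simp only [Set.mem_Iio, not_lt] at hk
    exact hne (bump_zero u _ n (m k) hk x (hm k).le)

/-- **Every separable metric space admits a metric `c₀(ℕ)`-frame**: there exist a sequence
`(f_n)` of Lipschitz functions `f_n : M → ℝ` such that `(f_n x)_n` converges to `0` for every
`x ∈ M`, and constants `a, b > 0` with
`a * d(x,y) ≤ sup_n |f_n x - f_n y| ≤ b * d(x,y)` for all `x, y ∈ M`. -/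
theorem separable_metric_space_admits_metric_c0_frame
    (M : Type*) [MetricSpace M] [TopologicalSpace.SeparableSpace M] :
    ∃ (f : ℕ → M → ℝ) (a b : ℝ), 0 < a ∧ 0 < b ∧
      (∀ n, ∃ K, LipschitzWith K (f n)) ∧
      (∀ x : M, Filter.Tendsto (fun n => f n x) Filter.atTop (nhds 0)) ∧
      (∀ x y : M, a * dist x y ≤ ⨆ n, |f n x - f n y|) ∧
      (∀ x y : M, (⨆ n, |f n x - f n y|) ≤ b * dist x y) := by
  rcases isEmpty_or_nonempty M with hM | hM
  · exact ⟨fun _ _ => 0, 1, 1, one_pos, one_pos, fun _ => ⟨0, fun x => hM.elim x⟩,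
      fun x => hM.elim x, fun x => hM.elim x, fun x => hM.elim x⟩
  obtain ⟨u, hu⟩ := TopologicalSpace.exists_dense_seq M
  let e : ℕ ≃ ℤ × ℕ := (Denumerable.eqv (ℤ × ℕ)).symm
  have hle : ∀ (x y : M) (n : ℕ),
      |bump u ((2 : ℝ) ^ (e n).1) (e n).2 x - bump u ((2 : ℝ) ^ (e n).1) (e n).2 y|
        ≤ 1 * dist x y := fun x y n => by
    simpa [Real.dist_eq] using (bump_lip u ((2 : ℝ) ^ (e n).1) (e n).2).dist_le_mul x y
  refine ⟨fun n x => bump u ((2 : ℝ) ^ (e n).1) (e n).2 x, 1 / 10, 1, by norm_num, one_pos,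
    fun n => ⟨1, bump_lip u _ _⟩, fun x => ?_, fun x y => ?_, fun x y => ciSup_le (hle x y)⟩
  · have := (bump_c0 u hu x).comp e.injective.tendsto_cofinite
    rwa [Nat.cofinite_eq_atTop] at this
  · rcases eq_or_ne x y with rfl | hxy
    · simp
    have hd : 0 < dist x y := dist_pos.2 hxy
    obtain ⟨k, hk1, hk2⟩ :=
      exists_mem_Ico_zpow (show (0 : ℝ) < dist x y / 5 by positivity) one_lt_two
    rw [zpow_add_one₀ two_ne_zero] at hk2
    obtain ⟨n, hn⟩ := bump_sep_symm u hu ((2 : ℝ) ^ k) (zpow_pos two_pos k) x y (by linarith)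
    refine le_trans ?_ (le_ciSup ⟨1 * dist x y, Set.forall_mem_range.2 (hle x y)⟩ (e.symm (k, n)))
    simp only [Equiv.apply_symm_apply]
    linarith
end

section
/- Let (M, 0) be a pointed metric space, 1 < p < ∞ with conjugate exponent q, b > 0, and let (f_n)_{n∈ℕ} be a sequence of Lipschitz functions f_n : M → 𝕂 with f_n(0) = 0 for all n. Then (f_n) is a metric p-Bessel sequence for M with bound b if and only if for every (a_n)_n ∈ ℓ^q(ℕ) the series ∑_{n=1}^∞ a_n (f_n(x) − f_n(y)) converges for all x, y ∈ M, and the function F(x,y) := ∑_{n=1}^∞ a_n (f_n(x) − f_n(y)) satisfies |F(x,y) − F(u,v)| ≤ b·‖(a_n)‖_q·(d(x,u) + d(y,v)) for all x, y, u, v ∈ M. -/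
/-- Characterization of metric p-Bessel sequences on a pointed metric space `(M, base)`:
`(f_n)` (Lipschitz, vanishing at the base point) is a metric p-Bessel sequence with bound `b`
iff for every `(a_n) ∈ ℓ^q` the series `∑ a_n (f_n x - f_n y)` converges for all `x, y` and the
resulting function `F(x,y)` satisfies
`|F(x,y) - F(u,v)| ≤ b ‖(a_n)‖_q (d(x,u) + d(y,v))`. -/
theorem metric_pBessel_iff_multiplier_lipschitz
    {𝕂 : Type*} [RCLike 𝕂] {M : Type*} [MetricSpace M] (base : M)
    (p q : ℝ) (hp : 1 < p) (hpq : 1 / p + 1 / q = 1)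
    (b : ℝ) (hb : 0 < b)
    (f : ℕ → M → 𝕂) (hlip : ∀ n, ∃ K, LipschitzWith K (f n))
    (hf0 : ∀ n, f n base = 0) :
    ((∀ x y : M, Summable fun n => ‖f n x - f n y‖ ^ p) ∧
      ∀ x y : M, (∑' n, ‖f n x - f n y‖ ^ p) ^ (1 / p) ≤ b * dist x y) ↔
    (∀ a : ℕ → 𝕂, Summable (fun n => ‖a n‖ ^ q) →
      (∀ x y : M, Summable fun n => a n * (f n x - f n y)) ∧
      ∀ x y u v : M,
        ‖(∑' n, a n * (f n x - f n y)) - ∑' n, a n * (f n u - f n v)‖ ≤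
          b * (∑' n, ‖a n‖ ^ q) ^ (1 / q) * (dist x u + dist y v)) := by
  have hp0 : 0 < p := by linarith
  have hH : p.HolderConjugate q := by
    rw [Real.holderConjugate_iff]
    exact ⟨hp, by simpa using hpq⟩
  have hq0 : 0 < q := hH.symm.pos
  constructor
  · rintro ⟨hs, hB⟩ a ha
    have hsum : ∀ x y : M, Summable fun n => ‖a n * (f n x - f n y)‖ := by
      intro x y
      have := Real.summable_mul_of_Lp_Lq_of_nonneg hH.symm (f := fun n => ‖a n‖)
        (g := fun n => ‖f n x - f n y‖) (fun _ => norm_nonneg _) (fun _ => norm_nonneg _) ha (hs x y)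
      simpa only [norm_mul] using this
    have hbd : ∀ x y : M, ‖∑' n, a n * (f n x - f n y)‖ ≤
        b * (∑' n, ‖a n‖ ^ q) ^ (1 / q) * dist x y := by
      intro x y
      have h1 := norm_tsum_le_tsum_norm (hsum x y)
      have h2 := (Real.inner_le_Lp_mul_Lq_tsum_of_nonneg hH.symm (f := fun n => ‖a n‖)
        (g := fun n => ‖f n x - f n y‖) (fun _ => norm_nonneg _) (fun _ => norm_nonneg _) ha
        (hs x y))
      simp only [norm_mul] at h1
      have h3 : 0 ≤ (∑' n, ‖a n‖ ^ q) ^ (1 / q) :=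
        Real.rpow_nonneg (tsum_nonneg fun _ => Real.rpow_nonneg (norm_nonneg _) _) _
      have h4 := mul_le_mul_of_nonneg_left (hB x y) h3
      linarith
    refine ⟨fun x y => (hsum x y).of_norm, fun x y u v => ?_⟩
    have e : (∑' n, a n * (f n x - f n y)) - ∑' n, a n * (f n u - f n v) =
        (∑' n, a n * (f n x - f n u)) - ∑' n, a n * (f n y - f n v) := by
      rw [← (hsum x y).of_norm.tsum_sub (hsum u v).of_norm,
        ← (hsum x u).of_norm.tsum_sub (hsum y v).of_norm]
      exact tsum_congr fun n => by ring
    rw [e, mul_add]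
    exact (norm_sub_le _ _).trans (add_le_add (hbd x u) (hbd y v))
  · intro h
    have key : ∀ x y : M, ∀ N : ℕ,
        ∑ n ∈ Finset.range N, ‖f n x - f n y‖ ^ p ≤ (b * dist x y) ^ p := by
      intro x y N
      let g : ℕ → 𝕂 := fun n => f n x - f n y
      let a : ℕ → 𝕂 := fun n => if n ∈ Finset.range N then
        (starRingEnd 𝕂) (g n) * ((‖g n‖ ^ (p - 2) : ℝ) : 𝕂) else 0
      have hz : ∀ n ∉ Finset.range N, ‖a n‖ ^ q = 0 := by
        intro n hn
        simp only [a, if_neg hn, norm_zero, Real.zero_rpow hq0.ne']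
      have hz' : ∀ n ∉ Finset.range N, a n * (f n x - f n y) = 0 := by
        intro n hn
        simp only [a, if_neg hn, zero_mul]
      have h1 : ∑' n, ‖a n‖ ^ q = ∑ n ∈ Finset.range N, ‖g n‖ ^ p := by
        rw [tsum_eq_sum hz]
        refine Finset.sum_congr rfl fun n hn => ?_
        simp only [a, if_pos hn]
        by_cases h0 : g n = 0
        · simp [h0, Real.zero_rpow hq0.ne', Real.zero_rpow hp0.ne']
        · have hpos : 0 < ‖g n‖ := norm_pos_iff.2 h0
          rw [norm_mul, RCLike.norm_conj, RCLike.norm_ofReal,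
            abs_of_nonneg (Real.rpow_nonneg hpos.le _), ← Real.rpow_one_add' hpos.le (by linarith),
            ← Real.rpow_mul hpos.le]
          congr 1
          have := hH.sub_one_mul_conj
          linarith
      have h2 : ∑' n, a n * (f n x - f n y) = ((∑ n ∈ Finset.range N, ‖g n‖ ^ p : ℝ) : 𝕂) := by
        rw [tsum_eq_sum hz', RCLike.ofReal_sum]
        refine Finset.sum_congr rfl fun n hn => ?_
        change a n * g n = _
        simp only [a, if_pos hn]
        by_cases h0 : g n = 0
        · simp [h0, Real.zero_rpow hp0.ne']
        · have hpos : 0 < ‖g n‖ := norm_pos_iff.2 h0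
          rw [mul_right_comm, RCLike.conj_mul, ← RCLike.ofReal_pow, ← RCLike.ofReal_mul,
            ← Real.rpow_natCast, ← Real.rpow_add hpos]
          congr 2
          push_cast
          ring
      have h3 := (h a (summable_of_ne_finset_zero hz)).2 x y y y
      change ∑ n ∈ Finset.range N, ‖g n‖ ^ p ≤ _
      rw [h1, h2] at h3
      set S := ∑ n ∈ Finset.range N, ‖g n‖ ^ p with hS
      have hS0 : 0 ≤ S := Finset.sum_nonneg fun _ _ => Real.rpow_nonneg (norm_nonneg _) _
      simp only [sub_self, mul_zero, tsum_zero, sub_zero, dist_self, add_zero, RCLike.norm_ofReal,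
        abs_of_nonneg hS0] at h3
      have hD : 0 ≤ b * dist x y := by positivity
      rcases hS0.eq_or_lt with h0 | hpos
      · rw [← h0]
        exact Real.rpow_nonneg hD _
      · have h5 : S ^ (1 / p) * S ^ (1 / q) = S := by
          rw [← Real.rpow_add hpos, hpq, Real.rpow_one]
        have h6 : S ^ (1 / p) ≤ b * dist x y := by
          refine le_of_mul_le_mul_right ?_ (Real.rpow_pos_of_pos hpos (1 / q))
          rw [h5]
          linarith
        have h7 := Real.rpow_le_rpow (Real.rpow_nonneg hS0 _) h6 hp0.le
        rwa [← Real.rpow_mul hS0, one_div_mul_cancel hp0.ne', Real.rpow_one] at h7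
    refine ⟨fun x y => summable_of_sum_range_le
      (fun _ => Real.rpow_nonneg (norm_nonneg _) _) (key x y), fun x y => ?_⟩
    have hD : 0 ≤ b * dist x y := by positivity
    have h1 := Real.tsum_le_of_sum_range_le
      (fun _ => Real.rpow_nonneg (norm_nonneg _) _) (key x y)
    have h2 := Real.rpow_le_rpow (tsum_nonneg fun _ => Real.rpow_nonneg (norm_nonneg _) _) h1
      (one_div_pos.2 hp0).le
    rwa [← Real.rpow_mul hD, mul_one_div_cancel hp0.ne', Real.rpow_one] at h2
end

section
/- Let M be a metric space, p ∈ [1,∞), and let (f_n)_{n∈ℕ} be a metric p-frame for M with bounds a, b. Let (g_n)_{n∈ℕ} be a sequence of Lipschitz functions g_n : M → 𝕂 and let α, β, γ ≥ 0 satisfy β < 1, α < 1 and γ < (1−α)·a, such that for all x, y ∈ M and every m ≥ 1, (∑_{n=1}^m |(f_n−g_n)(x) − (f_n−g_n)(y)|^p)^{1/p} ≤ α·(∑_{n=1}^m |f_n(x)−f_n(y)|^p)^{1/p} + β·(∑_{n=1}^m |g_n(x)−g_n(y)|^p)^{1/p} + γ·d(x,y). Then (g_n) is a metric p-frame for M with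 bounds ((1−α)a − γ)/(1+β) and ((1+α)b + γ)/(1−β). -/
/-- Minkowski inequality for finite sums, in the form `‖w n‖ ≤ ‖u n‖ + ‖v n‖`. -/
lemma minkowski_aux {p : ℝ} (hp : 1 ≤ p) (s : Finset ℕ) (w u v : ℕ → ℝ)
    (hw : ∀ n, 0 ≤ w n) (hu : ∀ n, 0 ≤ u n) (hv : ∀ n, 0 ≤ v n) (h : ∀ n, w n ≤ u n + v n) :
    (∑ n ∈ s, w n ^ p) ^ (1 / p) ≤
      (∑ n ∈ s, u n ^ p) ^ (1 / p) + (∑ n ∈ s, v n ^ p) ^ (1 / p) := by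
  refine le_trans ?_ (Real.Lp_add_le_of_nonneg s hp (fun i _ => hu i) (fun i _ => hv i))
  have hp0 : 0 ≤ p := by linarith
  refine Real.rpow_le_rpow (Finset.sum_nonneg fun i _ => Real.rpow_nonneg (hw i) _) ?_
    (by positivity)
  exact Finset.sum_le_sum fun i _ => Real.rpow_le_rpow (hw i) (h i) hp0

/-- Perturbation of metric p-frames: if `(f_n)` is a metric p-frame for `M` with bounds `a, b`
and `(g_n)` is a sequence of Lipschitz functions satisfying the stated perturbation inequality
with parameters `α, β, γ ≥ 0`, `β < 1`, `α < 1`, `γ < (1-α)a`, then `(g_n)` is a metric p-frame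
for `M` with bounds `((1-α)a - γ)/(1+β)` and `((1+α)b + γ)/(1-β)`. -/
theorem metric_pFrame_perturbation
    {𝕂 : Type*} [RCLike 𝕂] {M : Type*} [MetricSpace M]
    (p : ℝ) (hp : 1 ≤ p)
    (f g : ℕ → M → 𝕂) (a b : ℝ) (ha : 0 < a) (hb : 0 < b)
    (hflip : ∀ n, ∃ K, LipschitzWith K (f n))
    (hglip : ∀ n, ∃ K, LipschitzWith K (g n))
    (hfsum : ∀ x y : M, Summable fun n => ‖f n x - f n y‖ ^ p)
    (hflow : ∀ x y : M, a * dist x y ≤ (∑' n, ‖f n x - f n y‖ ^ p) ^ (1 / p))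
    (hfup : ∀ x y : M, (∑' n, ‖f n x - f n y‖ ^ p) ^ (1 / p) ≤ b * dist x y)
    (α β γ : ℝ) (hα0 : 0 ≤ α) (hβ0 : 0 ≤ β) (hγ0 : 0 ≤ γ)
    (hβ : β < 1) (hα : α < 1) (hγ : γ < (1 - α) * a)
    (hper : ∀ (x y : M) (m : ℕ), 1 ≤ m →
      (∑ n ∈ Finset.range m, ‖(f n x - g n x) - (f n y - g n y)‖ ^ p) ^ (1 / p) ≤
        α * (∑ n ∈ Finset.range m, ‖f n x - f n y‖ ^ p) ^ (1 / p) +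
        β * (∑ n ∈ Finset.range m, ‖g n x - g n y‖ ^ p) ^ (1 / p) + γ * dist x y) :
    (∀ x y : M, Summable fun n => ‖g n x - g n y‖ ^ p) ∧
    (∀ x y : M, ((1 - α) * a - γ) / (1 + β) * dist x y ≤
        (∑' n, ‖g n x - g n y‖ ^ p) ^ (1 / p)) ∧
    (∀ x y : M, (∑' n, ‖g n x - g n y‖ ^ p) ^ (1 / p) ≤
        ((1 + α) * b + γ) / (1 - β) * dist x y) := by
  have hp0 : 0 < p := by linarith
  have hq0 : 0 < 1 / p := by positivity
  have hb1 : 0 < 1 - β := by linarith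
  have hb2 : 0 < 1 + β := by linarith
  -- the perturbation estimate also holds for `m = 0`
  have hper' : ∀ (x y : M) (m : ℕ),
      (∑ n ∈ Finset.range m, ‖(f n x - g n x) - (f n y - g n y)‖ ^ p) ^ (1 / p) ≤
        α * (∑ n ∈ Finset.range m, ‖f n x - f n y‖ ^ p) ^ (1 / p) +
        β * (∑ n ∈ Finset.range m, ‖g n x - g n y‖ ^ p) ^ (1 / p) + γ * dist x y := by
    intro x y m
    rcases Nat.eq_zero_or_pos m with rfl | hm
    · have : 0 ≤ γ * dist x y := by positivity
      simpa [Real.zero_rpow (inv_pos.2 hp0).ne'] using this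
    · exact hper x y m hm
  have hG : ∀ (x y : M) (m : ℕ),
      (1 - β) * (∑ n ∈ Finset.range m, ‖g n x - g n y‖ ^ p) ^ (1 / p) ≤
        (1 + α) * (∑ n ∈ Finset.range m, ‖f n x - f n y‖ ^ p) ^ (1 / p) + γ * dist x y := by
    intro x y m
    have h1 := hper' x y m
    have h2 := minkowski_aux hp (Finset.range m) (fun n => ‖g n x - g n y‖)
      (fun n => ‖f n x - f n y‖) (fun n => ‖(f n x - g n x) - (f n y - g n y)‖)
      (fun _ => norm_nonneg _) (fun _ => norm_nonneg _) (fun _ => norm_nonneg _) (by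
        intro n
        have := norm_sub_le (f n x - f n y) ((f n x - g n x) - (f n y - g n y))
        rwa [show f n x - f n y - ((f n x - g n x) - (f n y - g n y)) = g n x - g n y by ring] at this)
    linarith
  have hF : ∀ (x y : M) (m : ℕ),
      (1 - α) * (∑ n ∈ Finset.range m, ‖f n x - f n y‖ ^ p) ^ (1 / p) ≤
        (1 + β) * (∑ n ∈ Finset.range m, ‖g n x - g n y‖ ^ p) ^ (1 / p) + γ * dist x y := by
    intro x y m
    have h1 := hper' x y m
    have h2 := minkowski_aux hp (Finset.range m) (fun n => ‖f n x - f n y‖)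
      (fun n => ‖g n x - g n y‖) (fun n => ‖(f n x - g n x) - (f n y - g n y)‖)
      (fun _ => norm_nonneg _) (fun _ => norm_nonneg _) (fun _ => norm_nonneg _) (by
        intro n
        have := norm_add_le (g n x - g n y) ((f n x - g n x) - (f n y - g n y))
        rwa [show g n x - g n y + ((f n x - g n x) - (f n y - g n y)) = f n x - f n y by ring] at this)
    linarith
  have hub : ∀ (x y : M) (m : ℕ),
      (∑ n ∈ Finset.range m, ‖g n x - g n y‖ ^ p) ^ (1 / p) ≤
        ((1 + α) * b + γ) / (1 - β) * dist x y := by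
    intro x y m
    have h1 := hG x y m
    have h2 : (∑ n ∈ Finset.range m, ‖f n x - f n y‖ ^ p) ^ (1 / p) ≤ b * dist x y := by
      refine le_trans (Real.rpow_le_rpow (Finset.sum_nonneg fun i _ => by positivity) ?_ hq0.le)
        (hfup x y)
      exact (hfsum x y).sum_le_tsum _ (fun i _ => by positivity)
    have h3 := mul_le_mul_of_nonneg_left h2 (by linarith : 0 ≤ 1 + α)
    rw [div_mul_eq_mul_div, le_div_iff₀ hb1]
    linarith
  have hsum : ∀ x y : M, Summable fun n => ‖g n x - g n y‖ ^ p := by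
    intro x y
    refine summable_of_sum_range_le (c := (((1 + α) * b + γ) / (1 - β) * dist x y) ^ p)
      (fun n => by positivity) (fun m => ?_)
    have hS : 0 ≤ ∑ n ∈ Finset.range m, ‖g n x - g n y‖ ^ p :=
      Finset.sum_nonneg fun i _ => by positivity
    have := Real.rpow_le_rpow (Real.rpow_nonneg hS _) (hub x y m) hp0.le
    rwa [← Real.rpow_mul hS, one_div_mul_cancel hp0.ne', Real.rpow_one] at this
  have hlimg : ∀ x y : M, Filter.Tendsto
      (fun m => (∑ n ∈ Finset.range m, ‖g n x - g n y‖ ^ p) ^ (1 / p)) Filter.atTop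
      (nhds ((∑' n, ‖g n x - g n y‖ ^ p) ^ (1 / p))) := fun x y =>
    (hsum x y).hasSum.tendsto_sum_nat.rpow_const (Or.inr hq0.le)
  have hlimf : ∀ x y : M, Filter.Tendsto
      (fun m => (∑ n ∈ Finset.range m, ‖f n x - f n y‖ ^ p) ^ (1 / p)) Filter.atTop
      (nhds ((∑' n, ‖f n x - f n y‖ ^ p) ^ (1 / p))) := fun x y =>
    (hfsum x y).hasSum.tendsto_sum_nat.rpow_const (Or.inr hq0.le)
  refine ⟨hsum, fun x y => ?_, fun x y => le_of_tendsto' (hlimg x y) (hub x y)⟩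
  have h1 := le_of_tendsto_of_tendsto' ((hlimf x y).const_mul (1 - α))
    (((hlimg x y).const_mul (1 + β)).add_const (γ * dist x y)) (hF x y)
  have h2 := mul_le_mul_of_nonneg_left (hflow x y) (by linarith : 0 ≤ 1 - α)
  rw [div_mul_eq_mul_div, div_le_iff₀ hb2]
  linarith
end

section
/- Let (f_n)_{n∈ℕ} be a metric p-frame for the Banach space X with bounds a, b such that f_n(0) = 0 for all n, and let (τ_n)_{n∈ℕ} be a q-Bessel sequence in X with bound c. Then the following are equivalent: (i) x = ∑_{n=1}^∞ f_n(x)·τ_n for every x ∈ X (convergence in X); (ii) for every f ∈ X*, sup_{x≠y} |f(x) − f(y) − ∑_{k=1}^n f(τ_k)·(f_k(x) − f_k(y))| / ‖x−y‖ → 0 as n → ∞. Moreover, if (i) holds, then (τ_n) is a q-frame for X*: ‖f‖ ≤ b·(∑_{n=1}^∞ |f(τ_n)|^q)^{1/q} ≤ b·c·‖f‖ for every f ∈ X*. -/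
/-- Let `(f_n)` be a metric p-frame (of Lipschitz functionals vanishing at `0`) for the Banach
space `X` with bounds `a, b`, and `(τ_n)` a q-Bessel sequence in `X` with bound `c`.  Then the
reconstruction property `x = ∑ f_n(x) τ_n` holds iff for every `F ∈ X*` the Lipschitz norms of
the tails `F - ∑_{k<n} F(τ_k)(f_k ⬝ - f_k ⬝)` tend to `0`; moreover, if reconstruction holds
then `(τ_n)` is a q-frame for `X*`:
`‖F‖ ≤ b (∑ |F τ_n|^q)^{1/q} ≤ b c ‖F‖` for all `F ∈ X*`. -/
theorem metric_pFrame_reconstruction_iff_dual_expansion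
    {𝕂 X : Type*} [RCLike 𝕂] [NormedAddCommGroup X] [NormedSpace 𝕂 X] [CompleteSpace X]
    (p q : ℝ) (hp : 1 < p) (hpq : 1 / p + 1 / q = 1)
    (f : ℕ → X → 𝕂) (a b : ℝ) (ha : 0 < a) (hb : 0 < b)
    (hlip : ∀ n, ∃ K, LipschitzWith K (f n)) (hf0 : ∀ n, f n 0 = 0)
    (hsum : ∀ x y : X, Summable fun n => ‖f n x - f n y‖ ^ p)
    (hlow : ∀ x y : X, a * ‖x - y‖ ≤ (∑' n, ‖f n x - f n y‖ ^ p) ^ (1 / p))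
    (hup : ∀ x y : X, (∑' n, ‖f n x - f n y‖ ^ p) ^ (1 / p) ≤ b * ‖x - y‖)
    (τ : ℕ → X) (c : ℝ) (hc : 0 < c)
    (hbessel : ∀ F : X →L[𝕂] 𝕂, Summable (fun n => ‖F (τ n)‖ ^ q) ∧
      ∑' n, ‖F (τ n)‖ ^ q ≤ c ^ q * ‖F‖ ^ q) :
    ((∀ x : X, Filter.Tendsto (fun N => ∑ n ∈ Finset.range N, f n x • τ n)
        Filter.atTop (nhds x)) ↔
      (∀ F : X →L[𝕂] 𝕂, ∀ ε > (0 : ℝ), ∃ N : ℕ, ∀ n ≥ N, ∀ x y : X,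
        ‖F x - F y - ∑ k ∈ Finset.range n, F (τ k) * (f k x - f k y)‖ ≤ ε * ‖x - y‖)) ∧
    ((∀ x : X, Filter.Tendsto (fun N => ∑ n ∈ Finset.range N, f n x • τ n)
        Filter.atTop (nhds x)) →
      ∀ F : X →L[𝕂] 𝕂,
        ‖F‖ ≤ b * (∑' n, ‖F (τ n)‖ ^ q) ^ (1 / q) ∧
        b * (∑' n, ‖F (τ n)‖ ^ q) ^ (1 / q) ≤ b * c * ‖F‖) := by
  have hH : p.HolderConjugate q :=
    Real.holderConjugate_iff.2 ⟨hp, by simpa [one_div] using hpq⟩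
  have hp0 : 0 < p := hH.pos
  have hq0 : 0 < q := hH.symm.pos
  -- finite Hoelder
  have holder : ∀ (S : Finset ℕ) (u v : ℕ → 𝕂), ‖∑ k ∈ S, u k * v k‖ ≤
      (∑ k ∈ S, ‖u k‖ ^ q) ^ (1 / q) * (∑ k ∈ S, ‖v k‖ ^ p) ^ (1 / p) := by
    intro S u v
    refine (norm_sum_le _ _).trans ?_
    have h := Real.inner_le_Lp_mul_Lq S (fun k => ‖u k‖) (fun k => ‖v k‖) hH.symm
    simpa only [norm_mul, abs_norm] using h
  have key : ∀ (F : X →L[𝕂] 𝕂) (S : Finset ℕ) (x y : X),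
      ‖∑ k ∈ S, F (τ k) * (f k x - f k y)‖ ≤
      (∑ k ∈ S, ‖F (τ k)‖ ^ q) ^ (1 / q) * (b * ‖x - y‖) := by
    intro F S x y
    refine (holder S (fun k => F (τ k)) (fun k => f k x - f k y)).trans ?_
    refine mul_le_mul_of_nonneg_left ?_ (by positivity)
    refine le_trans ?_ (hup x y)
    refine Real.rpow_le_rpow (by positivity) ?_ (by positivity)
    exact (hsum x y).sum_le_tsum S (fun _ _ => by positivity)
  have bessel : ∀ F : X →L[𝕂] 𝕂, (∑' n, ‖F (τ n)‖ ^ q) ^ (1 / q) ≤ c * ‖F‖ := by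
    intro F
    have h := Real.rpow_le_rpow (z := 1 / q) (tsum_nonneg (fun n => by positivity))
      (hbessel F).2 (by positivity)
    rwa [← Real.mul_rpow hc.le (norm_nonneg _), one_div,
      Real.rpow_rpow_inv (by positivity) hq0.ne', ← one_div] at h
  have syn : ∀ (S : Finset ℕ) (v : ℕ → 𝕂),
      ‖∑ k ∈ S, v k • τ k‖ ≤ c * (∑ k ∈ S, ‖v k‖ ^ p) ^ (1 / p) := by
    intro S v
    refine NormedSpace.norm_le_dual_bound 𝕂 _ (by positivity) ?_
    intro F
    have e : F (∑ k ∈ S, v k • τ k) = ∑ k ∈ S, F (τ k) * v k := by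
      simp [map_sum, mul_comm]
    rw [e]
    refine (holder S (fun k => F (τ k)) v).trans ?_
    have h1 : (∑ k ∈ S, ‖F (τ k)‖ ^ q) ^ (1 / q) ≤ c * ‖F‖ := by
      refine le_trans ?_ (bessel F)
      refine Real.rpow_le_rpow (by positivity) ?_ (by positivity)
      exact (hbessel F).1.sum_le_tsum S (fun _ _ => by positivity)
    calc _ ≤ (c * ‖F‖) * (∑ k ∈ S, ‖v k‖ ^ p) ^ (1 / p) :=
          mul_le_mul_of_nonneg_right h1 (by positivity)
      _ = _ := by ring
  -- small tails
  have small : ∀ (r : ℝ), 0 < r → ∀ w : ℕ → ℝ, (∀ k, 0 ≤ w k) → Summable w → ∀ δ > (0 : ℝ),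
      ∃ s : Finset ℕ, ∀ t, Disjoint t s → (∑ k ∈ t, w k) ^ (1 / r) < δ := by
    intro r hr w hw hs δ hδ
    obtain ⟨s, hs⟩ := summable_iff_vanishing_norm.1 hs (δ ^ r) (by positivity)
    refine ⟨s, fun t ht => ?_⟩
    have h := (le_abs_self _).trans_lt (hs t ht)
    have h2 := Real.rpow_lt_rpow (z := 1 / r) (Finset.sum_nonneg fun k _ => hw k) h (by positivity)
    rwa [one_div, Real.rpow_rpow_inv hδ.le hr.ne', ← one_div] at h2
  -- convergence under (i)
  have conv : (∀ x : X, Filter.Tendsto (fun N => ∑ n ∈ Finset.range N, f n x • τ n)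
        Filter.atTop (nhds x)) → ∀ (F : X →L[𝕂] 𝕂) (x y : X),
        Filter.Tendsto (fun m => ∑ k ∈ Finset.range m, F (τ k) * (f k x - f k y))
        Filter.atTop (nhds (F x - F y)) := by
    intro h F x y
    have h1 := ((F.continuous.tendsto x).comp (h x)).sub ((F.continuous.tendsto y).comp (h y))
    refine h1.congr fun m => ?_
    simp [map_sum, sub_mul, mul_comm _ (_ - _), Finset.sum_sub_distrib]
  refine ⟨⟨?_, ?_⟩, ?_⟩
  · intro h F ε hε
    obtain ⟨s, hs⟩ := small q hq0 _ (fun k => by positivity) (hbessel F).1 (ε / b) (by positivity)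
    obtain ⟨N, hN⟩ := s.exists_nat_subset_range
    refine ⟨N, fun n hn x y => ?_⟩
    have ht := ((conv h F x y).sub_const
      (∑ k ∈ Finset.range n, F (τ k) * (f k x - f k y))).norm
    refine le_of_tendsto ht ?_
    filter_upwards [Filter.eventually_ge_atTop n] with m hm
    rw [← Finset.sum_Ico_eq_sub _ hm]
    have hd : Disjoint (Finset.Ico n m) s := by
      rw [Finset.disjoint_left]
      intro k hk hks
      have h1 := Finset.mem_range.1 (hN hks)
      have h2 := (Finset.mem_Ico.1 hk).1
      omega
    refine (key F _ x y).trans ?_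
    calc _ ≤ (ε / b) * (b * ‖x - y‖) :=
          mul_le_mul_of_nonneg_right (hs _ hd).le (by positivity)
      _ = _ := by field_simp
  · intro h x
    have hsx : Summable fun n => ‖f n x‖ ^ p := by simpa [hf0] using hsum x 0
    have hS : Summable fun n => f n x • τ n := by
      rw [summable_iff_vanishing_norm]
      intro ε hε
      obtain ⟨s, hs⟩ := small p hp0 _ (fun k => by positivity) hsx (ε / c) (by positivity)
      refine ⟨s, fun t ht => (syn t _).trans_lt ?_⟩
      have := mul_lt_mul_of_pos_left (hs t ht) hc
      rwa [mul_div_cancel₀ _ hc.ne'] at this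
    obtain ⟨z, hz⟩ := hS
    have hz := hz.tendsto_sum_nat
    suffices x = z by rwa [← this] at hz
    refine SeparatingDual.eq_iff_forall_dual_eq (R := 𝕂) |>.2 fun F => ?_
    have h1 : Filter.Tendsto (fun m => ∑ k ∈ Finset.range m, F (τ k) * f k x)
        Filter.atTop (nhds (F z)) := by
      refine ((F.continuous.tendsto z).comp hz).congr fun m => ?_
      simp [map_sum, mul_comm]
    refine tendsto_nhds_unique ?_ h1
    rw [Metric.tendsto_atTop]
    intro ε hε
    obtain ⟨N, hN⟩ := h F (ε / (‖x‖ + 1)) (by positivity)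
    refine ⟨N, fun n hn => ?_⟩
    have h2 := hN n hn x 0
    simp only [hf0, map_zero, sub_zero] at h2
    rw [dist_comm, dist_eq_norm]
    refine h2.trans_lt ?_
    rw [div_mul_eq_mul_div, div_lt_iff₀ (by positivity)]
    nlinarith
  · intro h F
    refine ⟨?_, ?_⟩
    · refine F.opNorm_le_bound (by positivity) fun x => ?_
      have ht := (conv h F x 0).norm
      simp only [map_zero, sub_zero] at ht
      refine le_of_tendsto ht (Filter.Eventually.of_forall fun m => ?_)
      have h2 := key F (Finset.range m) x 0
      simp only [sub_zero] at h2
      refine h2.trans ?_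
      have h3 : (∑ k ∈ Finset.range m, ‖F (τ k)‖ ^ q) ^ (1 / q) ≤
          (∑' n, ‖F (τ n)‖ ^ q) ^ (1 / q) := by
        refine Real.rpow_le_rpow (by positivity) ?_ (by positivity)
        exact (hbessel F).1.sum_le_tsum _ (fun _ _ => by positivity)
      calc _ ≤ (∑' n, ‖F (τ n)‖ ^ q) ^ (1 / q) * (b * ‖x‖) :=
            mul_le_mul_of_nonneg_right h3 (by positivity)
        _ = _ := by ring
    · rw [mul_assoc]
      exact mul_le_mul_of_nonneg_left (bessel F) hb.le
end

section
/- Let (f_n)_{n∈ℕ} be a Lipschitz p-Bessel sequence for the pointed metric space (M, 0) with bound b, let (τ_n)_{n∈ℕ} be a q-Bessel sequence in the Banach space X with bound c, and let (λ_n)_{n∈ℕ} be a bounded scalar sequence. Then for every x ∈ M the series ∑_{n=1}^∞ λ_n f_n(x) τ_n converges in X, and the multiplier T : M → X defined by T x := ∑_{n=1}^∞ λ_n f_n(x) τ_n satisfies T(0) = 0 and is Lipschitz with Lipschitz constant at most b·c·sup_n |λ_n|. -/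
theorem key_finite_bound
    {𝕂 X : Type*} [RCLike 𝕂] [NormedAddCommGroup X] [NormedSpace 𝕂 X]
    (p q : ℝ) (h : p.HolderConjugate q)
    (τ : ℕ → X) (c : ℝ) (hc : 0 < c)
    (hτ : ∀ F : X →L[𝕂] 𝕂, Summable (fun n => ‖F (τ n)‖ ^ q) ∧
      ∑' n, ‖F (τ n)‖ ^ q ≤ c ^ q * ‖F‖ ^ q)
    (lam : ℕ → 𝕂) (L : ℝ) (hL : ∀ n, ‖lam n‖ ≤ L) (a : ℕ → 𝕂) (s : Finset ℕ) :
    ‖∑ n ∈ s, (lam n * a n) • τ n‖ ≤ L * c * (∑ n ∈ s, ‖a n‖ ^ p) ^ (1 / p) := by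
  have hL0 : 0 ≤ L := (norm_nonneg _).trans (hL 0)
  obtain ⟨F, hF, hFx⟩ := exists_dual_vector'' 𝕂 (∑ n ∈ s, (lam n * a n) • τ n)
  have hq := h.symm.pos
  have h1 : (∑ n ∈ s, ‖F (τ n)‖ ^ q) ^ (1 / q) ≤ c := by
    have h2 : ∑ n ∈ s, ‖F (τ n)‖ ^ q ≤ c ^ q := by
      refine ((hτ F).1.sum_le_tsum s (fun _ _ => by positivity)).trans ((hτ F).2.trans ?_)
      have : ‖F‖ ^ q ≤ 1 := Real.rpow_le_one (norm_nonneg _) hF hq.le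
      have : 0 ≤ c ^ q := by positivity
      nlinarith
    calc _ ≤ (c ^ q) ^ (1 / q) :=
          Real.rpow_le_rpow (Finset.sum_nonneg fun _ _ => by positivity) h2 (by positivity)
      _ = c := by rw [one_div, Real.rpow_rpow_inv hc.le hq.ne']
  have h3 : ‖∑ n ∈ s, (lam n * a n) • τ n‖ = ‖F (∑ n ∈ s, (lam n * a n) • τ n)‖ := by
    rw [hFx]; simp
  have hp0 : 0 ≤ (∑ n ∈ s, ‖a n‖ ^ p) ^ (1 / p) :=
    Real.rpow_nonneg (Finset.sum_nonneg fun _ _ => by positivity) _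
  rw [h3, map_sum]
  calc ‖∑ n ∈ s, F ((lam n * a n) • τ n)‖ ≤ ∑ n ∈ s, ‖F ((lam n * a n) • τ n)‖ := norm_sum_le _ _
    _ ≤ ∑ n ∈ s, L * (‖a n‖ * ‖F (τ n)‖) := by
        refine Finset.sum_le_sum fun n _ => ?_
        rw [map_smul, norm_smul, norm_mul, mul_assoc]
        exact mul_le_mul_of_nonneg_right (hL n) (by positivity)
    _ = L * ∑ n ∈ s, ‖a n‖ * ‖F (τ n)‖ := by rw [Finset.mul_sum]
    _ ≤ L * ((∑ n ∈ s, ‖a n‖ ^ p) ^ (1 / p) * (∑ n ∈ s, ‖F (τ n)‖ ^ q) ^ (1 / q)) := by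
        gcongr
        exact Real.inner_le_Lp_mul_Lq_of_nonneg s h (fun _ _ => norm_nonneg _)
          (fun _ _ => norm_nonneg _)
    _ ≤ L * ((∑ n ∈ s, ‖a n‖ ^ p) ^ (1 / p) * c) := by gcongr
    _ = _ := by ring

/-- **Multipliers are well defined**: if `(f_n)` is a Lipschitz p-Bessel sequence for the pointed
metric space `(M, base)` with bound `b`, `(τ_n)` is a q-Bessel sequence in the Banach space `X`
with bound `c`, and `(λ_n)` is a bounded scalar sequence, then for each `x` the series
`∑ λ_n f_n(x) τ_n` converges in `X`, and the resulting multiplier `T` satisfies `T base = 0`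
and is Lipschitz with constant at most `b * c * sup_n ‖λ_n‖`. -/
theorem multiplier_well_defined
    {𝕂 X M : Type*} [RCLike 𝕂] [NormedAddCommGroup X] [NormedSpace 𝕂 X] [CompleteSpace X]
    [MetricSpace M] (base : M)
    (p q : ℝ) (hp : 1 < p) (hpq : 1 / p + 1 / q = 1)
    (f : ℕ → M → 𝕂) (b : ℝ) (hb : 0 < b)
    (hlip : ∀ n, ∃ K, LipschitzWith K (f n)) (hf0 : ∀ n, f n base = 0)
    (hfb : ∀ x y : M, Summable (fun n => ‖f n x - f n y‖ ^ p) ∧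
      ∑' n, ‖f n x - f n y‖ ^ p ≤ b ^ p * dist x y ^ p)
    (τ : ℕ → X) (c : ℝ) (hc : 0 < c)
    (hτ : ∀ F : X →L[𝕂] 𝕂, Summable (fun n => ‖F (τ n)‖ ^ q) ∧
      ∑' n, ‖F (τ n)‖ ^ q ≤ c ^ q * ‖F‖ ^ q)
    (lam : ℕ → 𝕂) (hlam : BddAbove (Set.range fun n => ‖lam n‖)) :
    ∃ T : M → X,
      (∀ x : M, Filter.Tendsto (fun N => ∑ n ∈ Finset.range N, (lam n * f n x) • τ n)
        Filter.atTop (nhds (T x))) ∧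
      T base = 0 ∧
      ∀ x y : M, ‖T x - T y‖ ≤ b * c * (⨆ n, ‖lam n‖) * dist x y := by
  have h : p.HolderConjugate q := by
    rw [Real.holderConjugate_iff]
    exact ⟨hp, by simpa using hpq⟩
  have hp0 : 0 < p := h.pos
  set L := ⨆ n, ‖lam n‖ with hLdef
  have hL : ∀ n, ‖lam n‖ ≤ L := fun n => le_ciSup hlam n
  have hL0 : 0 ≤ L := (norm_nonneg _).trans (hL 0)
  have key := key_finite_bound p q h τ c hc hτ lam L hL
  have hsum : ∀ x, Summable fun n => (lam n * f n x) • τ n := by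
    intro x
    rw [summable_iff_vanishing_norm]
    intro ε hε
    have hK : 0 < L * c + 1 := by positivity
    have hs : Summable fun n => ‖f n x‖ ^ p := by simpa [hf0] using (hfb x base).1
    obtain ⟨s, hs⟩ := summable_iff_vanishing_norm.1 hs ((ε / (L * c + 1)) ^ p) (by positivity)
    refine ⟨s, fun t ht => ?_⟩
    have h0 : 0 ≤ ∑ n ∈ t, ‖f n x‖ ^ p := Finset.sum_nonneg fun _ _ => by positivity
    have h1 := hs t ht
    rw [Real.norm_of_nonneg h0] at h1
    have h2 : (∑ n ∈ t, ‖f n x‖ ^ p) ^ (1 / p) < ε / (L * c + 1) := by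
      calc _ < ((ε / (L * c + 1)) ^ p) ^ (1 / p) := Real.rpow_lt_rpow h0 h1 (by positivity)
        _ = _ := by rw [one_div, Real.rpow_rpow_inv (by positivity) hp0.ne']
    rw [lt_div_iff₀ hK] at h2
    have h3 := key (fun n => f n x) t
    have h4 : 0 ≤ (∑ n ∈ t, ‖f n x‖ ^ p) ^ (1 / p) := Real.rpow_nonneg h0 _
    nlinarith
  refine ⟨fun x => ∑' n, (lam n * f n x) • τ n, fun x => (hsum x).hasSum.tendsto_sum_nat,
    by simp [hf0], fun x y => ?_⟩
  refine le_of_tendsto (((hsum x).hasSum.tendsto_sum_nat.sub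
    (hsum y).hasSum.tendsto_sum_nat).norm) (Filter.Eventually.of_forall fun N => ?_)
  have h1 := key (fun n => f n x - f n y) (Finset.range N)
  have h2 : (∑ n ∈ Finset.range N, ‖f n x - f n y‖ ^ p) ^ (1 / p) ≤ b * dist x y := by
    calc _ ≤ ((b * dist x y) ^ p) ^ (1 / p) := by
          refine Real.rpow_le_rpow (Finset.sum_nonneg fun _ _ => by positivity) ?_ (by positivity)
          rw [Real.mul_rpow hb.le dist_nonneg]
          exact ((hfb x y).1.sum_le_tsum _ (fun _ _ => by positivity)).trans (hfb x y).2
      _ = _ := by rw [one_div, Real.rpow_rpow_inv (by positivity) hp0.ne']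
  rw [← Finset.sum_sub_distrib]
  simp only [mul_sub, sub_smul] at h1
  refine h1.trans ((mul_le_mul_of_nonneg_left h2 (by positivity)).trans (le_of_eq (by ring)))
end

section
/- Let (f_n)_{n∈ℕ} be a Lipschitz p-Bessel sequence for the pointed metric space (M, 0) with bound b and let (τ_n)_{n∈ℕ} be a q-Bessel sequence in the Banach space X with bound c. If (λ_n)_{n∈ℕ} is a scalar sequence with λ_n → 0, then the multiplier M_{λ,f,τ} : M → X, M_{λ,f,τ} x := ∑_{n=1}^∞ λ_n f_n(x) τ_n, is a Lipschitz compact operator: the set {(1/d(x,y))·(M_{λ,f,τ} x − M_{λ,f,τ} y) : x, y ∈ M, x ≠ y} has compact closure in X. -/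
theorem aux_finset_bound
    {𝕂 X : Type*} [RCLike 𝕂] [NormedAddCommGroup X] [NormedSpace 𝕂 X]
    (p q : ℝ) (h : p.HolderConjugate q) (a : ℕ → 𝕂) (B : ℝ) (hB : 0 ≤ B)
    (ha : Summable (fun n => ‖a n‖ ^ p) ∧ ∑' n, ‖a n‖ ^ p ≤ B ^ p)
    (τ : ℕ → X) (c : ℝ) (hc : 0 < c)
    (hτ : ∀ F : X →L[𝕂] 𝕂, Summable (fun n => ‖F (τ n)‖ ^ q) ∧
      ∑' n, ‖F (τ n)‖ ^ q ≤ c ^ q * ‖F‖ ^ q)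
    (lam : ℕ → 𝕂) (δ : ℝ) (hδ : 0 ≤ δ) (s : Finset ℕ) (hs : ∀ n ∈ s, ‖lam n‖ ≤ δ) :
    ‖∑ n ∈ s, (lam n * a n) • τ n‖ ≤ δ * (B * c) := by
  refine NormedSpace.norm_le_dual_bound 𝕂 _ (by positivity) fun F => ?_
  have h1 : (∑ n ∈ s, ‖a n‖ ^ p) ^ (1 / p) ≤ B := by
    have h2 : ∑ n ∈ s, ‖a n‖ ^ p ≤ B ^ p :=
      (ha.1.sum_le_tsum s (fun n _ => by positivity)).trans ha.2
    calc _ ≤ (B ^ p) ^ (1 / p) :=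
          Real.rpow_le_rpow (Finset.sum_nonneg fun n _ => by positivity) h2
            (one_div_nonneg.2 h.nonneg)
      _ = B := by rw [one_div, Real.rpow_rpow_inv hB h.ne_zero]
  have h3 : (∑ n ∈ s, ‖F (τ n)‖ ^ q) ^ (1 / q) ≤ c * ‖F‖ := by
    have h2 : ∑ n ∈ s, ‖F (τ n)‖ ^ q ≤ (c * ‖F‖) ^ q := by
      rw [Real.mul_rpow hc.le (norm_nonneg _)]
      exact ((hτ F).1.sum_le_tsum s (fun n _ => by positivity)).trans (hτ F).2
    calc _ ≤ ((c * ‖F‖) ^ q) ^ (1 / q) :=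
          Real.rpow_le_rpow (Finset.sum_nonneg fun n _ => by positivity) h2
            (one_div_nonneg.2 h.symm.nonneg)
      _ = c * ‖F‖ := by rw [one_div, Real.rpow_rpow_inv (by positivity) h.symm.ne_zero]
  have h4 : ∑ n ∈ s, ‖a n‖ * ‖F (τ n)‖ ≤ B * (c * ‖F‖) := by
    have := Real.inner_le_Lp_mul_Lq s (fun n => ‖a n‖) (fun n => ‖F (τ n)‖) h
    simp only [abs_norm] at this
    exact this.trans (mul_le_mul h1 h3
      (Real.rpow_nonneg (Finset.sum_nonneg fun n _ => by positivity) _) hB)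
  calc ‖F (∑ n ∈ s, (lam n * a n) • τ n)‖
      = ‖∑ n ∈ s, (lam n * a n) * F (τ n)‖ := by simp [map_sum]
    _ ≤ ∑ n ∈ s, δ * (‖a n‖ * ‖F (τ n)‖) := by
        refine norm_sum_le_of_le _ fun n hn => ?_
        rw [norm_mul, norm_mul, mul_assoc]
        exact mul_le_mul_of_nonneg_right (hs n hn) (by positivity)
    _ = δ * ∑ n ∈ s, ‖a n‖ * ‖F (τ n)‖ := by rw [Finset.mul_sum]
    _ ≤ δ * (B * (c * ‖F‖)) := mul_le_mul_of_nonneg_left h4 hδ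
    _ = _ := by ring

/-- **Multipliers with `c₀` symbol are Lipschitz compact**: if `(f_n)` is a Lipschitz p-Bessel
sequence for the pointed metric space `(M, base)` with bound `b`, `(τ_n)` a q-Bessel sequence in
the Banach space `X` with bound `c`, `λ_n → 0`, and `T` is the multiplier
`T x = ∑ λ_n f_n(x) τ_n`, then the Lipschitz image
`{(1/d(x,y)) • (T x - T y) : x ≠ y}` has compact closure in `X`. -/
theorem multiplier_c0_symbol_lipschitz_compact
    {𝕂 X M : Type*} [RCLike 𝕂] [NormedAddCommGroup X] [NormedSpace 𝕂 X] [CompleteSpace X]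
    [MetricSpace M] (base : M)
    (p q : ℝ) (hp : 1 < p) (hpq : 1 / p + 1 / q = 1)
    (f : ℕ → M → 𝕂) (b : ℝ) (hb : 0 < b)
    (hlip : ∀ n, ∃ K, LipschitzWith K (f n)) (hf0 : ∀ n, f n base = 0)
    (hfb : ∀ x y : M, Summable (fun n => ‖f n x - f n y‖ ^ p) ∧
      ∑' n, ‖f n x - f n y‖ ^ p ≤ b ^ p * dist x y ^ p)
    (τ : ℕ → X) (c : ℝ) (hc : 0 < c)
    (hτ : ∀ F : X →L[𝕂] 𝕂, Summable (fun n => ‖F (τ n)‖ ^ q) ∧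
      ∑' n, ‖F (τ n)‖ ^ q ≤ c ^ q * ‖F‖ ^ q)
    (lam : ℕ → 𝕂) (hlam : Filter.Tendsto lam Filter.atTop (nhds 0))
    (T : M → X)
    (hT : ∀ x : M, Filter.Tendsto (fun N => ∑ n ∈ Finset.range N, (lam n * f n x) • τ n)
      Filter.atTop (nhds (T x))) :
    IsCompact (closure
      {z : X | ∃ x y : M, x ≠ y ∧ z = (((dist x y)⁻¹ : ℝ) : 𝕂) • (T x - T y)}) := by
  have h : p.HolderConjugate q := by
    rw [Real.holderConjugate_iff]
    exact ⟨hp, by simpa [one_div] using hpq⟩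
  refine isCompact_iff_totallyBounded_isComplete.2 ⟨TotallyBounded.closure ?_, isClosed_closure.isComplete⟩
  rw [Metric.totallyBounded_iff]
  intro ε hε
  set δ : ℝ := ε / (4 * (b * c)) with hδdef
  have hδ : 0 < δ := by positivity
  have hδe : δ * (b * c) = ε / 4 := by rw [hδdef]; field_simp
  obtain ⟨N, hN⟩ : ∃ N, ∀ n ≥ N, ‖lam n‖ ≤ δ := by
    obtain ⟨N, hN⟩ := (Metric.tendsto_atTop.1 hlam) δ hδ
    exact ⟨N, fun n hn => by simpa using (hN n hn).le⟩
  let g : (ℕ → 𝕂) → X := fun a => ∑ n ∈ Finset.range N, (lam n * a n) • τ n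
  have hg : Continuous g := by fun_prop
  have hK : IsCompact (g '' (Set.pi Set.univ fun _ => Metric.closedBall (0 : 𝕂) b)) :=
    (isCompact_univ_pi fun _ => isCompact_closedBall _ _).image hg
  obtain ⟨t, ht, htc⟩ := Metric.totallyBounded_iff.1 hK.totallyBounded (ε / 2) (by positivity)
  refine ⟨t, ht, ?_⟩
  rintro z ⟨x, y, hxy, rfl⟩
  have hd : 0 < dist x y := dist_pos.2 hxy
  set r : 𝕂 := (((dist x y)⁻¹ : ℝ) : 𝕂) with hr
  have hrn : ‖r‖ = (dist x y)⁻¹ := by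
    rw [hr, RCLike.norm_ofReal, abs_of_pos (inv_pos.2 hd)]
  have ha : Summable (fun n => ‖f n x - f n y‖ ^ p) ∧
      ∑' n, ‖f n x - f n y‖ ^ p ≤ (b * dist x y) ^ p := by
    rw [Real.mul_rpow hb.le hd.le]; exact hfb x y
  have hmem : g (fun n => r * (f n x - f n y)) ∈
      g '' (Set.pi Set.univ fun _ => Metric.closedBall (0 : 𝕂) b) := by
    refine ⟨_, fun n _ => ?_, rfl⟩
    have h1 : ‖f n x - f n y‖ ^ p ≤ (b * dist x y) ^ p :=
      (ha.1.le_tsum n fun m _ => by positivity).trans ha.2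
    have h2 : ‖f n x - f n y‖ ≤ b * dist x y :=
      (Real.rpow_le_rpow_iff (norm_nonneg _) (by positivity) h.pos).1 h1
    rw [mem_closedBall_zero_iff, norm_mul, hrn, inv_mul_le_iff₀ hd]
    linarith
  have hgr : g (fun n => r * (f n x - f n y)) =
      r • ∑ n ∈ Finset.range N, (lam n * (f n x - f n y)) • τ n := by
    simp only [g, Finset.smul_sum, smul_smul]
    exact Finset.sum_congr rfl fun n _ => by congr 1; ring
  have hlim : Filter.Tendsto (fun m => ∑ n ∈ Finset.range m, (lam n * (f n x - f n y)) • τ n)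
      Filter.atTop (nhds (T x - T y)) := by
    refine ((hT x).sub (hT y)).congr fun m => ?_
    rw [← Finset.sum_sub_distrib]
    exact Finset.sum_congr rfl fun n _ => by rw [← sub_smul, mul_sub]
  have htail : ‖(T x - T y) - ∑ n ∈ Finset.range N, (lam n * (f n x - f n y)) • τ n‖ ≤
      δ * (b * dist x y * c) := by
    refine le_of_tendsto (hlim.sub_const _).norm ?_
    filter_upwards [Filter.eventually_ge_atTop N] with m hm
    rw [← Finset.sum_Ico_eq_sub _ hm]
    exact aux_finset_bound p q h (fun n => f n x - f n y) _ (by positivity) ha τ c hc hτ lam δ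
      hδ.le _ fun n hn => hN n (Finset.mem_Ico.1 hn).1
  have hdist : dist (r • (T x - T y)) (g (fun n => r * (f n x - f n y))) ≤ ε / 4 := by
    rw [hgr, dist_eq_norm, ← smul_sub, norm_smul, hrn, inv_mul_le_iff₀ hd]
    calc _ ≤ _ := htail
      _ = dist x y * (δ * (b * c)) := by ring
      _ = _ := by rw [hδe]
  obtain ⟨w, hw, hwb⟩ := Set.mem_iUnion₂.1 (htc hmem)
  refine Set.mem_iUnion₂.2 ⟨w, hw, ?_⟩
  rw [Metric.mem_ball] at hwb ⊢
  have := dist_triangle (r • (T x - T y)) (g (fun n => r * (f n x - f n y))) w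
  linarith
end

section
/- Let X be a Banach space over 𝕂 and p ∈ [1,∞). A pair ((f_n)_{n∈ℕ} in X*, (τ_n)_{n∈ℕ} in X) is a p-ASF for X if and only if there exist bounded linear operators U : X → ℓ^p(ℕ) and V : ℓ^p(ℕ) → X such that V∘U : X → X is a bounded invertible operator, f_n = ζ_n ∘ U (i.e. f_n(x) is the n-th coordinate of U x) for all n, and τ_n = V e_n for all n, where e_n is the n-th standard unit vector of ℓ^p(ℕ) and ζ_n the n-th coordinate functional on ℓ^p(ℕ). -/
open Filter
open scoped ENNReal

variable {𝕂 : Type*} [RCLike 𝕂] {X : Type*} [NormedAddCommGroup X] [NormedSpace 𝕂 X]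
  [CompleteSpace X]

/-- A pair `((f_n), (τ_n))` with `f_n ∈ X*` and `τ_n ∈ X` is a p-approximate Schauder frame
(p-ASF) for `X`: the analysis operator `θ_f : X → ℓ^p`, `θ_f x = (f_n x)_n`, and the synthesis
operator `θ_τ : ℓ^p → X`, `θ_τ a = ∑ a_n τ_n`, are well-defined bounded linear operators and the
frame operator `S = θ_τ θ_f` is bounded invertible. -/
def IsPASF (p : ℝ≥0∞) [Fact (1 ≤ p)] (f : ℕ → X →L[𝕂] 𝕂) (τ : ℕ → X) : Prop :=
  ∃ (θf : X →L[𝕂] lp (fun _ : ℕ => 𝕂) p) (θτ : lp (fun _ : ℕ => 𝕂) p →L[𝕂] X),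
    (∀ (x : X) (n : ℕ), θf x n = f n x) ∧
    (∀ a : lp (fun _ : ℕ => 𝕂) p,
      Tendsto (fun N => ∑ n ∈ Finset.range N, a n • τ n) atTop (nhds (θτ a))) ∧
    ∃ S : X ≃L[𝕂] X, (S : X →L[𝕂] X) = θτ.comp θf

/-- Characterization of p-ASFs: `((f_n), (τ_n))` is a p-ASF for `X` iff there are bounded linear
operators `U : X → ℓ^p(ℕ)` and `V : ℓ^p(ℕ) → X` such that `V ∘ U` is bounded invertible,
`f_n = ζ_n ∘ U` and `τ_n = V e_n` for all `n`. -/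
theorem isPASF_iff_factorization (p : ℝ≥0∞) [Fact (1 ≤ p)] (hp : p ≠ ⊤)
    (f : ℕ → X →L[𝕂] 𝕂) (τ : ℕ → X) :
    IsPASF p f τ ↔
      ∃ (U : X →L[𝕂] lp (fun _ : ℕ => 𝕂) p) (V : lp (fun _ : ℕ => 𝕂) p →L[𝕂] X),
        (∃ W : X ≃L[𝕂] X, (W : X →L[𝕂] X) = V.comp U) ∧
        (∀ (n : ℕ) (x : X), f n x = U x n) ∧
        (∀ n : ℕ, τ n = V (lp.single p n 1)) := by
  constructor
  · rintro ⟨U, V, hU, hV, hS⟩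
    refine ⟨U, V, hS, fun n x => (hU x n).symm, fun n => ?_⟩
    refine tendsto_nhds_unique (tendsto_const_nhds.congr' ?_) (hV (lp.single p n 1))
    filter_upwards [eventually_gt_atTop n] with N hN
    rw [Finset.sum_eq_single n]
    · rw [lp.single_apply_self, one_smul]
    · intro b _ hb
      rw [lp.single_apply_ne p n _ hb, zero_smul]
    · intro h
      exact absurd (Finset.mem_range.2 hN) h
  · rintro ⟨U, V, hS, hU, hV⟩
    refine ⟨U, V, fun x n => (hU n x).symm, fun a => ?_, hS⟩
    have h := ((lp.hasSum_single hp a).mapL V).tendsto_sum_nat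
    refine h.congr fun N => Finset.sum_congr rfl fun n _ => ?_
    rw [hV n, ← map_smul, ← lp.single_smul, smul_eq_mul, mul_one]
end

section
/- Let ((f_n),(τ_n)) be a p-ASF for the Banach space X with analysis operator θ_f, synthesis operator θ_τ and frame operator S_{f,τ} = θ_τ θ_f. Then: (i) a bounded linear operator R : X → ℓ^p(ℕ) is a right inverse of θ_τ (i.e. θ_τ ∘ R = I_X) if and only if R = θ_f S_{f,τ}^{-1} + (I_{ℓ^p(ℕ)} − θ_f S_{f,τ}^{-1} θ_τ) ∘ U for some bounded linear operator U : X → ℓ^p(ℕ); (ii) a bounded linear operator L : ℓ^p(ℕ) → X is a left inverse of θ_f (i.e. L ∘ θ_f = I_X) if and only if L = S_{f,τ}^{-1} θ_τ + V ∘ (I_{ℓ^p(ℕ)} − θ_f S_{f,τ}^{-1} θ_τ) for some bounded linear operator V : ℓ^p(ℕ) → X. -/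
open Filter
open scoped ENNReal

variable {𝕂 : Type*} [RCLike 𝕂] {X : Type*} [NormedAddCommGroup X] [NormedSpace 𝕂 X]
  [CompleteSpace X]

/-- Abstract version, with an arbitrary normed space `Y` in place of the sequence space. -/
theorem right_left_inverses_aux {K E Y : Type*} [RCLike K] [NormedAddCommGroup E]
    [NormedSpace K E] [NormedAddCommGroup Y] [NormedSpace K Y]
    (A : E →L[K] Y) (B : Y →L[K] E) (S : E ≃L[K] E) (hS : (S : E →L[K] E) = B.comp A) :
    (∀ R : E →L[K] Y, B.comp R = ContinuousLinearMap.id K E ↔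
        ∃ U : E →L[K] Y, R = A.comp (S.symm : E →L[K] E) +
            (ContinuousLinearMap.id K Y - A.comp ((S.symm : E →L[K] E).comp B)).comp U) ∧
    (∀ L : Y →L[K] E, L.comp A = ContinuousLinearMap.id K E ↔
        ∃ V : Y →L[K] E, L = (S.symm : E →L[K] E).comp B +
            V.comp (ContinuousLinearMap.id K Y - A.comp ((S.symm : E →L[K] E).comp B))) := by
  have h : ∀ x, B (A x) = S x := fun x => (DFunLike.congr_fun hS x).symm
  refine ⟨fun R => ⟨fun hR => ⟨R, ?_⟩, ?_⟩, fun L => ⟨fun hL => ⟨L, ?_⟩, ?_⟩⟩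
  · have hR' : ∀ x, B (R x) = x := fun x => DFunLike.congr_fun hR x
    refine ContinuousLinearMap.ext fun x => ?_
    simp [hR']
  · rintro ⟨U, rfl⟩
    refine ContinuousLinearMap.ext fun x => ?_
    simp [h]
  · have hL' : ∀ x, L (A x) = x := fun x => DFunLike.congr_fun hL x
    refine ContinuousLinearMap.ext fun x => ?_
    simp [hL']
  · rintro ⟨V, rfl⟩
    refine ContinuousLinearMap.ext fun x => ?_
    simp [h]

/-- Characterization of all bounded right inverses of the synthesis operator `θ_τ` and of all
bounded left inverses of the analysis operator `θ_f` of a p-ASF `((f_n), (τ_n))` with frame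
operator `S = θ_τ θ_f`. -/
theorem pASF_right_left_inverses (p : ℝ≥0∞) [Fact (1 ≤ p)] (hp : p ≠ ⊤)
    (f : ℕ → X →L[𝕂] 𝕂) (τ : ℕ → X)
    (θf : X →L[𝕂] lp (fun _ : ℕ => 𝕂) p) (θτ : lp (fun _ : ℕ => 𝕂) p →L[𝕂] X)
    (S : X ≃L[𝕂] X)
    (hθf : ∀ (x : X) (n : ℕ), θf x n = f n x)
    (hθτ : ∀ a : lp (fun _ : ℕ => 𝕂) p,
      Tendsto (fun N => ∑ n ∈ Finset.range N, a n • τ n) atTop (nhds (θτ a)))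
    (hS : (S : X →L[𝕂] X) = θτ.comp θf) :
    (∀ R : X →L[𝕂] lp (fun _ : ℕ => 𝕂) p,
      θτ.comp R = ContinuousLinearMap.id 𝕂 X ↔
        ∃ U : X →L[𝕂] lp (fun _ : ℕ => 𝕂) p,
          R = θf.comp (S.symm : X →L[𝕂] X) +
            (ContinuousLinearMap.id 𝕂 (lp (fun _ : ℕ => 𝕂) p) -
              θf.comp ((S.symm : X →L[𝕂] X).comp θτ)).comp U) ∧
    (∀ L : lp (fun _ : ℕ => 𝕂) p →L[𝕂] X,
      L.comp θf = ContinuousLinearMap.id 𝕂 X ↔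
        ∃ V : lp (fun _ : ℕ => 𝕂) p →L[𝕂] X,
          L = (S.symm : X →L[𝕂] X).comp θτ +
            V.comp (ContinuousLinearMap.id 𝕂 (lp (fun _ : ℕ => 𝕂) p) -
              θf.comp ((S.symm : X →L[𝕂] X).comp θτ))) := by
  exact right_left_inverses_aux θf θτ S hS
end

section
/- Let ((f_n),(τ_n)) and ((g_n),(ω_n)) be two p-ASFs for the Banach space X, and set P_{f,τ} := θ_f S_{f,τ}^{-1} θ_τ and P_{g,ω} := θ_g S_{g,ω}^{-1} θ_ω (bounded operators on ℓ^p(ℕ)). Then the following are equivalent: (i) there exist bounded invertible operators T₁, T₂ : X → X with g_n = f_n ∘ T₁ and ω_n = T₂ τ_n for all n; (ii) there exist bounded invertible operators T₁, T₂ : X → X with θ_g = θ_f ∘ T₁ and θ_ω = T₂ ∘ θ_τ; (iii) P_{g,ω} = P_{f,τ}. If these hold, the invertible operators in (i) and (ii) are unique and given by T₁ = S_{f,τ}^{-1} θ_τ θ_g and T₂ = θ_ω θ_f S_{f,τ}^{-1}. Moreover, if S_{f,τ} = I_X, then S_{g,ω} = I_X if and only if T₂ T₁ = I_X, if and only if T₁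 T₂ = I_X. -/
open Filter
open scoped ENNReal

variable {𝕂 : Type*} [RCLike 𝕂] {X : Type*} [NormedAddCommGroup X] [NormedSpace 𝕂 X]
  [CompleteSpace X]

/-- **Similarity of p-ASFs.** For two p-ASFs `((f_n),(τ_n))` and `((g_n),(ω_n))` for `X`, with
analysis/synthesis operators `θf, θτ, θg, θω` and frame operators `Sf, Sg`, the following are
equivalent: (i) there are bounded invertible `T₁, T₂` with `g_n = f_n ∘ T₁`, `ω_n = T₂ τ_n`;
(ii) there are bounded invertible `T₁, T₂` with `θg = θf ∘ T₁`, `θω = T₂ ∘ θτ`;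
(iii) `P_{g,ω} = P_{f,τ}` where `P_{f,τ} = θf ∘ Sf⁻¹ ∘ θτ`.  If these hold the operators are
unique, given by `T₁ = Sf⁻¹ θτ θg` and `T₂ = θω θf Sf⁻¹`; and if `Sf = I` then `Sg = I` iff
`T₂ T₁ = I` iff `T₁ T₂ = I`. -/
theorem pASF_similarity (p : ℝ≥0∞) [Fact (1 ≤ p)] (hp : p ≠ ⊤)
    (f g : ℕ → X →L[𝕂] 𝕂) (τ ω : ℕ → X)
    (θf θg : X →L[𝕂] lp (fun _ : ℕ => 𝕂) p) (θτ θω : lp (fun _ : ℕ => 𝕂) p →L[𝕂] X)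
    (Sf Sg : X ≃L[𝕂] X)
    (hθf : ∀ (x : X) (n : ℕ), θf x n = f n x)
    (hθg : ∀ (x : X) (n : ℕ), θg x n = g n x)
    (hθτ : ∀ a : lp (fun _ : ℕ => 𝕂) p,
      Tendsto (fun N => ∑ n ∈ Finset.range N, a n • τ n) atTop (nhds (θτ a)))
    (hθω : ∀ a : lp (fun _ : ℕ => 𝕂) p,
      Tendsto (fun N => ∑ n ∈ Finset.range N, a n • ω n) atTop (nhds (θω a)))
    (hSf : (Sf : X →L[𝕂] X) = θτ.comp θf)
    (hSg : (Sg : X →L[𝕂] X) = θω.comp θg) :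
    ((∃ T₁ T₂ : X ≃L[𝕂] X,
        (∀ n, g n = (f n).comp (T₁ : X →L[𝕂] X)) ∧ (∀ n, ω n = T₂ (τ n))) ↔
      (∃ T₁ T₂ : X ≃L[𝕂] X,
        θg = θf.comp (T₁ : X →L[𝕂] X) ∧ θω = (T₂ : X →L[𝕂] X).comp θτ)) ∧
    ((∃ T₁ T₂ : X ≃L[𝕂] X,
        θg = θf.comp (T₁ : X →L[𝕂] X) ∧ θω = (T₂ : X →L[𝕂] X).comp θτ) ↔
      θg.comp ((Sg.symm : X →L[𝕂] X).comp θω) =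
        θf.comp ((Sf.symm : X →L[𝕂] X).comp θτ)) ∧
    (∀ T₁ T₂ : X ≃L[𝕂] X,
      (((∀ n, g n = (f n).comp (T₁ : X →L[𝕂] X)) ∧ (∀ n, ω n = T₂ (τ n))) ∨
        (θg = θf.comp (T₁ : X →L[𝕂] X) ∧ θω = (T₂ : X →L[𝕂] X).comp θτ)) →
        ((T₁ : X →L[𝕂] X) = (Sf.symm : X →L[𝕂] X).comp (θτ.comp θg) ∧
         (T₂ : X →L[𝕂] X) = (θω.comp θf).comp (Sf.symm : X →L[𝕂] X))) ∧
    ((Sf : X →L[𝕂] X) = ContinuousLinearMap.id 𝕂 X →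
      ∀ T₁ T₂ : X ≃L[𝕂] X,
        (θg = θf.comp (T₁ : X →L[𝕂] X) ∧ θω = (T₂ : X →L[𝕂] X).comp θτ) →
        (((Sg : X →L[𝕂] X) = ContinuousLinearMap.id 𝕂 X ↔
            (T₂ : X →L[𝕂] X).comp (T₁ : X →L[𝕂] X) = ContinuousLinearMap.id 𝕂 X) ∧
         ((Sg : X →L[𝕂] X) = ContinuousLinearMap.id 𝕂 X ↔
            (T₁ : X →L[𝕂] X).comp (T₂ : X →L[𝕂] X) = ContinuousLinearMap.id 𝕂 X))) := by
  have eSf : ∀ x, θτ (θf x) = Sf x := fun x => (DFunLike.congr_fun hSf x).symm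
  have eSg : ∀ x, θω (θg x) = Sg x := fun x => (DFunLike.congr_fun hSg x).symm
  have key : ∀ (σ : ℕ → X) (θ : lp (fun _ : ℕ => 𝕂) p →L[𝕂] X),
      (∀ a : lp (fun _ : ℕ => 𝕂) p,
        Tendsto (fun N => ∑ n ∈ Finset.range N, a n • σ n) atTop (nhds (θ a))) →
      ∀ n, θ (lp.single p n (1 : 𝕂)) = σ n := by
    intro σ θ h n
    refine tendsto_nhds_unique (h _) ?_
    refine tendsto_const_nhds.congr' ?_
    filter_upwards [eventually_gt_atTop n] with N hN
    rw [Finset.sum_eq_single n]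
    · simp
    · intro b _ hb
      simp [lp.single_apply, Pi.single_apply, hb]
    · intro hn
      exact absurd (Finset.mem_range.mpr hN) hn
  have h12 : ∀ T₁ T₂ : X ≃L[𝕂] X,
      ((∀ n, g n = (f n).comp (T₁ : X →L[𝕂] X)) ∧ (∀ n, ω n = T₂ (τ n))) ↔
        (θg = θf.comp (T₁ : X →L[𝕂] X) ∧ θω = (T₂ : X →L[𝕂] X).comp θτ) := by
    intro T₁ T₂
    constructor
    · rintro ⟨h1, h2⟩
      constructor
      · ext x n
        simp [hθg, hθf, h1]
      · refine ContinuousLinearMap.ext fun a => ?_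
        refine tendsto_nhds_unique (hθω a) ?_
        have := (T₂.continuous.tendsto (θτ a)).comp (hθτ a)
        refine this.congr fun N => ?_
        simp [h2, map_sum]
    · rintro ⟨h1, h2⟩
      constructor
      · intro n
        ext x
        rw [← hθg, h1]
        simp [hθf]
      · intro n
        rw [← key ω θω hθω n, ← key τ θτ hθτ n, h2]
        rfl
  refine ⟨?_, ?_, ?_, ?_⟩
  · exact exists_congr fun T₁ => exists_congr fun T₂ => h12 T₁ T₂
  · constructor
    · rintro ⟨T₁, T₂, h1, h2⟩
      refine ContinuousLinearMap.ext fun a => ?_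
      have hS : ∀ x, Sg x = T₂ (Sf (T₁ x)) := by
        intro x
        rw [← eSg, ← eSf, h1, h2]
        rfl
      have : Sg.symm (θω a) = T₁.symm (Sf.symm (θτ a)) := by
        rw [ContinuousLinearEquiv.symm_apply_eq, hS]
        simp [h2]
      simp [this]
      simp [h1]
    · intro h
      have hP : ∀ a, θg (Sg.symm (θω a)) = θf (Sf.symm (θτ a)) :=
        fun a => DFunLike.congr_fun h a
      refine ⟨ContinuousLinearEquiv.equivOfInverse
          ((Sf.symm : X →L[𝕂] X).comp (θτ.comp θg))
          ((Sg.symm : X →L[𝕂] X).comp (θω.comp θf)) ?_ ?_,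
        ContinuousLinearEquiv.equivOfInverse
          ((θω.comp θf).comp (Sf.symm : X →L[𝕂] X))
          ((θτ.comp θg).comp (Sg.symm : X →L[𝕂] X)) ?_ ?_, ?_, ?_⟩
      · intro x
        simp [← hP, eSg]
      · intro x
        simp [hP, eSf]
      · intro x
        simp [hP, eSf]
      · intro x
        simp [← hP, eSg]
      · refine ContinuousLinearMap.ext fun x => ?_
        change θg x = θf (Sf.symm (θτ (θg x)))
        simp [← hP, eSg]
      · refine ContinuousLinearMap.ext fun a => ?_
        change θω a = θω (θf (Sf.symm (θτ a)))
        simp [← hP, eSg]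
  · intro T₁ T₂ h
    obtain ⟨h1, h2⟩ : θg = θf.comp (T₁ : X →L[𝕂] X) ∧ θω = (T₂ : X →L[𝕂] X).comp θτ :=
      h.elim (h12 T₁ T₂).1 id
    constructor
    · ext x
      simp [h1, eSf]
    · ext x
      simp [h2, eSf]
  · rintro hI T₁ T₂ ⟨h1, h2⟩
    have hSx : ∀ x, Sf x = x := fun x => DFunLike.congr_fun hI x
    have hS : (Sg : X →L[𝕂] X) = (T₂ : X →L[𝕂] X).comp (T₁ : X →L[𝕂] X) := by
      ext x
      rw [hSg, h1, h2]
      simp [eSf, hSx]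
    rw [hS]
    refine ⟨Iff.rfl, ?_⟩
    constructor
    · intro h
      ext x
      apply T₂.injective
      exact DFunLike.congr_fun h (T₂ x)
    · intro h
      ext x
      apply T₁.injective
      exact DFunLike.congr_fun h (T₁ x)
end

section
/- Let ((f_n),(τ_n)) and ((g_n),(ω_n)) be two Parseval p-ASFs for the Banach space X (i.e. S_{f,τ} = S_{g,ω} = I_X) which are orthogonal, meaning θ_τ θ_g = 0 and θ_ω θ_f = 0. If A, B, C, D : X → X are bounded linear operators with C∘A + D∘B = I_X, then the pair ((f_n∘A + g_n∘B)_{n∈ℕ}, (C τ_n + D ω_n)_{n∈ℕ}) is a Parseval p-ASF for X; in particular, for scalars a, b, c, d with c·a + d·b = 1, the pair ((a f_n + b g_n)_n, (c τ_n + d ω_n)_n) is a Parseval p-ASF for X. -/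
open Filter
open scoped ENNReal

variable {𝕂 : Type*} [RCLike 𝕂] {X : Type*} [NormedAddCommGroup X] [NormedSpace 𝕂 X]
  [CompleteSpace X]

/-- A pair `((f_n), (τ_n))` is a Parseval (simple) p-approximate Schauder frame for `X`: the
analysis operator `θ_f` and the synthesis operator `θ_τ` are well-defined bounded linear
operators and the frame operator `θ_τ θ_f` equals the identity `I_X`. -/
def IsParsevalPASF (p : ℝ≥0∞) [Fact (1 ≤ p)] (f : ℕ → X →L[𝕂] 𝕂) (τ : ℕ → X) : Prop :=
  ∃ (θf : X →L[𝕂] lp (fun _ : ℕ => 𝕂) p) (θτ : lp (fun _ : ℕ => 𝕂) p →L[𝕂] X),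
    (∀ (x : X) (n : ℕ), θf x n = f n x) ∧
    (∀ a : lp (fun _ : ℕ => 𝕂) p,
      Tendsto (fun N => ∑ n ∈ Finset.range N, a n • τ n) atTop (nhds (θτ a))) ∧
    θτ.comp θf = ContinuousLinearMap.id 𝕂 X

/-- **Interpolation of orthogonal Parseval p-ASFs.**  If `((f_n),(τ_n))` and `((g_n),(ω_n))` are
orthogonal Parseval p-ASFs for `X` and `C∘A + D∘B = I_X`, then
`((f_n∘A + g_n∘B), (C τ_n + D ω_n))` is a Parseval p-ASF; in particular for scalars with
`c a + d b = 1`, `((a f_n + b g_n), (c τ_n + d ω_n))` is a Parseval p-ASF. -/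
theorem orthogonal_parseval_pASF_interpolation (p : ℝ≥0∞) [Fact (1 ≤ p)] (hp : p ≠ ⊤)
    (f g : ℕ → X →L[𝕂] 𝕂) (τ ω : ℕ → X)
    (θf θg : X →L[𝕂] lp (fun _ : ℕ => 𝕂) p) (θτ θω : lp (fun _ : ℕ => 𝕂) p →L[𝕂] X)
    (hθf : ∀ (x : X) (n : ℕ), θf x n = f n x)
    (hθg : ∀ (x : X) (n : ℕ), θg x n = g n x)
    (hθτ : ∀ a : lp (fun _ : ℕ => 𝕂) p,
      Tendsto (fun N => ∑ n ∈ Finset.range N, a n • τ n) atTop (nhds (θτ a)))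
    (hθω : ∀ a : lp (fun _ : ℕ => 𝕂) p,
      Tendsto (fun N => ∑ n ∈ Finset.range N, a n • ω n) atTop (nhds (θω a)))
    (hPf : θτ.comp θf = ContinuousLinearMap.id 𝕂 X)
    (hPg : θω.comp θg = ContinuousLinearMap.id 𝕂 X)
    (horth₁ : θτ.comp θg = 0) (horth₂ : θω.comp θf = 0) :
    (∀ A B C D : X →L[𝕂] X, C.comp A + D.comp B = ContinuousLinearMap.id 𝕂 X →
      IsParsevalPASF p (fun n => (f n).comp A + (g n).comp B)
        (fun n => C (τ n) + D (ω n))) ∧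
    (∀ a b c d : 𝕂, c * a + d * b = 1 →
      IsParsevalPASF p (fun n => a • f n + b • g n) (fun n => c • τ n + d • ω n)) := by
  have e1 : ∀ x, θτ (θf x) = x := fun x => by simpa using congrArg (fun T => T x) hPf
  have e2 : ∀ x, θω (θg x) = x := fun x => by simpa using congrArg (fun T => T x) hPg
  have e3 : ∀ x, θτ (θg x) = 0 := fun x => by simpa using congrArg (fun T => T x) horth₁
  have e4 : ∀ x, θω (θf x) = 0 := fun x => by simpa using congrArg (fun T => T x) horth₂
  have key : ∀ A B C D : X →L[𝕂] X, C.comp A + D.comp B = ContinuousLinearMap.id 𝕂 X →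
      IsParsevalPASF p (fun n => (f n).comp A + (g n).comp B)
        (fun n => C (τ n) + D (ω n)) := by
    intro A B C D h
    refine ⟨θf.comp A + θg.comp B, C.comp θτ + D.comp θω, ?_, ?_, ?_⟩
    · intro x n
      simp [hθf, hθg]
    · intro a
      have h1 := ((C.continuous.tendsto _).comp (hθτ a)).add
        ((D.continuous.tendsto _).comp (hθω a))
      refine h1.congr fun N => ?_
      simp [Finset.sum_add_distrib]
    · ext x
      have hx : C (A x) + D (B x) = x := by simpa using congrArg (fun T => T x) h
      simp [e1, e2, e3, e4, hx]
  refine ⟨key, fun a b c d h => ?_⟩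
  have := key (a • ContinuousLinearMap.id 𝕂 X) (b • ContinuousLinearMap.id 𝕂 X)
    (c • ContinuousLinearMap.id 𝕂 X) (d • ContinuousLinearMap.id 𝕂 X) (by
      ext x
      have h2 : a * c + b * d = 1 := by rw [← h]; ring
      simp [smul_smul, ← add_smul, h2])
  simpa using this
end

section
/- Let ((f_n),(τ_n)) be a p-ASF for the Banach space X. Then there exist a Banach space X₁ over 𝕂, a linear isometric embedding J : X → X₁, a bounded linear idempotent P : X₁ → X₁ whose range equals J(X), and a p-approximate Riesz basis ((g_n),(ω_n)) for X₁ such that g_n(J x) = f_n(x) for all n ∈ ℕ and x ∈ X, and P ω_n = J τ_n for all n ∈ ℕ. -/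
open Filter
open scoped ENNReal

universe u v

variable {𝕂 : Type u} [RCLike 𝕂]

/-- A pair `((g_n), (ω_n))` is a p-approximate Riesz basis for the Banach space `Y`: it is a
p-ASF (bounded analysis operator `θ_g`, bounded synthesis operator `θ_ω`, invertible frame
operator `S_g = θ_ω θ_g`) with in addition `θ_g S_g⁻¹ θ_ω = I` on `ℓ^p(ℕ)`. -/
def IsPApproxRieszBasis (p : ℝ≥0∞) [Fact (1 ≤ p)] (Y : Type*) [NormedAddCommGroup Y]
    [NormedSpace 𝕂 Y] (g : ℕ → Y →L[𝕂] 𝕂) (ω : ℕ → Y) : Prop :=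
  ∃ (θg : Y →L[𝕂] lp (fun _ : ℕ => 𝕂) p) (θω : lp (fun _ : ℕ => 𝕂) p →L[𝕂] Y)
    (Sg : Y ≃L[𝕂] Y),
    (∀ (x : Y) (n : ℕ), θg x n = g n x) ∧
    (∀ a : lp (fun _ : ℕ => 𝕂) p,
      Tendsto (fun N => ∑ n ∈ Finset.range N, a n • ω n) atTop (nhds (θω a))) ∧
    (Sg : Y →L[𝕂] Y) = θω.comp θg ∧
    θg.comp ((Sg.symm : Y →L[𝕂] Y).comp θω) =
      ContinuousLinearMap.id 𝕂 (lp (fun _ : ℕ => 𝕂) p)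

/-- **Dilation theorem for p-approximate Schauder frames.** Every p-ASF `((f_n), (τ_n))` for a
Banach space `X` dilates to a p-approximate Riesz basis `((g_n), (ω_n))` for a Banach space `X₁`
containing `X` isometrically (via `J`), with a bounded idempotent `P` on `X₁` with range `J(X)`
such that `g_n ∘ J = f_n` and `P ω_n = J τ_n` for all `n`. -/
theorem pASF_dilation {X : Type v} [NormedAddCommGroup X] [NormedSpace 𝕂 X] [CompleteSpace X]
    (p : ℝ≥0∞) [Fact (1 ≤ p)] (hp : p ≠ ⊤)
    (f : ℕ → X →L[𝕂] 𝕂) (τ : ℕ → X)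
    (θf : X →L[𝕂] lp (fun _ : ℕ => 𝕂) p) (θτ : lp (fun _ : ℕ => 𝕂) p →L[𝕂] X)
    (S : X ≃L[𝕂] X)
    (hθf : ∀ (x : X) (n : ℕ), θf x n = f n x)
    (hθτ : ∀ a : lp (fun _ : ℕ => 𝕂) p,
      Tendsto (fun N => ∑ n ∈ Finset.range N, a n • τ n) atTop (nhds (θτ a)))
    (hS : (S : X →L[𝕂] X) = θτ.comp θf) :
    ∃ (X₁ : Type (max u v)) (_ : NormedAddCommGroup X₁) (_ : NormedSpace 𝕂 X₁)
      (_ : CompleteSpace X₁) (J : X →ₗᵢ[𝕂] X₁) (P : X₁ →L[𝕂] X₁)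
      (g : ℕ → X₁ →L[𝕂] 𝕂) (ω : ℕ → X₁),
      P.comp P = P ∧
      Set.range ⇑P = Set.range ⇑J ∧
      IsPApproxRieszBasis p X₁ g ω ∧
      (∀ (n : ℕ) (x : X), g n (J x) = f n x) ∧
      (∀ n : ℕ, P (ω n) = J (τ n)) := by
  have hS' : ∀ x, θτ (θf x) = S x := fun x => by
    have := congrArg (fun T : X →L[𝕂] X => T x) hS
    simpa using this.symm
  have hp0 : (1 : ℝ≥0∞) ≤ p := Fact.out
  let K : Submodule 𝕂 (lp (fun _ : ℕ => 𝕂) p) := LinearMap.ker (θτ : lp (fun _ : ℕ => 𝕂) p →ₗ[𝕂] X)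
  have hKc : IsClosed (K : Set (lp (fun _ : ℕ => 𝕂) p)) := θτ.isClosed_ker
  haveI : CompleteSpace K := hKc.completeSpace_coe
  have hK : ∀ k : K, θτ k = 0 := fun k => k.2
  let Q0 : lp (fun _ : ℕ => 𝕂) p →L[𝕂] lp (fun _ : ℕ => 𝕂) p :=
    ContinuousLinearMap.id 𝕂 _ - θf.comp ((S.symm : X →L[𝕂] X).comp θτ)
  have hQ0 : ∀ a, Q0 a = a - θf (S.symm (θτ a)) := fun a => rfl
  have hQ0K : ∀ a, Q0 a ∈ K := fun a => by
    change θτ (Q0 a) = 0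
    rw [hQ0, map_sub, hS', ContinuousLinearEquiv.apply_symm_apply, sub_self]
  let Q : lp (fun _ : ℕ => 𝕂) p →L[𝕂] K := Q0.codRestrict K hQ0K
  have hQ : ∀ a, ((Q a : K) : lp (fun _ : ℕ => 𝕂) p) = a - θf (S.symm (θτ a)) := fun a => rfl
  let θg : X × K →L[𝕂] lp (fun _ : ℕ => 𝕂) p := θf.coprod K.subtypeL
  have hθg : ∀ z, θg z = θf z.1 + (z.2 : lp (fun _ : ℕ => 𝕂) p) := fun z => rfl
  let θω : lp (fun _ : ℕ => 𝕂) p →L[𝕂] X × K := θτ.prod Q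
  have hθω : ∀ a, θω a = (θτ a, Q a) := fun a => rfl
  let e : ℕ → lp (fun _ : ℕ => 𝕂) p := fun n => lp.single p n (1 : 𝕂)
  have he : ∀ a : lp (fun _ : ℕ => 𝕂) p, HasSum (fun n => a n • e n) a := fun a => by
    have h := lp.hasSum_single hp a
    convert h using 2 with n
    rw [← lp.single_smul]
    simp
  have hτe : ∀ n, θτ (e n) = τ n := fun n => by
    refine tendsto_nhds_unique (hθτ (e n)) ?_
    refine tendsto_const_nhds.congr' ?_
    filter_upwards [eventually_gt_atTop n] with N hN
    rw [Finset.sum_eq_single n]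
    · simp [e]
    · intro b _ hb
      simp [e, hb]
    · intro h
      exact absurd (Finset.mem_range.2 hN) h
  refine ⟨X × K, inferInstance, inferInstance, inferInstance,
    ⟨LinearMap.inl 𝕂 X K, fun x => by simp [Prod.norm_def]⟩,
    (ContinuousLinearMap.inl 𝕂 X K).comp (ContinuousLinearMap.fst 𝕂 X K),
    fun n => (lp.evalCLM 𝕂 (fun _ : ℕ => 𝕂) p n).comp θg, fun n => θω (e n), ?_, ?_,
    ⟨θg, θω, S.prodCongr (ContinuousLinearEquiv.refl 𝕂 K), ?_, ?_, ?_, ?_⟩, ?_, ?_⟩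
  · ext x <;> simp
  · ext z
    constructor
    · rintro ⟨y, rfl⟩
      exact ⟨y.1, rfl⟩
    · rintro ⟨y, rfl⟩
      exact ⟨(y, 0), rfl⟩
  · intro x n
    rfl
  · intro a
    have h := ((he a).mapL θω).tendsto_sum_nat
    simpa using h
  · refine ContinuousLinearMap.ext fun z => ?_
    change (S z.1, z.2) = θω (θg z)
    rw [hθω]
    have h1 : θτ (θg z) = S z.1 := by rw [hθg, map_add, hS', hK, add_zero]
    refine Prod.ext h1.symm (Subtype.ext ?_)
    change _ = ((Q (θg z) : K) : lp (fun _ : ℕ => 𝕂) p)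
    rw [hQ, h1, ContinuousLinearEquiv.symm_apply_apply, hθg]
    simp
  · refine ContinuousLinearMap.ext fun a => ?_
    change θf (S.symm (θτ a)) + ((Q a : K) : lp (fun _ : ℕ => 𝕂) p) = a
    rw [hQ]
    simp
  · intro n x
    change θg (x, 0) n = f n x
    rw [hθg, ← hθf]
    simp
  · intro n
    change (θτ (e n), (0 : K)) = (τ n, 0)
    rw [hτe]
end

section
/- Let ((f_n),(τ_n)) be a p-ASF for the Banach space X and let (ω_n)_{n∈ℕ} be a sequence in X. Suppose there exist α, β, γ ≥ 0 with max{α + γ·‖θ_f S_{f,τ}^{-1}‖, β} < 1 such that for every m ≥ 1 and all scalars c_1, …, c_m, ‖∑_{n=1}^m c_n (τ_n − ω_n)‖ ≤ α·‖∑_{n=1}^m c_n τ_n‖ + γ·(∑_{n=1}^m |c_n|^p)^{1/p} + β·‖∑_{n=1}^m c_n ω_n‖. Then ((f_n),(ω_n)) is a p-ASF for X, and its frame operator S_{f,ω} satisfies a·‖x‖ ≤ ‖S_{f,ω} x‖ ≤ b·‖x‖ for all x ∈ X, with a = (1 − (α + γ·‖θ_f S_{f,τ}^{-1}‖)) / ((1+β)·‖S_{f,τ}^{-1}‖)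 and b = ((1+α)/(1−β)·‖θ_τ‖ + γ/(1−β))·‖θ_f‖. -/
open Filter
open scoped ENNReal

variable {𝕂 : Type*} [RCLike 𝕂] {X : Type*} [NormedAddCommGroup X] [NormedSpace 𝕂 X]
  [CompleteSpace X]

theorem aux_sum {G : Type*} [AddCommGroup G] (g : ℕ → G) {M N : ℕ} (h : M ≤ N) :
    ∑ n ∈ Finset.range N, (if M ≤ n then g n else 0) =
      ∑ n ∈ Finset.range N, g n - ∑ n ∈ Finset.range M, g n := by
  induction N, h using Nat.le_induction with
  | base =>
    rw [sub_self]
    apply Finset.sum_eq_zero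
    intro n hn
    rw [if_neg (not_le.mpr (Finset.mem_range.mp hn))]
  | succ N h ih =>
    rw [Finset.sum_range_succ, ih, if_pos h, Finset.sum_range_succ]
    abel

theorem aux_unit (T : X →L[𝕂] X) (l β : ℝ) (hl1 : l < 1) (hβ : 0 ≤ β) (hβ1 : β < 1)
    (h : ∀ y, ‖y - T y‖ ≤ l * ‖y‖ + β * ‖T y‖) : IsUnit T := by
  rcases subsingleton_or_nontrivial X with hX | hX
  · have : Subsingleton (X →L[𝕂] X) := ⟨fun a b => by ext x; exact Subsingleton.elim _ _⟩
    exact isUnit_of_subsingleton T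
  set D : X →L[𝕂] X := T - 1 with hD
  have key : ∀ t : ℝ, 0 ≤ t → t ≤ 1 → ∀ y,
      (1 - l) * ‖y‖ ≤ (1 + β) * ‖((1 : X →L[𝕂] X) + (t : 𝕂) • D) y‖ := by
    intro t ht0 ht1 y
    set z := ((1 : X →L[𝕂] X) + (t : 𝕂) • D) y with hz
    have hz' : z = y - (t : 𝕂) • (y - T y) := by
      simp [hz, hD, smul_sub]
      abel
    set u := y - T y with hu
    have e1 : T y = z - ((1 - t : ℝ) : 𝕂) • u := by
      rw [hz', RCLike.ofReal_sub, sub_smul, RCLike.ofReal_one, one_smul, hu]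
      abel
    have e2 : y = z + (t : 𝕂) • u := by rw [hz']; abel
    have n1 : ‖T y‖ ≤ ‖z‖ + (1 - t) * ‖u‖ := by
      rw [e1]
      refine (norm_sub_le _ _).trans ?_
      rw [norm_smul, RCLike.norm_ofReal, abs_of_nonneg (by linarith)]
    have n2 : ‖y‖ ≤ ‖z‖ + t * ‖u‖ := by
      conv_lhs => rw [e2]
      refine (norm_add_le _ _).trans ?_
      rw [norm_smul, RCLike.norm_ofReal, abs_of_nonneg ht0]
    have n3 := h y
    have n4 : β * ‖T y‖ ≤ β * (‖z‖ + (1 - t) * ‖u‖) := by gcongr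
    have n5 : 0 ≤ (1 - β) * (1 - t) * ‖u‖ := by
      have : 0 ≤ 1 - β := by linarith
      have : 0 ≤ 1 - t := by linarith
      positivity
    nlinarith
  set K : ℝ := (1 + β) / (1 - l) with hK
  have hKpos : 0 < K := by
    have : 0 < 1 - l := by linarith
    positivity
  obtain ⟨m, hm⟩ := exists_nat_gt (‖D‖ * K)
  have hm0 : (0 : ℝ) < m := lt_of_le_of_lt (by positivity) hm
  have step : ∀ k : ℕ, k ≤ m → IsUnit ((1 : X →L[𝕂] X) + (((k : ℝ) / m : ℝ) : 𝕂) • D) := by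
    intro k
    induction k with
    | zero => intro _; simp
    | succ k ih =>
      intro hk
      obtain ⟨v, hv⟩ := ih (by omega)
      have hkm : (k : ℝ) / m ≤ 1 := by
        rw [div_le_one hm0]; exact_mod_cast (by omega : k ≤ m)
      have hinv : ‖(↑v⁻¹ : X →L[𝕂] X)‖ ≤ K := by
        refine ContinuousLinearMap.opNorm_le_bound _ hKpos.le fun x => ?_
        have := key _ (by positivity) hkm ((↑v⁻¹ : X →L[𝕂] X) x)
        rw [← hv, ← ContinuousLinearMap.mul_apply, Units.mul_inv,
          ContinuousLinearMap.one_apply] at this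
        rw [hK, div_mul_eq_mul_div, le_div_iff₀ (by linarith)]
        linarith
      have hpos : 0 < ‖(↑v⁻¹ : X →L[𝕂] X)‖ := Units.norm_pos v⁻¹
      refine ⟨Units.ofNearby v _ ?_, rfl⟩
      have : (1 : X →L[𝕂] X) + ((((k + 1 : ℕ) : ℝ) / m : ℝ) : 𝕂) • D - v
          = ((1 / m : ℝ) : 𝕂) • D := by
        rw [hv, add_sub_add_left_eq_sub, ← sub_smul, ← RCLike.ofReal_sub]
        congr 2
        push_cast
        ring
      rw [this, norm_smul, RCLike.norm_ofReal, abs_of_nonneg (by positivity)]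
      refine lt_of_lt_of_le ?_ (inv_anti₀ hpos hinv)
      rw [one_div, inv_mul_eq_div, div_lt_iff₀ hm0, inv_mul_eq_div, lt_div_iff₀ hKpos]
      exact hm
  have := step m le_rfl
  rw [div_self hm0.ne'] at this
  simpa [hD] using this

/-- **Perturbation (Paley–Wiener type) theorem for p-ASFs.** Let `((f_n),(τ_n))` be a p-ASF for
`X` with analysis operator `θf`, synthesis operator `θτ` and frame operator `S = θτ θf`, and let
`(ω_n)` be a sequence in `X` satisfying the stated perturbation inequality with parameters
`α, β, γ ≥ 0`, `max {α + γ‖θf S⁻¹‖, β} < 1`.  Then `((f_n),(ω_n))` is a p-ASF for `X` whose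
frame operator `S_{f,ω}` satisfies `a‖x‖ ≤ ‖S_{f,ω} x‖ ≤ b‖x‖` with
`a = (1 - (α + γ‖θf S⁻¹‖))/((1+β)‖S⁻¹‖)` and `b = ((1+α)/(1-β)·‖θτ‖ + γ/(1-β))·‖θf‖`. -/
theorem pASF_perturbation (p : ℝ≥0∞) [Fact (1 ≤ p)] (hp : p ≠ ⊤)
    (f : ℕ → X →L[𝕂] 𝕂) (τ ω : ℕ → X)
    (θf : X →L[𝕂] lp (fun _ : ℕ => 𝕂) p) (θτ : lp (fun _ : ℕ => 𝕂) p →L[𝕂] X)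
    (S : X ≃L[𝕂] X)
    (hθf : ∀ (x : X) (n : ℕ), θf x n = f n x)
    (hθτ : ∀ a : lp (fun _ : ℕ => 𝕂) p,
      Tendsto (fun N => ∑ n ∈ Finset.range N, a n • τ n) atTop (nhds (θτ a)))
    (hS : (S : X →L[𝕂] X) = θτ.comp θf)
    (α β γ : ℝ) (hα : 0 ≤ α) (hβ : 0 ≤ β) (hγ : 0 ≤ γ)
    (hmax : max (α + γ * ‖θf.comp (S.symm : X →L[𝕂] X)‖) β < 1)
    (hper : ∀ (m : ℕ) (c : ℕ → 𝕂), 1 ≤ m →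
      ‖∑ n ∈ Finset.range m, c n • (τ n - ω n)‖ ≤
        α * ‖∑ n ∈ Finset.range m, c n • τ n‖ +
        γ * (∑ n ∈ Finset.range m, ‖c n‖ ^ p.toReal) ^ (1 / p.toReal) +
        β * ‖∑ n ∈ Finset.range m, c n • ω n‖) :
    ∃ (θω : lp (fun _ : ℕ => 𝕂) p →L[𝕂] X) (Sω : X ≃L[𝕂] X),
      (∀ a : lp (fun _ : ℕ => 𝕂) p,
        Tendsto (fun N => ∑ n ∈ Finset.range N, a n • ω n) atTop (nhds (θω a))) ∧
      (Sω : X →L[𝕂] X) = θω.comp θf ∧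
      (∀ x : X,
        (1 - (α + γ * ‖θf.comp (S.symm : X →L[𝕂] X)‖)) /
            ((1 + β) * ‖(S.symm : X →L[𝕂] X)‖) * ‖x‖ ≤ ‖Sω x‖) ∧
      (∀ x : X,
        ‖Sω x‖ ≤ ((1 + α) / (1 - β) * ‖θτ‖ + γ / (1 - β)) * ‖θf‖ * ‖x‖) := by
  have hl1 : α + γ * ‖θf.comp (S.symm : X →L[𝕂] X)‖ < 1 := lt_of_le_of_lt (le_max_left _ _) hmax
  have hβ1 : β < 1 := lt_of_le_of_lt (le_max_right _ _) hmax
  have hb : 0 < 1 - β := by linarith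
  have hp0 : 0 < p.toReal :=
    ENNReal.toReal_pos (lt_of_lt_of_le one_pos (Fact.out : 1 ≤ p)).ne' hp
  have hper0 : ∀ (m : ℕ) (c : ℕ → 𝕂),
      ‖∑ n ∈ Finset.range m, c n • τ n - ∑ n ∈ Finset.range m, c n • ω n‖ ≤
        α * ‖∑ n ∈ Finset.range m, c n • τ n‖ +
        γ * (∑ n ∈ Finset.range m, ‖c n‖ ^ p.toReal) ^ (1 / p.toReal) +
        β * ‖∑ n ∈ Finset.range m, c n • ω n‖ := by
    intro m c
    rcases Nat.eq_zero_or_pos m with rfl | hm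
    · simp only [Finset.range_zero, Finset.sum_empty, sub_self, norm_zero, mul_zero, zero_add,
        add_zero]
      exact mul_nonneg hγ (Real.rpow_nonneg le_rfl _)
    · have := hper m c hm
      simpa only [smul_sub, Finset.sum_sub_distrib] using this
  have hbd : ∀ s t : X, ∀ r : ℝ, ‖s - t‖ ≤ α * ‖s‖ + γ * r + β * ‖t‖ →
      ‖t‖ ≤ (1 + α) / (1 - β) * ‖s‖ + γ / (1 - β) * r := by
    intro s t r h
    have h2 : ‖t‖ ≤ ‖s‖ + ‖s - t‖ := by
      have := norm_sub_le s (s - t)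
      rwa [sub_sub_cancel] at this
    rw [div_mul_eq_mul_div, div_mul_eq_mul_div, ← add_div, le_div_iff₀ hb]
    linarith
  have hsum : ∀ a : lp (fun _ : ℕ => 𝕂) p,
      HasSum (fun n => ‖a n‖ ^ p.toReal) (‖a‖ ^ p.toReal) := fun a => lp.hasSum_norm hp0 a
  have hcau : ∀ a : lp (fun _ : ℕ => 𝕂) p,
      CauchySeq (fun N => ∑ n ∈ Finset.range N, a n • ω n) := by
    intro a
    have hA := cauchySeq_iff_tendsto_dist_atTop_0.1 (hθτ a).cauchySeq
    have hB := cauchySeq_iff_tendsto_dist_atTop_0.1 (hsum a).tendsto_sum_nat.cauchySeq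
    rw [cauchySeq_iff_tendsto_dist_atTop_0]
    have hB' := hB.rpow_const (p := 1 / p.toReal) (Or.inr (by positivity))
    rw [Real.zero_rpow (by positivity)] at hB'
    have hC := (hA.const_mul ((1 + α) / (1 - β))).add (hB'.const_mul (γ / (1 - β)))
    rw [mul_zero, mul_zero, add_zero] at hC
    have main : ∀ M N : ℕ, M ≤ N →
        dist (∑ n ∈ Finset.range N, a n • ω n) (∑ n ∈ Finset.range M, a n • ω n) ≤
        (1 + α) / (1 - β) *
          dist (∑ n ∈ Finset.range N, a n • τ n) (∑ n ∈ Finset.range M, a n • τ n) +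
        γ / (1 - β) * dist (∑ n ∈ Finset.range N, ‖a n‖ ^ p.toReal)
          (∑ n ∈ Finset.range M, ‖a n‖ ^ p.toReal) ^ (1 / p.toReal) := by
      intro M N hMN
      have h1 := hbd _ _ _ (hper0 N (fun n => if M ≤ n then a n else 0))
      have s1 : ∀ v : ℕ → X, ∑ n ∈ Finset.range N, (if M ≤ n then a n else 0) • v n =
          ∑ n ∈ Finset.range N, a n • v n - ∑ n ∈ Finset.range M, a n • v n := by
        intro v
        rw [← aux_sum _ hMN]
        exact Finset.sum_congr rfl fun n _ => by split_ifs <;> simp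
      have s2 : ∑ n ∈ Finset.range N, ‖if M ≤ n then a n else 0‖ ^ p.toReal =
          ∑ n ∈ Finset.range N, ‖a n‖ ^ p.toReal - ∑ n ∈ Finset.range M, ‖a n‖ ^ p.toReal := by
        rw [← aux_sum _ hMN]
        exact Finset.sum_congr rfl fun n _ => by
          split_ifs
          · rfl
          · rw [norm_zero, Real.zero_rpow hp0.ne']
      simp only [s1, s2] at h1
      have hnn : 0 ≤ ∑ n ∈ Finset.range N, ‖a n‖ ^ p.toReal -
          ∑ n ∈ Finset.range M, ‖a n‖ ^ p.toReal := by
        rw [← s2]; positivity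
      rw [dist_eq_norm, dist_eq_norm, Real.dist_eq, abs_of_nonneg hnn]
      exact h1
    refine squeeze_zero (fun _ => dist_nonneg) ?_ hC
    rintro ⟨M, N⟩
    rcases le_total N M with h | h
    · exact main _ _ h
    · have := main _ _ h
      simp only [dist_comm] at this ⊢
      first
        | exact this
        | (rw [dist_comm, dist_comm (∑ n ∈ Finset.range M, a n • τ n),
            dist_comm (∑ n ∈ Finset.range M, ‖a n‖ ^ p.toReal)]; exact main _ _ h)
  choose L hL using fun a => cauchySeq_tendsto_of_complete (hcau a)
  have hpert : ∀ a, ‖θτ a - L a‖ ≤ α * ‖θτ a‖ + γ * ‖a‖ + β * ‖L a‖ := by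
    intro a
    have hn := (hsum a).tendsto_sum_nat.rpow_const (p := 1 / p.toReal) (Or.inr (by positivity))
    rw [← Real.rpow_mul (norm_nonneg _), mul_one_div_cancel hp0.ne', Real.rpow_one] at hn
    exact le_of_tendsto_of_tendsto' ((hθτ a).sub (hL a)).norm
      ((((hθτ a).norm.const_mul α).add (hn.const_mul γ)).add ((hL a).norm.const_mul β))
      (fun N => hper0 N a)
  let θ₀ : lp (fun _ : ℕ => 𝕂) p →ₗ[𝕂] X :=
    { toFun := L
      map_add' := fun a b => tendsto_nhds_unique (hL (a + b)) (by
        have := (hL a).add (hL b)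
        simpa only [lp.coeFn_add, Pi.add_apply, add_smul, Finset.sum_add_distrib] using this)
      map_smul' := fun r a => tendsto_nhds_unique (hL (r • a)) (by
        have := (hL a).const_smul r
        simpa only [lp.coeFn_smul, Pi.smul_apply, smul_eq_mul, mul_smul, Finset.smul_sum,
          RingHom.id_apply] using this) }
  have hLb : ∀ a, ‖L a‖ ≤ ((1 + α) / (1 - β) * ‖θτ‖ + γ / (1 - β)) * ‖a‖ := by
    intro a
    refine (hbd _ _ _ (hpert a)).trans ?_
    have := mul_le_mul_of_nonneg_left (θτ.le_opNorm a)
      (show 0 ≤ (1 + α) / (1 - β) by positivity)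
    linarith
  let θω : lp (fun _ : ℕ => 𝕂) p →L[𝕂] X := θ₀.mkContinuous _ hLb
  have hθω : ∀ a, θω a = L a := fun _ => rfl
  have hSx : ∀ x, θτ (θf x) = S x := fun x => by
    have := congrArg (fun T : X →L[𝕂] X => T x) hS
    exact this.symm
  set l := α + γ * ‖θf.comp (S.symm : X →L[𝕂] X)‖ with hl
  let T : X →L[𝕂] X := (θω.comp θf).comp (S.symm : X →L[𝕂] X)
  have hT : ∀ y, ‖y - T y‖ ≤ l * ‖y‖ + β * ‖T y‖ := by
    intro y
    have h1 := hpert (θf (S.symm y))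
    rw [hSx, S.apply_symm_apply] at h1
    have h2 : ‖θf (S.symm y)‖ ≤ ‖θf.comp (S.symm : X →L[𝕂] X)‖ * ‖y‖ :=
      (θf.comp (S.symm : X →L[𝕂] X)).le_opNorm y
    have h3 := mul_le_mul_of_nonneg_left h2 hγ
    have h4 : T y = L (θf (S.symm y)) := rfl
    rw [h4, hl]
    linarith
  obtain ⟨u, hu⟩ := aux_unit T l β hl1 hβ hβ1 hT
  let E : X ≃L[𝕂] X := ContinuousLinearEquiv.ofUnit u
  have hE : ∀ y, E y = T y := fun y => by rw [← hu]; rfl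
  have hSω : ∀ x, (S.trans E) x = L (θf x) := fun x => by
    rw [ContinuousLinearEquiv.trans_apply, hE]
    change L (θf (S.symm (S x))) = _
    rw [S.symm_apply_apply]
  refine ⟨θω, S.trans E, hL, ?_, ?_, ?_⟩
  · ext x
    exact hSω x
  · intro x
    have h1 := hT (S x)
    have h2 : T (S x) = (S.trans E) x := by rw [ContinuousLinearEquiv.trans_apply, hE]
    rw [h2] at h1
    have h3 : ‖S x‖ ≤ ‖(S.trans E) x‖ + ‖S x - (S.trans E) x‖ := by
      have := norm_add_le ((S.trans E) x) (S x - (S.trans E) x)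
      rwa [add_sub_cancel] at this
    have h4 : ‖x‖ ≤ ‖(S.symm : X →L[𝕂] X)‖ * ‖S x‖ := by
      have := (S.symm : X →L[𝕂] X).le_opNorm (S x)
      simpa using this
    rcases (norm_nonneg (S.symm : X →L[𝕂] X)).eq_or_lt with h0 | h0
    · rw [← h0, mul_zero, div_zero, zero_mul]
      exact norm_nonneg _
    · rw [div_mul_eq_mul_div, div_le_iff₀ (by positivity)]
      have h5 : (1 - l) * ‖S x‖ ≤ (1 + β) * ‖(S.trans E) x‖ := by linarith
      calc (1 - l) * ‖x‖ ≤ (1 - l) * (‖(S.symm : X →L[𝕂] X)‖ * ‖S x‖) :=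
            mul_le_mul_of_nonneg_left h4 (by linarith)
        _ = ‖(S.symm : X →L[𝕂] X)‖ * ((1 - l) * ‖S x‖) := by ring
        _ ≤ ‖(S.symm : X →L[𝕂] X)‖ * ((1 + β) * ‖(S.trans E) x‖) :=
            mul_le_mul_of_nonneg_left h5 h0.le
        _ = _ := by ring
  · intro x
    rw [hSω, mul_assoc]
    exact (hLb _).trans (mul_le_mul_of_nonneg_left (θf.le_opNorm x) (by positivity))
end

section
/- Let G be a group with identity e and let ((A_g)_{g∈G}, (Ψ_g)_{g∈G}) be a Parseval factorable weak operator-valued frame in B(H,H₀) indexed by G. Then there exists a unitary representation π of G on H such that A_g = A_e ∘ π(g⁻¹) and Ψ_g = Ψ_e ∘ π(g⁻¹) for all g ∈ G, if and only if for all g, p, q ∈ G one has A_{gp} A_{gq}* = A_p A_q*, A_{gp} Ψ_{gq}* = A_p Ψ_q*, and Ψ_{gp} Ψ_{gq}* = Ψ_p Ψ_q*. -/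
open scoped ENNReal

/-- **Group-generated Parseval factorable weak OVFs.** Let `((A_g), (Ψ_g))` be a Parseval
factorable weak operator-valued frame in `B(H,H₀)` indexed by a group `G` (analysis operators
`θA, θΨ : H → ℓ²(G,H₀)` with `θΨ* θA = I`).  Then there is a unitary representation `π` of `G`
on `H` with `A_g = A_e ∘ π(g⁻¹)` and `Ψ_g = Ψ_e ∘ π(g⁻¹)` for all `g` iff
`A_{gp} A_{gq}* = A_p A_q*`, `A_{gp} Ψ_{gq}* = A_p Ψ_q*`, `Ψ_{gp} Ψ_{gq}* = Ψ_p Ψ_q*` for all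
`g, p, q ∈ G`. -/
theorem parseval_factorable_weak_OVF_group_representation
    {H H₀ : Type*} [NormedAddCommGroup H] [InnerProductSpace ℂ H] [CompleteSpace H]
    [NormedAddCommGroup H₀] [InnerProductSpace ℂ H₀] [CompleteSpace H₀]
    {G : Type*} [Group G]
    (A Ψ : G → H →L[ℂ] H₀)
    (θA θΨ : H →L[ℂ] lp (fun _ : G => H₀) 2)
    (hθA : ∀ (h : H) (g : G), θA h g = A g h)
    (hθΨ : ∀ (h : H) (g : G), θΨ h g = Ψ g h)
    (hPar : (ContinuousLinearMap.adjoint θΨ).comp θA = ContinuousLinearMap.id ℂ H) :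
    (∃ π : G →* (H ≃ₗᵢ[ℂ] H),
        ∀ g : G, (∀ h : H, A g h = A 1 (π (g⁻¹) h)) ∧ (∀ h : H, Ψ g h = Ψ 1 (π (g⁻¹) h))) ↔
    (∀ g p q : G,
        (A (g * p)).comp (ContinuousLinearMap.adjoint (A (g * q))) =
          (A p).comp (ContinuousLinearMap.adjoint (A q)) ∧
        (A (g * p)).comp (ContinuousLinearMap.adjoint (Ψ (g * q))) =
          (A p).comp (ContinuousLinearMap.adjoint (Ψ q)) ∧
        (Ψ (g * p)).comp (ContinuousLinearMap.adjoint (Ψ (g * q))) =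
          (Ψ p).comp (ContinuousLinearMap.adjoint (Ψ q))) := by
  constructor
  · rintro ⟨π, hπ⟩ g p q
    have key : ∀ (g p : G) (h : H), π ((g * p)⁻¹) h = π p⁻¹ (π g⁻¹ h) := by
      intro g p h
      rw [mul_inv_rev, map_mul]; rfl
    have hA : ∀ g p h, A (g * p) h = A p (π g⁻¹ h) := by
      intro g p h
      rw [(hπ (g * p)).1, key, ← (hπ p).1]
    have hΨ : ∀ g p h, Ψ (g * p) h = Ψ p (π g⁻¹ h) := by
      intro g p h
      rw [(hπ (g * p)).2, key, ← (hπ p).2]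
    have gen : ∀ (B B' C C' : H →L[ℂ] H₀) (U : H ≃ₗᵢ[ℂ] H), (∀ h, B h = B' (U h)) →
        (∀ h, C h = C' (U h)) →
        B.comp (ContinuousLinearMap.adjoint C) = B'.comp (ContinuousLinearMap.adjoint C') := by
      intro B B' C C' U hB hC
      ext v
      have : U (ContinuousLinearMap.adjoint C v) = ContinuousLinearMap.adjoint C' v := by
        refine ext_inner_right ℂ fun w => ?_
        obtain ⟨w, rfl⟩ := U.surjective w
        rw [U.inner_map_map, ContinuousLinearMap.adjoint_inner_left,
          ContinuousLinearMap.adjoint_inner_left, hC]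
      simp [hB, this]
    exact ⟨gen _ _ _ _ _ (hA g p) (hA g q), gen _ _ _ _ _ (hA g p) (hΨ g q),
      gen _ _ _ _ _ (hΨ g p) (hΨ g q)⟩
  · intro hyp
    classical
    have hin : ∀ x y, inner ℂ (θA x) (θΨ y) = inner ℂ x y := by
      intro x y
      rw [← ContinuousLinearMap.adjoint_inner_left]
      have := congrArg (fun T => T x) hPar
      simp only [ContinuousLinearMap.comp_apply, ContinuousLinearMap.id_apply] at this
      rw [this]
    have hS : ∀ x y, HasSum (fun q => inner ℂ (A q x) (Ψ q y)) (inner ℂ x y) := by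
      intro x y
      have := lp.hasSum_inner (𝕜 := ℂ) (θA x) (θΨ y)
      simpa only [hin, hθA, hθΨ] using this
    have inj : ∀ k k', (∀ q, A q k = A q k') → k = k' := by
      intro k k' h
      refine ext_inner_right ℂ fun w => ?_
      refine (hS k w).unique ?_
      simp only [h]
      exact hS k' w
    have hsingle : ∀ (p : G) (v : H₀), ContinuousLinearMap.adjoint θΨ (lp.single 2 p v) =
        ContinuousLinearMap.adjoint (Ψ p) v := by
      intro p v
      refine ext_inner_right ℂ fun w => ?_
      rw [ContinuousLinearMap.adjoint_inner_left, ContinuousLinearMap.adjoint_inner_left,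
        lp.inner_single_left, hθΨ]
    have hB : ∀ (B : H →L[ℂ] H₀) (x : lp (fun _ : G => H₀) 2),
        HasSum (fun p => B (ContinuousLinearMap.adjoint (Ψ p) (x p)))
          (B (ContinuousLinearMap.adjoint θΨ x)) := by
      intro B x
      have := (lp.hasSum_single (by norm_num) x).mapL (B.comp (ContinuousLinearMap.adjoint θΨ))
      simpa only [ContinuousLinearMap.comp_apply, hsingle] using this
    have ex : ∀ (g : G) (h : H), ∃ k : H, ∀ q, A (g * q) k = A q h ∧ Ψ (g * q) k = Ψ q h := by
      intro g h
      have hm : Memℓp (fun p => θA h (g⁻¹ * p)) 2 := by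
        have h1 := lp.memℓp (θA h)
        rw [memℓp_gen_iff (by norm_num)] at h1 ⊢
        exact (Equiv.mulLeft g⁻¹).summable_iff.mpr h1
      let x : lp (fun _ : G => H₀) 2 := ⟨fun p => θA h (g⁻¹ * p), hm⟩
      have hx : ∀ p, x (g * p) = A p h := by
        intro p
        change θA h (g⁻¹ * (g * p)) = _
        rw [inv_mul_cancel_left, hθA]
      have main : ∀ B B' : H →L[ℂ] H₀, (∀ p, B.comp (ContinuousLinearMap.adjoint (Ψ (g * p))) =
          B'.comp (ContinuousLinearMap.adjoint (Ψ p))) →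
          B (ContinuousLinearMap.adjoint θΨ x) = B' h := by
        intro B B' hBB
        have h1 := (Equiv.mulLeft g).hasSum_iff.mpr (hB B x)
        have h2 := hB B' (θA h)
        have h3 := congrArg (fun T => T h) hPar
        simp only [ContinuousLinearMap.comp_apply, ContinuousLinearMap.id_apply] at h3
        rw [h3] at h2
        refine h1.unique ?_
        convert h2 using 2 with p
        have h4 := congrArg (fun T => T (A p h)) (hBB p)
        simp only [ContinuousLinearMap.comp_apply] at h4
        simp only [Function.comp_apply, Equiv.coe_mulLeft, hx, hθA, h4]
      exact ⟨_, fun q => ⟨main _ _ fun p => (hyp g q p).2.1, main _ _ fun p => (hyp g q p).2.2⟩⟩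
    choose U hU using ex
    have uniq : ∀ g h k, (∀ q, A (g * q) k = A q h) → U g h = k := by
      intro g h k hk
      refine inj _ _ fun q => ?_
      have h1 := (hU g h (g⁻¹ * q)).1
      have h2 := hk (g⁻¹ * q)
      rw [mul_inv_cancel_left] at h1 h2
      rw [h1, h2]
    have hmul : ∀ g g' h, U (g * g') h = U g (U g' h) := by
      intro g g' h
      refine uniq _ _ _ fun q => ?_
      rw [mul_assoc, (hU g _ _).1, (hU g' _ _).1]
    have hone : ∀ h, U 1 h = h := fun h => uniq _ _ _ fun q => by rw [one_mul]
    have hinner : ∀ g h k, inner ℂ (U g h) (U g k) = inner ℂ h k := by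
      intro g h k
      have h1 := (Equiv.mulLeft g).hasSum_iff.mpr (hS (U g h) (U g k))
      refine h1.unique ?_
      convert hS h k using 2 with q
      simp only [Function.comp_apply, Equiv.coe_mulLeft, (hU g _ _).1, (hU g _ _).2]
    let L : G → (H ≃ₗᵢ[ℂ] H) := fun g =>
      { toFun := U g
        invFun := U g⁻¹
        map_add' := fun x y => uniq _ _ _ fun q => by simp only [map_add, (hU g _ _).1]
        map_smul' := fun c x => uniq _ _ _ fun q => by
          simp only [map_smul, (hU g _ _).1, RingHom.id_apply]
        left_inv := fun x => by rw [← hmul, inv_mul_cancel, hone]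
        right_inv := fun x => by rw [← hmul, mul_inv_cancel, hone]
        norm_map' := fun x => by
          change ‖U g x‖ = ‖x‖
          rw [@norm_eq_sqrt_re_inner ℂ, @norm_eq_sqrt_re_inner ℂ _ _ _ _ x, hinner] }
    refine ⟨{ toFun := L
              map_one' := LinearIsometryEquiv.ext fun h => hone h
              map_mul' := fun g g' => LinearIsometryEquiv.ext fun h => hmul g g' h }, fun g => ?_⟩
    have h0 := fun h => hU g⁻¹ h g
    simp only [inv_mul_cancel] at h0
    exact ⟨fun h => (h0 h).1.symm, fun h => (h0 h).2.symm⟩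
end

section
/- Let V be a vector space over a field K and let T : V → V be an injective linear map. Then there exist subspaces V_b and V_s of V with V = V_b ⊕ V_s (i.e. V_b ∩ V_s = {0} and V_b + V_s = V) such that T(V_b) = V_b — so that T restricts to a linear bijection of V_b onto itself — and ⋂_{n=0}^∞ T^n(V_s) = {0}, i.e. the restriction of T to V_s is a shift. -/
/-- **Wold decomposition for vector spaces.** If `T : V → V` is an injective linear map on a
vector space `V` over a field `K`, then `V` decomposes as `V = V_b ⊕ V_s` where `V_b` satisfies
`T(V_b) = V_b` (so `T` restricts to a linear bijection of `V_b`) and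
`⋂_{n=0}^∞ T^n(V_s) = {0}` (the restriction of `T` to `V_s` is a shift). -/
theorem wold_decomposition_vector_space
    {K V : Type*} [Field K] [AddCommGroup V] [Module K V]
    (T : V →ₗ[K] V) (hT : Function.Injective T) :
    ∃ Vb Vs : Submodule K V,
      Vb ⊓ Vs = ⊥ ∧ Vb ⊔ Vs = ⊤ ∧
      Submodule.map T Vb = Vb ∧
      (⨅ n : ℕ, Submodule.map (T ^ n) Vs) = ⊥ := by
  obtain ⟨Vs, hVs⟩ := Submodule.exists_isCompl (⨅ n : ℕ, LinearMap.range (T ^ n))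
  refine ⟨_, Vs, hVs.inf_eq_bot, hVs.sup_eq_top, ?_, ?_⟩
  · ext x
    simp only [Submodule.mem_map, Submodule.mem_iInf, LinearMap.mem_range]
    constructor
    · rintro ⟨y, hy, rfl⟩ n
      obtain ⟨z, rfl⟩ := hy n
      refine ⟨T z, ?_⟩
      rw [← Module.End.mul_apply, ← Module.End.mul_apply, ← pow_succ, ← pow_succ']
    · intro h
      obtain ⟨y, hy⟩ := h 1
      rw [pow_one] at hy
      refine ⟨y, fun n => ?_, hy⟩
      obtain ⟨z, hz⟩ := h (n + 1)
      refine ⟨z, hT ?_⟩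
      rw [hy, ← hz, pow_succ', Module.End.mul_apply]
  · rw [eq_bot_iff, ← hVs.inf_eq_bot]
    refine le_inf (iInf_mono fun n => LinearMap.map_le_range) ?_
    refine (iInf_le _ 0).trans ?_
    rw [pow_zero, Module.End.one_eq_id, Submodule.map_id]
end

section
/- Let A be a unital C*-algebra containing elements u, v with u*u = v*v = uu* + vv* = 1 and u*v = v*u = 0. Then the map φ : A → M₂(A) defined by φ(x) := [[u* x u, u* x v], [v* x u, v* x v]] is a unital bijective *-homomorphism of A onto the C*-algebra M₂(A) — hence an isometric *-isomorphism — whose inverse is the map ψ : M₂(A) → A given by ψ([[a, b], [c, d]]) := u a u* + u b v* + v c u* + v d v*. -/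
/-- Let `A` be a unital C*-algebra containing elements `u, v` with
`u*u = v*v = uu* + vv* = 1` and `u*v = v*u = 0`.  Then the map
`φ(x) = [[u* x u, u* x v], [v* x u, v* x v]]` is a unital bijective ⋆-homomorphism
(hence, with respect to the unique C*-norm on `M₂(A)`, an isometric ⋆-isomorphism) of `A` onto
`M₂(A)`, with inverse `ψ([[a,b],[c,d]]) = u a u* + u b v* + v c u* + v d v*`. -/
theorem cstar_iso_matrix_two
    {A : Type*} [NormedRing A] [StarRing A] [CStarRing A]
    [NormedAlgebra ℂ A] [StarModule ℂ A] [CompleteSpace A]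
    (u v : A)
    (huu : star u * u = 1) (hvv : star v * v = 1)
    (hsum : u * star u + v * star v = 1)
    (huv : star u * v = 0) (hvu : star v * u = 0) :
    ∃ φ : A ≃⋆ₐ[ℂ] Matrix (Fin 2) (Fin 2) A,
      (∀ x : A,
        φ x = !![star u * x * u, star u * x * v; star v * x * u, star v * x * v]) ∧
      (∀ M : Matrix (Fin 2) (Fin 2) A,
        φ.symm M =
          u * M 0 0 * star u + u * M 0 1 * star v + v * M 1 0 * star u + v * M 1 1 * star v) := by
  have huu' : ∀ z, star u * (u * z) = z := fun z => by rw [← mul_assoc, huu, one_mul]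
  have hvv' : ∀ z, star v * (v * z) = z := fun z => by rw [← mul_assoc, hvv, one_mul]
  have huv' : ∀ z, star u * (v * z) = 0 := fun z => by rw [← mul_assoc, huv, zero_mul]
  have hvu' : ∀ z, star v * (u * z) = 0 := fun z => by rw [← mul_assoc, hvu, zero_mul]
  have key : ∀ a x y b : A, a * (x * y) * b =
      a * x * u * (star u * y * b) + a * x * v * (star v * y * b) := by
    intro a x y b
    calc a * (x * y) * b = a * x * (u * star u + v * star v) * y * b := by
          rw [hsum]; simp only [mul_one, mul_assoc]
      _ = _ := by simp only [mul_add, add_mul, mul_assoc]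
  refine ⟨
    { toFun := fun x =>
        !![star u * x * u, star u * x * v; star v * x * u, star v * x * v]
      invFun := fun M =>
        u * M 0 0 * star u + u * M 0 1 * star v + v * M 1 0 * star u + v * M 1 1 * star v
      left_inv := ?_
      right_inv := ?_
      map_mul' := ?_
      map_add' := ?_
      map_star' := ?_
      map_smul' := ?_ }, fun x => rfl, fun M => rfl⟩
  · intro x
    calc _ = (u * star u + v * star v) * x * (u * star u + v * star v) := by
          simp only [Matrix.of_apply, Matrix.cons_val', Matrix.cons_val_zero, Matrix.cons_val_one,
            Matrix.cons_val_fin_one, mul_add, add_mul, mul_assoc]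
          abel
      _ = x := by rw [hsum, one_mul, mul_one]
  · intro M
    ext i j
    fin_cases i <;> fin_cases j <;>
      simp [mul_add, add_mul, mul_assoc, huu, hvv, huv, hvu, huu', hvv', huv', hvu']
  · intro x y
    ext i j
    fin_cases i <;> fin_cases j <;> simp [Matrix.mul_apply, Fin.sum_univ_two, key]
  · intro x y
    ext i j
    fin_cases i <;> fin_cases j <;> simp [mul_add, add_mul]
  · intro x
    ext i j
    fin_cases i <;> fin_cases j <;> simp [Matrix.star_apply, mul_assoc]
  · intro c x
    ext i j
    fin_cases i <;> fin_cases j <;> simp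
end

section
/- Let A be a unital C*-algebra containing elements u, v with u*u = v*v = uu* + vv* = 1 and u*v = v*u = 0, and let n ≥ 2. Equip Aⁿ and A^{n−1} with the supremum norm ‖(b_i)_i‖ := max_i ‖b_i‖, and define the bounded linear operator T : Aⁿ → A^{n−1} by T(b_1, …, b_n) := ([v, b_i] + [u, b_{i−1}])_{i=2}^{n}. Then T has a linear right inverse R : A^{n−1} → Aⁿ (i.e. T∘R = id on A^{n−1}) satisfying ‖R b‖ ≤ 8·√2·n²·‖b‖ for all b ∈ A^{n−1}. -/
lemma cuntz_row_bound {A : Type*} [NormedRing A] [StarRing A] [CStarRing A] (u v : A)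
    (huu : star u * u = 1) (hvv : star v * v = 1)
    (huv : star u * v = 0) (hvu : star v * u = 0) (a b : A) :
    ‖a * star v + b * star u‖ ^ 2 ≤ ‖a‖ ^ 2 + ‖b‖ ^ 2 := by
  have h : (a * star v + b * star u) * star (a * star v + b * star u)
      = a * star a + b * star b := by
    simp only [star_add, star_mul, star_star]
    calc _ = a * (star v * v) * star a + a * (star v * u) * star b
          + b * (star u * v) * star a + b * (star u * u) * star b := by noncomm_ring
      _ = _ := by rw [huu, hvv, huv, hvu]; simp
  rw [pow_two, ← CStarRing.norm_self_mul_star, h]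
  refine (norm_add_le _ _).trans ?_
  rw [CStarRing.norm_self_mul_star, CStarRing.norm_self_mul_star, pow_two, pow_two]

lemma cuntz_col_bound {A : Type*} [NormedRing A] [StarRing A] [CStarRing A] (u v : A)
    (huu : star u * u = 1) (hvv : star v * v = 1)
    (huv : star u * v = 0) (hvu : star v * u = 0) (p q : A) :
    ‖v * p + u * q‖ ^ 2 ≤ ‖p‖ ^ 2 + ‖q‖ ^ 2 := by
  have := cuntz_row_bound u v huu hvv huv hvu (star p) (star q)
  rw [← norm_star]
  simpa using this

/-- Extension by zero of a tuple indexed by `1, …, m`, evaluated at `k`. -/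
noncomputable def extZero (A : Type*) [NormedRing A] [NormedAlgebra ℂ A] (m k : ℕ) :
    (Fin m → A) →ₗ[ℂ] A :=
  if h : 1 ≤ k ∧ k ≤ m then LinearMap.proj ⟨k - 1, by omega⟩ else 0

lemma extZero_norm {A : Type*} [NormedRing A] [NormedAlgebra ℂ A] (m k : ℕ) (x : Fin m → A) :
    ‖extZero A m k x‖ ≤ ‖x‖ := by
  unfold extZero
  split_ifs with h
  · exact norm_le_pi_norm x _
  · simp

lemma extZero_succ {A : Type*} [NormedRing A] [NormedAlgebra ℂ A] (m : ℕ) (j : Fin m)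
    (x : Fin m → A) : extZero A m (j.1 + 1) x = x j := by
  have h : 1 ≤ j.1 + 1 ∧ j.1 + 1 ≤ m := by have := j.2; omega
  simp [extZero, h]

/-- The weight. -/
noncomputable def wgt (n k : ℕ) : ℝ := Real.sqrt (2 * (n : ℝ) ^ 2 - (k : ℝ) ^ 2)

lemma wgt_sq {n k : ℕ} (h : k ≤ n) : wgt n k ^ 2 = 2 * (n : ℝ) ^ 2 - (k : ℝ) ^ 2 := by
  have : (k : ℝ) ≤ n := by exact_mod_cast h
  have h0 : (0 : ℝ) ≤ k := by positivity
  exact Real.sq_sqrt (by nlinarith)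

lemma wgt_ge {n k : ℕ} (h : k ≤ n) : (n : ℝ) ≤ wgt n k := by
  have : (k : ℝ) ≤ n := by exact_mod_cast h
  have h0 : (0 : ℝ) ≤ k := by positivity
  exact Real.le_sqrt_of_sq_le (by nlinarith)

/-- The weighted extension. -/
noncomputable def wext (A : Type*) [NormedRing A] [NormedAlgebra ℂ A] (n k : ℕ) :
    (Fin (n - 1) → A) →ₗ[ℂ] A := (wgt n k : ℂ) • extZero A (n - 1) k

lemma wext_norm_sq {A : Type*} [NormedRing A] [NormedAlgebra ℂ A] {n k : ℕ} (h : k ≤ n)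
    (x : Fin (n - 1) → A) :
    ‖wext A n k x‖ ^ 2 ≤ (2 * (n : ℝ) ^ 2 - (k : ℝ) ^ 2) * ‖x‖ ^ 2 := by
  rw [← wgt_sq h, ← mul_pow]
  have h0 : 0 ≤ wgt n k := Real.sqrt_nonneg _
  have h1 : ‖wext A n k x‖ = wgt n k * ‖extZero A (n - 1) k x‖ := by
    simp [wext, norm_smul, abs_of_nonneg h0]
  rw [h1]
  gcongr
  exact extZero_norm _ _ _

/-- One row. -/
noncomputable def rowMap {A : Type*} [NormedRing A] [StarRing A] [NormedAlgebra ℂ A] (u v : A)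
    (n k : ℕ) : (Fin (n - 1) → A) →ₗ[ℂ] A :=
  LinearMap.mulRight ℂ (star v) ∘ₗ wext A n k + LinearMap.mulRight ℂ (star u) ∘ₗ wext A n (k + 1)

lemma rowMap_apply {A : Type*} [NormedRing A] [StarRing A] [NormedAlgebra ℂ A] (u v : A)
    (n k : ℕ) (x : Fin (n - 1) → A) :
    rowMap u v n k x = wext A n k x * star v + wext A n (k + 1) x * star u := by
  simp [rowMap]

/-- The conjugated error operator. -/
noncomputable def errMap {A : Type*} [NormedRing A] [StarRing A] [NormedAlgebra ℂ A] (u v : A)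
    (n : ℕ) : (Fin (n - 1) → A) →ₗ[ℂ] (Fin (n - 1) → A) :=
  LinearMap.pi fun j => ((wgt n (j.1 + 1) : ℂ)⁻¹ * (2 : ℂ)⁻¹) •
    (LinearMap.mulLeft ℂ v ∘ₗ rowMap u v n (j.1 + 1) + LinearMap.mulLeft ℂ u ∘ₗ rowMap u v n j.1)

lemma errMap_apply {A : Type*} [NormedRing A] [StarRing A] [NormedAlgebra ℂ A] (u v : A)
    (n : ℕ) (x : Fin (n - 1) → A) (j : Fin (n - 1)) :
    errMap u v n x j = ((wgt n (j.1 + 1) : ℂ)⁻¹ * (2 : ℂ)⁻¹) •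
      (v * rowMap u v n (j.1 + 1) x + u * rowMap u v n j.1 x) := by
  simp [errMap]

lemma errMap_norm {A : Type*} [NormedRing A] [StarRing A] [CStarRing A] [NormedAlgebra ℂ A]
    (u v : A)
    (huu : star u * u = 1) (hvv : star v * v = 1)
    (huv : star u * v = 0) (hvu : star v * u = 0)
    (n : ℕ) (hn : 2 ≤ n) (x : Fin (n - 1) → A) :
    ‖errMap u v n x‖ ≤ (1 - 1 / (8 * (n : ℝ) ^ 2)) * ‖x‖ := by
  have hn' : (2 : ℝ) ≤ n := by exact_mod_cast hn
  have hinv : 1 / (8 * (n : ℝ) ^ 2) ≤ 1 := by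
    rw [div_le_one (by positivity)]; nlinarith
  have hθ : 0 ≤ 1 - 1 / (8 * (n : ℝ) ^ 2) := by linarith
  refine (pi_norm_le_iff_of_nonneg (by positivity)).2 fun j => ?_
  have hj : j.1 + 1 + 1 ≤ n := by have := j.2; omega
  have hj1 : j.1 + 1 ≤ n := by omega
  have hj0 : j.1 ≤ n := by omega
  have hw : 0 < wgt n (j.1 + 1) := lt_of_lt_of_le (by linarith) (wgt_ge hj1)
  have hws := wgt_sq hj1
  have e1 := cuntz_col_bound u v huu hvv huv hvu (rowMap u v n (j.1 + 1) x) (rowMap u v n j.1 x)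
  have e2 := cuntz_row_bound u v huu hvv huv hvu (wext A n (j.1 + 1) x) (wext A n (j.1 + 1 + 1) x)
  have e3 := cuntz_row_bound u v huu hvv huv hvu (wext A n j.1 x) (wext A n (j.1 + 1) x)
  rw [← rowMap_apply] at e2 e3
  have f0 := wext_norm_sq hj0 x
  have f1 := wext_norm_sq hj1 x
  have f2 := wext_norm_sq hj x
  set X := v * rowMap u v n (j.1 + 1) x + u * rowMap u v n j.1 x with hX
  set w := wgt n (j.1 + 1) with hwdef
  have g : ‖X‖ ^ 2 ≤ (4 * w ^ 2 - 2) * ‖x‖ ^ 2 := by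
    rw [hws]; push_cast at *; linarith
  have key : ‖X‖ ≤ 2 * w * ((1 - 1 / (8 * (n : ℝ) ^ 2)) * ‖x‖) := by
    refine (sq_le_sq₀ (norm_nonneg _) (by positivity)).1 ?_
    refine g.trans ?_
    have : 4 * w ^ 2 - 2 ≤ (2 * w * (1 - 1 / (8 * (n : ℝ) ^ 2))) ^ 2 := by
      have hw2 : w ^ 2 ≤ 2 * (n : ℝ) ^ 2 := by rw [hws]; nlinarith [sq_nonneg ((j.1 + 1 : ℕ) : ℝ)]
      have h3 : w ^ 2 * (1 / (8 * (n : ℝ) ^ 2)) ≤ 1 / 4 := by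
        rw [mul_one_div, div_le_iff₀ (by positivity)]; linarith
      nlinarith [sq_nonneg (w * (1 / (8 * (n : ℝ) ^ 2)))]
    calc _ ≤ (2 * w * (1 - 1 / (8 * (n : ℝ) ^ 2))) ^ 2 * ‖x‖ ^ 2 := by gcongr
      _ = _ := by ring
  rw [errMap_apply, norm_smul]
  have : ‖((w : ℂ)⁻¹ * (2 : ℂ)⁻¹)‖ = (2 * w)⁻¹ := by
    simp [abs_of_pos hw]
  rw [this, inv_mul_le_iff₀ (by positivity)]
  exact key


/-- Let `A` be a unital C*-algebra containing elements `u, v` with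
`u*u = v*v = uu* + vv* = 1` and `u*v = v*u = 0`, and let `n ≥ 2`.  Equip `Aⁿ` and `A^{n-1}` with
the supremum norm.  Then the bounded linear operator
`T : Aⁿ → A^{n-1}`, `T(b_1, …, b_n) = ([v, b_i] + [u, b_{i-1}])_{i=2}^n`, has a linear right
inverse `R` (`T ∘ R = id`) satisfying `‖R b‖ ≤ 8 √2 n² ‖b‖` for all `b`. -/
theorem commutator_operator_right_inverse
    {A : Type*} [NormedRing A] [StarRing A] [CStarRing A]
    [NormedAlgebra ℂ A] [StarModule ℂ A] [CompleteSpace A]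
    (u v : A)
    (huu : star u * u = 1) (hvv : star v * v = 1)
    (hsum : u * star u + v * star v = 1)
    (huv : star u * v = 0) (hvu : star v * u = 0)
    (n : ℕ) (hn : 2 ≤ n) :
    ∃ R : (Fin (n - 1) → A) →ₗ[ℂ] (Fin n → A),
      (∀ (b : Fin (n - 1) → A) (j : Fin (n - 1)),
        (v * R b ⟨j.1 + 1, by have := j.2; omega⟩ -
            R b ⟨j.1 + 1, by have := j.2; omega⟩ * v) +
        (u * R b ⟨j.1, by have := j.2; omega⟩ -
            R b ⟨j.1, by have := j.2; omega⟩ * u) = b j) ∧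
      (∀ b : Fin (n - 1) → A, ‖R b‖ ≤ 8 * Real.sqrt 2 * (n : ℝ) ^ 2 * ‖b‖) := by
  have hn' : (2 : ℝ) ≤ n := by exact_mod_cast hn
  have hinv : 1 / (8 * (n : ℝ) ^ 2) ≤ 1 := by
    rw [div_le_one (by positivity)]; nlinarith
  have hpos : 0 < 1 / (8 * (n : ℝ) ^ 2) := by positivity
  have hE := errMap_norm u v huu hvv huv hvu n hn
  let F : (Fin (n - 1) → A) →L[ℂ] (Fin (n - 1) → A) :=
    (errMap u v n).mkContinuous (1 - 1 / (8 * (n : ℝ) ^ 2)) hE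
  have hF : ‖F‖ < 1 :=
    lt_of_le_of_lt (LinearMap.mkContinuous_norm_le _ (by linarith) hE) (by linarith)
  let G : (Fin (n - 1) → A) →L[ℂ] (Fin (n - 1) → A) := ∑' i : ℕ, F ^ i
  have hG : (1 - F) * G = 1 := mul_neg_geom_series F hF
  have hGx : ∀ y, G y - errMap u v n (G y) = y := fun y => by
    have := congrArg (fun f : (Fin (n - 1) → A) →L[ℂ] (Fin (n - 1) → A) => f y) hG
    simpa [F] using this
  have hGn : ∀ y, ‖G y‖ ≤ 8 * (n : ℝ) ^ 2 * ‖y‖ := fun y => by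
    have h1 : ‖G y‖ ≤ ‖y‖ + ‖errMap u v n (G y)‖ := by
      calc ‖G y‖ = ‖y + errMap u v n (G y)‖ := by
            congr 1; exact sub_eq_iff_eq_add.1 (hGx y)
        _ ≤ _ := norm_add_le _ _
    have h2 := hE (G y)
    have h3 : 1 / (8 * (n : ℝ) ^ 2) * ‖G y‖ ≤ ‖y‖ := by linarith
    rw [one_div, inv_mul_le_iff₀ (by positivity)] at h3
    exact h3
  have hwpos : ∀ j : Fin (n - 1), (n : ℝ) ≤ wgt n (j.1 + 1) := fun j =>
    wgt_ge (by have := j.2; omega)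
  let D : (Fin (n - 1) → A) →ₗ[ℂ] (Fin (n - 1) → A) :=
    LinearMap.pi fun j => ((wgt n (j.1 + 1) : ℂ)⁻¹) • LinearMap.proj j
  have hDn : ∀ b, ‖D b‖ ≤ (n : ℝ)⁻¹ * ‖b‖ := fun b => by
    refine (pi_norm_le_iff_of_nonneg (by positivity)).2 fun j => ?_
    have hw := hwpos j
    have : ‖D b j‖ = (wgt n (j.1 + 1))⁻¹ * ‖b j‖ := by
      simp [D, norm_smul, abs_of_pos (lt_of_lt_of_le (by linarith : (0 : ℝ) < n) hw)]
    rw [this]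
    have := norm_le_pi_norm b j
    gcongr
  let R : (Fin (n - 1) → A) →ₗ[ℂ] (Fin n → A) :=
    (LinearMap.pi fun i : Fin n => (-(2 : ℂ)⁻¹) • rowMap u v n i.1) ∘ₗ G.toLinearMap ∘ₗ D
  have hR : ∀ b i, R b i = (-(2 : ℂ)⁻¹) • rowMap u v n i.1 (G (D b)) := fun b i => by
    simp [R]
  refine ⟨R, fun b j => ?_, fun b => ?_⟩
  · rw [hR, hR]
    have h1 := congrFun (hGx (D b)) j
    have hw0 : (wgt n (j.1 + 1) : ℂ) ≠ 0 := by
      have := hwpos j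
      exact_mod_cast (by linarith : (0 : ℝ) < wgt n (j.1 + 1)).ne'
    rw [Pi.sub_apply, errMap_apply] at h1
    have hD : D b j = ((wgt n (j.1 + 1) : ℂ)⁻¹) • b j := by simp [D]
    rw [hD] at h1
    generalize G (D b) = x at h1 ⊢
    have hx : wext A n (j.1 + 1) x = (wgt n (j.1 + 1) : ℂ) • x j := by
      simp [wext, extZero_succ]
    have h2 := congrArg (fun y => (wgt n (j.1 + 1) : ℂ) • y) h1
    simp only [smul_sub, smul_smul, ← mul_assoc, mul_inv_cancel₀ hw0, one_smul, one_mul] at h2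
    rw [← hx] at h2
    have r1 : rowMap u v n (j.1 + 1) x * v = wext A n (j.1 + 1) x := by
      rw [rowMap_apply, add_mul, mul_assoc, mul_assoc, hvv, huv]; simp
    have r2 : rowMap u v n j.1 x * u = wext A n (j.1 + 1) x := by
      rw [rowMap_apply, add_mul, mul_assoc, mul_assoc, huu, hvu]; simp
    rw [← h2]
    simp only [mul_smul_comm, smul_mul_assoc, r1, r2]
    module
  · refine (pi_norm_le_iff_of_nonneg (by positivity)).2 fun i => ?_
    have hx : ‖G (D b)‖ ≤ 8 * (n : ℝ) * ‖b‖ := by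
      calc _ ≤ 8 * (n : ℝ) ^ 2 * ‖D b‖ := hGn _
        _ ≤ 8 * (n : ℝ) ^ 2 * ((n : ℝ)⁻¹ * ‖b‖) := by gcongr; exact hDn b
        _ = _ := by field_simp
    rw [hR, norm_smul]
    generalize G (D b) = x at hx ⊢
    have e := cuntz_row_bound u v huu hvv huv hvu (wext A n i.1 x) (wext A n (i.1 + 1) x)
    rw [← rowMap_apply] at e
    have f0 := wext_norm_sq (A := A) i.2.le x
    have f1 := wext_norm_sq (A := A) (Nat.succ_le_of_lt i.2) x
    have h4 : ‖rowMap u v n i.1 x‖ ≤ 2 * n * ‖x‖ := by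
      refine (sq_le_sq₀ (norm_nonneg _) (by positivity)).1 ?_
      have s0 : 0 ≤ (i.1 : ℝ) ^ 2 * ‖x‖ ^ 2 := by positivity
      have s1 : 0 ≤ ((i.1.succ : ℕ) : ℝ) ^ 2 * ‖x‖ ^ 2 := by positivity
      simp only [Nat.succ_eq_add_one] at *
      nlinarith
    have h5 : ‖(-(2 : ℂ)⁻¹)‖ = 2⁻¹ := by simp
    rw [h5]
    have h6 : (1 : ℝ) ≤ Real.sqrt 2 := Real.one_le_sqrt.2 (by norm_num)
    calc _ ≤ (2 : ℝ)⁻¹ * (2 * n * ‖x‖) := by gcongr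
      _ = n * ‖x‖ := by ring
      _ ≤ n * (8 * (n : ℝ) * ‖b‖) := by gcongr
      _ = 8 * 1 * (n : ℝ) ^ 2 * ‖b‖ := by ring
      _ ≤ _ := by gcongr
end

section
/- Let A be a unital C*-algebra containing elements u, v with u*u = v*v = uu* + vv* = 1 and u*v = v*u = 0. Then there exists a constant C > 0 such that for every real number ε with 0 < ε ≤ 1/2 there exist elements d, x ∈ A satisfying ‖[d, x] − 1‖ ≤ ε and ‖d‖·‖x‖ ≤ C·(log(1/ε))⁵. -/
namespace CCI

section basic
variable {A : Type*} [NormedRing A] [StarRing A] [CStarRing A]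

lemma norm_one_le' : ‖(1 : A)‖ ≤ 1 := by
  have h : ‖star (1:A) * 1‖ = ‖(1:A)‖ * ‖(1:A)‖ := CStarRing.norm_star_mul_self
  rw [star_one, one_mul] at h
  nlinarith [norm_nonneg (1:A)]

lemma norm_le_one_of_isom {x : A} (h : star x * x = 1) : ‖x‖ ≤ 1 := by
  have h1 : ‖star x * x‖ = ‖x‖ * ‖x‖ := CStarRing.norm_star_mul_self
  rw [h] at h1
  have := norm_one_le' (A := A)
  nlinarith [norm_nonneg x]

lemma norm_col {u v : A} (huu : star u * u = 1) (hvv : star v * v = 1)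
    (huv : star u * v = 0) (hvu : star v * u = 0) (p q : A) :
    ‖v * p + u * q‖ ^ 2 ≤ ‖p‖ ^ 2 + ‖q‖ ^ 2 := by
  have h1 : ‖star (v * p + u * q) * (v * p + u * q)‖ = _ := CStarRing.norm_star_mul_self
  have h2 : star (v * p + u * q) * (v * p + u * q) = star p * p + star q * q := by
    have : star (v * p + u * q) * (v * p + u * q) = star p * (star v * v) * p
        + star p * (star v * u) * q + star q * (star u * v) * p + star q * (star u * u) * q := by
      simp only [star_add, star_mul]; noncomm_ring
    rw [this, huu, hvv, huv, hvu]; simp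
  rw [h2] at h1
  have h3 := norm_add_le (star p * p) (star q * q)
  rw [CStarRing.norm_star_mul_self, CStarRing.norm_star_mul_self] at h3
  nlinarith

lemma norm_row {u v : A} (huu : star u * u = 1) (hvv : star v * v = 1)
    (huv : star u * v = 0) (hvu : star v * u = 0) (p q : A) :
    ‖p * star v + q * star u‖ ^ 2 ≤ ‖p‖ ^ 2 + ‖q‖ ^ 2 := by
  have h := norm_col huu hvv huv hvu (star p) (star q)
  rw [← norm_star (v * star p + u * star q)] at h
  simpa using h

lemma norm_frob {u v : A} (huu : star u * u = 1) (hvv : star v * v = 1)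
    (huv : star u * v = 0) (hvu : star v * u = 0) (p q r t : A) :
    ‖v * p * star v + v * q * star u + u * r * star v + u * t * star u‖ ^ 2
      ≤ ‖p‖ ^ 2 + ‖q‖ ^ 2 + ‖r‖ ^ 2 + ‖t‖ ^ 2 := by
  have h := norm_col huu hvv huv hvu (p * star v + q * star u) (r * star v + t * star u)
  have h1 := norm_row huu hvv huv hvu p q
  have h2 := norm_row huu hvv huv hvu r t
  have e : v * (p * star v + q * star u) + u * (r * star v + t * star u)
    = v * p * star v + v * q * star u + u * r * star v + u * t * star u := by noncomm_ring
  rw [e] at h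
  linarith

lemma exists_frame {u v : A} (huu : star u * u = 1) (hvv : star v * v = 1)
    (hsum : u * star u + v * star v = 1)
    (huv : star u * v = 0) (hvu : star v * u = 0) (m : ℕ) :
    ∃ s : ℕ → A, (∀ i j, i ≤ m → j ≤ m → star (s i) * s j = if i = j then 1 else 0) ∧
      ∑ i ∈ Finset.range (m + 1), s i * star (s i) = 1 := by
  induction m with
  | zero => exact ⟨fun _ => 1, by intro i j hi hj; simp [show i = j by omega], by simp⟩
  | succ m ih =>
    obtain ⟨s, h1, h2⟩ := ih
    refine ⟨fun i => Nat.casesOn i u (fun k => v * s k), ?_, ?_⟩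
    · intro i j hi hj
      rcases i with _ | i <;> rcases j with _ | j
      · simpa using huu
      · simp [← mul_assoc, huv]
      · simp [mul_assoc, hvu]
      · have := h1 i j (by omega) (by omega)
        simp only [star_mul]
        rw [show star (s i) * star v * (v * s j) = star (s i) * (star v * v) * s j by noncomm_ring,
          hvv, mul_one, this]
        simp
    · rw [Finset.sum_range_succ']
      simp only [star_mul]
      have : ∀ k, v * s k * (star (s k) * star v) = v * (s k * star (s k)) * star v := by
        intro k; noncomm_ring
      simp only [this]
      rw [← Finset.sum_mul, ← Finset.mul_sum, h2, mul_one, add_comm]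
      exact hsum

/-- operator sending `s i` to `f i` -/
def T (s : ℕ → A) (m : ℕ) (f : ℕ → A) : A := ∑ i ∈ Finset.range (m + 1), f i * star (s i)

variable {s : ℕ → A} {m : ℕ}

lemma T_apply (h1 : ∀ i j, i ≤ m → j ≤ m → star (s i) * s j = if i = j then 1 else 0)
    (f : ℕ → A) {j : ℕ} (hj : j ≤ m) : T s m f * s j = f j := by
  unfold T
  rw [Finset.sum_mul, Finset.sum_eq_single j]
  · rw [mul_assoc, h1 j j hj hj]; simp
  · intro i hi hij
    rw [mul_assoc, h1 i j (by simpa [Nat.lt_succ_iff] using hi) hj]; simp [hij]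
  · intro h; simp at h; omega

lemma eq_T (h2 : ∑ i ∈ Finset.range (m + 1), s i * star (s i) = 1) (Y : A) :
    Y = T s m (fun i => Y * s i) := by
  unfold T
  simp only [mul_assoc]
  rw [← Finset.mul_sum, h2, mul_one]

lemma norm_T_le (h2 : ∑ i ∈ Finset.range (m + 1), s i * star (s i) = 1)
    (f : ℕ → A) (hf : ∀ i j, i ≤ m → j ≤ m → star (f i) * f j = if i = j then 1 else 0) :
    ‖T s m f‖ ≤ 1 := by
  apply norm_le_one_of_isom
  conv_lhs => rw [T]
  rw [star_sum, Finset.sum_mul, ← h2]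
  apply Finset.sum_congr rfl
  intro i hi
  have hi' : i ≤ m := by simpa [Nat.lt_succ_iff] using hi
  rw [star_mul, star_star, mul_assoc, Finset.mul_sum]
  congr 1
  rw [Finset.sum_eq_single i]
  · rw [← mul_assoc, hf i i hi' hi']; simp
  · intro j hj hij
    rw [← mul_assoc, hf i j hi' (by simpa [Nat.lt_succ_iff] using hj)]; simp [hij.symm]
  · intro h; exact absurd hi h

end basic

lemma exists_num : ∃ C : ℝ, 0 < C ∧ ∀ ε : ℝ, 0 < ε → ε ≤ 1 / 2 →
    ∃ m : ℕ, 1 ≤ m ∧ 81920 * ((m:ℝ) + 1) ^ 5 / 2 ^ m ≤ ε ∧ (m:ℝ) + 1 ≤ C * Real.log (1 / ε) := by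
  have he : Real.exp (1/4) < 2 := by
    have h1 : Real.exp (1/4) ^ 4 = Real.exp 1 := by rw [← Real.exp_nat_mul]; norm_num
    have h2 := Real.exp_one_lt_d9
    by_contra h
    push Not at h
    have : (2:ℝ)^4 ≤ Real.exp (1/4) ^ 4 := by gcongr
    linarith
  have ht := tendsto_pow_const_mul_const_pow_of_lt_one 5
    (r := Real.exp (1/4) / 2) (by positivity) (by linarith)
  have ht2 := (Filter.tendsto_add_atTop_iff_nat 1).2 ht
  have hc : (0:ℝ) < Real.exp (1/4) / 2 / 81920 := by positivity
  obtain ⟨m0, hm0⟩ := Filter.eventually_atTop.1 (ht2.eventually (gt_mem_nhds hc))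
  refine ⟨2 * m0 + 10, by positivity, ?_⟩
  intro ε h0 h1
  set L := Real.log (1 / ε) with hL
  have hL2 : 1/2 ≤ L := by
    have : Real.log 2 ≤ L := Real.log_le_log (by norm_num) (by rw [le_div_iff₀ h0]; linarith)
    linarith [Real.log_two_gt_d9]
  refine ⟨m0 + 1 + ⌈4 * L⌉₊, by omega, ?_, ?_⟩
  · set m := m0 + 1 + ⌈4 * L⌉₊ with hm
    have h3 := (hm0 m (by omega)).le
    have h4 : 4 * L ≤ m := by
      have := Nat.le_ceil (4 * L)
      rw [hm]; push_cast; linarith [(Nat.cast_nonneg m0 : (0:ℝ) ≤ m0)]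
    push_cast at h3
    rw [pow_succ (Real.exp (1/4) / 2) m, div_pow, ← Real.exp_nat_mul] at h3
    have h5 : 81920 * ((m:ℝ) + 1) ^ 5 / 2 ^ m * Real.exp (m * (1/4)) ≤ 1 := by
      have hp : 0 < Real.exp (1/4) / 2 := by positivity
      have : (((m:ℝ) + 1) ^ 5 * (Real.exp (m * (1/4)) / 2 ^ m)) * (Real.exp (1/4) / 2) ≤
        (1/81920) * (Real.exp (1/4) / 2) := by linarith
      have := le_of_mul_le_mul_right this hp
      calc _ = 81920 * (((m:ℝ) + 1) ^ 5 * (Real.exp (m * (1/4)) / 2 ^ m)) := by ring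
        _ ≤ 1 := by linarith
    have h6 : 1 / ε ≤ Real.exp (m * (1/4)) := by
      rw [← Real.exp_log (show 0 < 1 / ε by positivity)]
      apply Real.exp_le_exp.2; linarith
    have h7 : 81920 * ((m:ℝ) + 1) ^ 5 / 2 ^ m * (1 / ε) ≤ 1 := le_trans (by gcongr) h5
    rw [mul_one_div, div_le_iff₀ h0] at h7
    linarith
  · have := (Nat.ceil_lt_add_one (show 0 ≤ 4 * L by linarith)).le
    push_cast
    nlinarith [(Nat.cast_nonneg m0 : (0:ℝ) ≤ m0)]

section solve
variable {A : Type*} [NormedRing A] [StarRing A] [CStarRing A] [NormedAlgebra ℝ A]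

/-- the coefficients -/
noncomputable def bb (u v : A) (a : ℕ → A) (i : ℕ) : A :=
  (-(1/2) : ℝ) • (a i * star v + a (i + 1) * star u)

/-- the averaging operator -/
noncomputable def EE (u v : A) (a : ℕ → A) (i : ℕ) : A :=
  (1/2 : ℝ) • (v * a (i + 1) * star v + v * a (i + 2) * star u + u * a i * star v
    + u * a (i + 1) * star u)

/-- the perturbation -/
noncomputable def FF (u : A) (K : ℝ) (m : ℕ) (b : ℕ → A) (i : ℕ) : A :=
  K⁻¹ • ((if i + 1 = m then (m + 1 : ℝ) else 0) • (1 : A) - ((i : ℝ) + 2) • b (i + 2))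
    - b (i + 1) * (u * b m - b m * u)

/-- the fixed point map -/
noncomputable def Phi (u v : A) (K : ℝ) (m : ℕ) (a : ℕ → A) : ℕ → A
  | 0 => 0
  | i + 1 => if i < m then EE u v a i + FF u K m (bb u v a) i else 0

/-- weights -/
noncomputable def ww (m : ℕ) (i : ℕ) : ℝ := √(2 * ((m:ℝ) + 1) ^ 2 - (i:ℝ) ^ 2) / ((m:ℝ) + 1)

lemma ww_nonneg (m i : ℕ) : 0 ≤ ww m i := by unfold ww; positivity

lemma ww_sq (m i : ℕ) (hi : i ≤ m + 1) :
    ww m i ^ 2 = 2 - (i:ℝ) ^ 2 / ((m:ℝ) + 1) ^ 2 := by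
  have h : (i:ℝ) ≤ m + 1 := by exact_mod_cast hi
  have h0 : (0:ℝ) ≤ i := by positivity
  unfold ww
  rw [div_pow, Real.sq_sqrt (by nlinarith)]
  field_simp

lemma ww_le (m i : ℕ) : ww m i ≤ 2 := by
  unfold ww
  rw [div_le_iff₀ (by positivity)]
  apply Real.sqrt_le_iff.2
  constructor
  · positivity
  · nlinarith [sq_nonneg (i:ℝ)]

lemma one_le_ww (m i : ℕ) (hi : i ≤ m + 1) : 1 ≤ ww m i := by
  have h : (i:ℝ) ≤ m + 1 := by exact_mod_cast hi
  have h2 := ww_sq m i hi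
  have : (i:ℝ) ^ 2 / ((m:ℝ) + 1) ^ 2 ≤ 1 := by
    rw [div_le_one (by positivity)]; gcongr
  nlinarith [ww_nonneg m i]

variable {u v : A}

lemma EE_bound (huu : star u * u = 1) (hvv : star v * v = 1) (huv : star u * v = 0) (hvu : star v * u = 0)
    (m : ℕ) (a : ℕ → A) (δ : ℝ) (hδ : 0 ≤ δ) (ha : ∀ i, ‖a i‖ ≤ ww m i * δ)
    (i : ℕ) (hi : i < m) :
    ‖EE u v a i‖ ≤ ww m (i + 1) * (1 - 1 / (8 * ((m:ℝ) + 1) ^ 2)) * δ := by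
  have h := norm_frob huu hvv huv hvu (a (i+1)) (a (i+2)) (a i) (a (i+1))
  have hn : (1:ℝ) ≤ ((m:ℝ) + 1) ^ 2 := by
    have : (0:ℝ) ≤ m := by positivity
    nlinarith
  set y := v * a (i + 1) * star v + v * a (i + 2) * star u + u * a i * star v
    + u * a (i + 1) * star u with hy
  have hE : ‖EE u v a i‖ = 1/2 * ‖y‖ := by
    unfold EE; rw [norm_smul, ← hy]; norm_num
  have sq : ∀ j, ‖a j‖ ^ 2 ≤ ww m j ^ 2 * δ ^ 2 := by
    intro j; rw [← mul_pow]; gcongr; exact ha j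
  have e0 := ww_sq m i (by omega)
  have e1 := ww_sq m (i+1) (by omega)
  have e2 := ww_sq m (i+2) (by omega)
  have hw : ww m (i+1) ^ 2 ≤ 2 := by rw [e1]; simp; positivity
  push_cast at e1 e2
  set N := ((m:ℝ) + 1) ^ 2 with hN
  have hN0 : 0 < N := by linarith
  have hs : 2 * ww m (i+1) ^ 2 + ww m i ^ 2 + ww m (i+2) ^ 2 = 4 * ww m (i+1) ^ 2 - 2 / N := by
    rw [e0, e1, e2]; field_simp; ring
  rw [hE]
  apply abs_le_of_sq_le_sq' _ _ |>.2
  · have k1 : ‖y‖ ^ 2 ≤ (4 * ww m (i+1) ^ 2 - 2 / N) * δ ^ 2 := by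
      rw [← hs]; nlinarith [sq i, sq (i+1), sq (i+2)]
    have k2 : 4 * ww m (i+1) ^ 2 - 2 / N ≤ 4 * (ww m (i+1) ^ 2 * (1 - 1 / (8 * N)) ^ 2) := by
      have : (1 - 1 / (8 * N)) ^ 2 = 1 - (1 / N) / 4 + (1/N)^2/64 := by field_simp; ring
      rw [this]
      have e : 2 / N = 2 * (1 / N) := by ring
      rw [e]
      have hp : 0 < 1 / N := by positivity
      nlinarith [mul_le_mul_of_nonneg_right hw hp.le, mul_nonneg (sq_nonneg (ww m (i+1))) (sq_nonneg (1/N))]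
    have k3 := mul_le_mul_of_nonneg_right k2 (sq_nonneg δ)
    nlinarith
  · have : 0 ≤ 1 - 1 / (8 * N) := by
      rw [sub_nonneg, div_le_one (by positivity)]; linarith
    have := ww_nonneg m (i+1)
    positivity

lemma bb_bound (huu : star u * u = 1) (hvv : star v * v = 1)
    (m : ℕ) (a : ℕ → A) (δ : ℝ) (hδ : 0 ≤ δ) (ha : ∀ i, ‖a i‖ ≤ ww m i * δ)
    (i : ℕ) : ‖bb u v a i‖ ≤ 2 * δ := by
  have hu := norm_le_one_of_isom huu
  have hv := norm_le_one_of_isom hvv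
  have hb : ∀ j, ‖a j‖ ≤ 2 * δ := fun j => (ha j).trans (by gcongr; exact ww_le m j)
  unfold bb
  rw [norm_smul]
  have h1 : ‖a i * star v‖ ≤ 2 * δ * 1 :=
    (norm_mul_le _ _).trans (by rw [norm_star]; gcongr; exact hb i)
  have h2 : ‖a (i+1) * star u‖ ≤ 2 * δ * 1 :=
    (norm_mul_le _ _).trans (by rw [norm_star]; gcongr; exact hb (i+1))
  have h3 := norm_add_le (a i * star v) (a (i+1) * star u)
  norm_num
  linarith

lemma bb_sub (a a' : ℕ → A) (i : ℕ) :
    bb u v a i - bb u v a' i = bb u v (fun j => a j - a' j) i := by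
  unfold bb; simp only [sub_mul]; module

lemma EE_sub (a a' : ℕ → A) (i : ℕ) :
    EE u v a i - EE u v a' i = EE u v (fun j => a j - a' j) i := by
  unfold EE; simp only [sub_mul, mul_sub]; module

lemma norm_comm_le (huu : star u * u = 1)
    (x : A) : ‖u * x - x * u‖ ≤ 2 * ‖x‖ := by
  have hu := norm_le_one_of_isom huu
  have h1 := norm_sub_le (u * x) (x * u)
  have h2 : ‖u * x‖ ≤ 1 * ‖x‖ := (norm_mul_le _ _).trans (by gcongr)
  have h3 : ‖x * u‖ ≤ ‖x‖ * 1 := (norm_mul_le _ _).trans (by gcongr)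
  linarith

lemma Phi_lip (huu : star u * u = 1) (hvv : star v * v = 1) (huv : star u * v = 0) (hvu : star v * u = 0)
    (m : ℕ) (K R : ℝ) (hK : K = 16384 * ((m:ℝ) + 1) ^ 5)
    (hR : R = 1 / (256 * ((m:ℝ) + 1) ^ 2))
    (a a' : ℕ → A) (δ : ℝ) (hδ : 0 ≤ δ) (ha : ∀ i, ‖a i‖ ≤ ww m i * R)
    (ha' : ∀ i, ‖a' i‖ ≤ ww m i * R) (hd : ∀ i, ‖a i - a' i‖ ≤ ww m i * δ) (i : ℕ) :
    ‖Phi u v K m a i - Phi u v K m a' i‖ ≤ ww m i * ((1 - 1 / (32 * ((m:ℝ) + 1) ^ 2)) * δ) := by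
  have hm0 : (0:ℝ) ≤ m := by positivity
  set n := (m:ℝ) + 1 with hn
  have hn1 : 1 ≤ n := by linarith
  have hn2 : 1 ≤ n ^ 2 := by nlinarith
  have hR0 : 0 ≤ R := by rw [hR]; positivity
  have hK0 : 0 < K := by rw [hK]; positivity
  have hL : 0 ≤ 1 - 1 / (32 * n ^ 2) := by
    rw [sub_nonneg, div_le_one (by positivity)]; linarith
  rcases i with _ | i
  · simp only [Phi, sub_self, norm_zero]
    have := ww_nonneg m 0
    positivity
  simp only [Phi]
  split_ifs with hi
  swap
  · simp only [sub_self, norm_zero]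
    have := ww_nonneg m (i+1)
    positivity
  have hE := EE_bound huu hvv huv hvu m _ δ hδ hd i hi
  rw [← EE_sub, ← hn] at hE
  set b := bb u v a with hb
  set b' := bb u v a' with hb'
  have B : ∀ j, ‖b j‖ ≤ 2 * R := bb_bound huu hvv m a R hR0 ha
  have B' : ∀ j, ‖b' j‖ ≤ 2 * R := bb_bound huu hvv m a' R hR0 ha'
  have Bd : ∀ j, ‖b j - b' j‖ ≤ 2 * δ := by
    intro j; rw [hb, hb', bb_sub]; exact bb_bound huu hvv m _ δ hδ hd j
  have hF : FF u K m b i - FF u K m b' i = -(K⁻¹ * ((i:ℝ) + 2)) • (b (i+2) - b' (i+2))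
      - ((b (i+1) - b' (i+1)) * (u * b m - b m * u)
        + b' (i+1) * (u * (b m - b' m) - (b m - b' m) * u)) := by
    unfold FF
    have : ((b (i+1) - b' (i+1)) * (u * b m - b m * u)
        + b' (i+1) * (u * (b m - b' m) - (b m - b' m) * u))
        = b (i+1) * (u * b m - b m * u) - b' (i+1) * (u * b' m - b' m * u) := by noncomm_ring
    rw [this]; module
  have f1 : ‖-(K⁻¹ * ((i:ℝ) + 2)) • (b (i+2) - b' (i+2))‖ ≤ (K⁻¹ * n) * (2 * δ) := by
    rw [norm_smul, norm_neg, Real.norm_of_nonneg (by positivity)]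
    have : (i:ℝ) + 2 ≤ n := by
      have : (i:ℝ) + 1 ≤ m := by exact_mod_cast hi
      linarith
    gcongr
    exact Bd _
  have f2 : ‖(b (i+1) - b' (i+1)) * (u * b m - b m * u)‖ ≤ (2 * δ) * (2 * (2 * R)) :=
    (norm_mul_le _ _).trans (by
      gcongr
      · exact Bd _
      · exact (norm_comm_le huu _).trans (by gcongr; exact B m))
  have f3 : ‖b' (i+1) * (u * (b m - b' m) - (b m - b' m) * u)‖ ≤ (2 * R) * (2 * (2 * δ)) :=
    (norm_mul_le _ _).trans (by
      gcongr
      · exact B' _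
      · exact (norm_comm_le huu _).trans (by gcongr; exact Bd m))
  have hFn : ‖FF u K m b i - FF u K m b' i‖ ≤
      (K⁻¹ * n) * (2 * δ) + ((2 * δ) * (2 * (2 * R)) + (2 * R) * (2 * (2 * δ))) := by
    rw [hF]
    exact (norm_sub_le _ _).trans (add_le_add f1 ((norm_add_le _ _).trans (add_le_add f2 f3)))
  have hKn : K⁻¹ * n ≤ 1 / (64 * n ^ 2) := by
    rw [hK, inv_mul_eq_div, div_le_div_iff₀ (by positivity) (by positivity)]
    have : n ^ 3 ≤ n ^ 5 := pow_le_pow_right₀ hn1 (by norm_num)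
    nlinarith [this]
  have hw := one_le_ww m (i+1) (by omega)
  have tot : EE u v a i + FF u K m b i - (EE u v a' i + FF u K m b' i)
    = (EE u v a i - EE u v a' i) + (FF u K m b i - FF u K m b' i) := by abel
  rw [tot]
  refine (norm_add_le _ _).trans ((add_le_add hE hFn).trans ?_)
  have hRR : R = (1 / n ^ 2) / 256 := by rw [hR]; field_simp
  have hKn' : K⁻¹ * n ≤ (1 / n^2) / 64 := hKn.trans (le_of_eq (by field_simp))
  have e8 : 1 / (8 * n ^ 2) = (1 / n^2) / 8 := by field_simp
  have e32 : 1 / (32 * n ^ 2) = (1 / n^2) / 32 := by field_simp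
  rw [e8, e32, hRR]
  set q := 1 / n ^ 2
  have hq : 0 ≤ q := by positivity
  have g1 : (K⁻¹ * n) * (2 * δ) ≤ q / 64 * (2 * δ) := by gcongr
  have g2 : q * δ ≤ ww m (i+1) * (q * δ) := le_mul_of_one_le_left (by positivity) hw
  nlinarith

lemma exists_solution (huu : star u * u = 1) (hvv : star v * v = 1) (huv : star u * v = 0) (hvu : star v * u = 0)
    [CompleteSpace A] (m : ℕ) (K : ℝ) (hK : K = 16384 * ((m:ℝ) + 1) ^ 5) :
    ∃ b : ℕ → A, (∀ i, ‖b i‖ ≤ 1 / (128 * ((m:ℝ) + 1) ^ 2)) ∧ b (m + 1) = 0 ∧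
      ∀ i, i < m → K • ((v * b (i+1) - b (i+1) * v) + (u * b i - b i * u)
        + b (i+1) * (u * b m - b m * u)) + ((i:ℝ) + 2) • b (i + 2)
        = (if i + 1 = m then (m + 1 : ℝ) else 0) • (1 : A) := by
  have hm0 : (0:ℝ) ≤ m := by positivity
  obtain ⟨R, hR⟩ : ∃ R : ℝ, R = 1 / (256 * ((m:ℝ) + 1) ^ 2) := ⟨_, rfl⟩
  obtain ⟨L, hL⟩ : ∃ L : ℝ, L = 1 - 1 / (32 * ((m:ℝ) + 1) ^ 2) := ⟨_, rfl⟩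
  have hlip := Phi_lip huu hvv huv hvu m K R hK hR
  rw [← hL] at hlip
  set n := (m:ℝ) + 1 with hn
  have hn1 : 1 ≤ n := by linarith
  have hn2 : 1 ≤ n ^ 2 := by nlinarith
  have hR0 : 0 ≤ R := by rw [hR]; positivity
  have hK0 : 0 < K := by rw [hK]; positivity
  have hL0 : 0 ≤ L := by
    rw [hL, sub_nonneg, div_le_one (by positivity)]; linarith
  have hL1 : L < 1 := by
    rw [hL]; have : 0 < 1 / (32 * n ^ 2) := by positivity
    linarith
  have hP0 : ∀ i, ‖Phi u v K m (fun _ => 0) i‖ ≤ ww m i * ((1 - L) * R) := by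
    intro i
    have hnn : 0 ≤ (1 - L) * R := mul_nonneg (by linarith) hR0
    rcases i with _ | i
    · simp only [Phi, norm_zero]; exact mul_nonneg (ww_nonneg _ _) hnn
    simp only [Phi]
    split_ifs with hi
    swap
    · simp only [norm_zero]; exact mul_nonneg (ww_nonneg _ _) hnn
    have hw := one_le_ww m (i+1) (by omega)
    have h1 : EE u v (fun _ => (0:A)) i + FF u K m (bb u v (fun _ => (0:A))) i
        = (K⁻¹ * (if i + 1 = m then n else 0)) • (1:A) := by
      simp [EE, FF, bb, smul_smul, hn]
    rw [h1, norm_smul]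
    have h2 : ‖K⁻¹ * (if i + 1 = m then n else 0)‖ ≤ K⁻¹ * n := by
      split_ifs
      · rw [Real.norm_of_nonneg (by positivity)]
      · simp; positivity
    have h3 : K⁻¹ * n ≤ (1 - L) * R := by
      rw [hL, hR, hK, inv_mul_eq_div, sub_sub_cancel, div_mul_div_comm,
        div_le_div_iff₀ (by positivity) (by positivity)]
      ring_nf
      nlinarith [show 0 < n ^ 5 by positivity]
    calc _ ≤ (K⁻¹ * n) * 1 := by gcongr; exact norm_one_le'
      _ ≤ (1 - L) * R := by linarith
      _ ≤ _ := le_mul_of_one_le_left hnn hw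
  let seq : ℕ → ℕ → A := fun k => (Phi u v K m)^[k] (fun _ => 0)
  have hseq : ∀ k, seq (k+1) = Phi u v K m (seq k) := fun k => Function.iterate_succ_apply' _ _ _
  have hball : ∀ k i, ‖seq k i‖ ≤ ww m i * R := by
    intro k
    induction k with
    | zero => intro i; simp only [seq, Function.iterate_zero, id, norm_zero]
              exact mul_nonneg (ww_nonneg _ _) hR0
    | succ k ih =>
      intro i
      rw [hseq]
      have h0 : ∀ i, ‖(fun _ => (0:A)) i‖ ≤ ww m i * R := by
        intro i; simp only [norm_zero]; exact mul_nonneg (ww_nonneg _ _) hR0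
      have h1 := hlip (seq k) (fun _ => 0) R hR0 ih h0 (by intro i; simpa using ih i) i
      have h2 := norm_add_le (Phi u v K m (seq k) i - Phi u v K m (fun _ => 0) i)
        (Phi u v K m (fun _ => 0) i)
      rw [sub_add_cancel] at h2
      have h3 := hP0 i
      nlinarith
  have hstep : ∀ k i, ‖seq (k+1) i - seq k i‖ ≤ ww m i * (L ^ k * R) := by
    intro k
    induction k with
    | zero => intro i; simpa [seq] using hball 1 i
    | succ k ih =>
      intro i
      have h := hlip (seq (k+1)) (seq k) (L^k * R) (by positivity) (hball _) (hball _) ih i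
      rw [← hseq, ← hseq] at h
      refine h.trans (le_of_eq ?_)
      ring
  have hlim : ∀ i, ∃ x, Filter.Tendsto (fun k => seq k i) Filter.atTop (nhds x) := by
    intro i
    apply cauchySeq_tendsto_of_complete
    apply cauchySeq_of_le_geometric L (ww m i * R) hL1
    intro k
    rw [dist_comm, dist_eq_norm]
    exact (hstep k i).trans (le_of_eq (by ring))
  choose a hta using hlim
  have ha : ∀ i, ‖a i‖ ≤ ww m i * R := fun i =>
    le_of_tendsto (hta i).norm (Filter.Eventually.of_forall (fun k => hball k i))
  have htb : ∀ i, Filter.Tendsto (fun k => bb u v (seq k) i) Filter.atTop (nhds (bb u v a i)) := by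
    intro i
    exact (((hta i).mul_const _).add ((hta (i+1)).mul_const _)).const_smul _
  have hfix : ∀ i, a i = Phi u v K m a i := by
    intro i
    have h1 : Filter.Tendsto (fun k => Phi u v K m (seq k) i) Filter.atTop (nhds (a i)) := by
      have := (Filter.tendsto_add_atTop_iff_nat 1).2 (hta i)
      simpa only [hseq] using this
    refine tendsto_nhds_unique h1 ?_
    rcases i with _ | i
    · exact tendsto_const_nhds
    simp only [Phi]
    split_ifs with hi
    swap
    · exact tendsto_const_nhds
    apply Filter.Tendsto.add
    · unfold EE
      exact ((((((hta (i+1)).const_mul _).mul_const _).add (((hta (i+2)).const_mul _).mul_const _)).add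
        (((hta i).const_mul _).mul_const _)).add (((hta (i+1)).const_mul _).mul_const _)).const_smul _
    · unfold FF
      exact ((tendsto_const_nhds.sub ((htb (i+2)).const_smul _)).const_smul _).sub
        ((htb (i+1)).mul (((htb m).const_mul _).sub ((htb m).mul_const _)))
  refine ⟨bb u v a, ?_, ?_, ?_⟩
  · intro i
    refine (bb_bound huu hvv m a R hR0 ha i).trans (le_of_eq ?_)
    rw [hR]; field_simp; norm_num
  · have h1 : a (m+1) = 0 := by rw [hfix]; simp [Phi]
    have h2 : a (m+2) = 0 := by rw [hfix]; simp [Phi]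
    simp [bb, h1, h2]
  · intro i hi
    have hf := hfix (i+1)
    simp only [Phi, if_pos hi] at hf
    set b := bb u v a with hb
    have key : (v * b (i+1) - b (i+1) * v) + (u * b i - b i * u) = a (i+1) - EE u v a i := by
      have e1 : b (i+1) * v = (-(1/2):ℝ) • a (i+1) := by
        simp only [hb, bb, smul_mul_assoc, add_mul, mul_assoc, hvv, huv, mul_one, mul_zero, add_zero]
      have e2 : b i * u = (-(1/2):ℝ) • a (i+1) := by
        simp only [hb, bb, smul_mul_assoc, add_mul, mul_assoc, huu, hvu, mul_one, mul_zero, zero_add]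
      rw [e1, e2]
      simp only [hb, bb, EE, mul_smul_comm, mul_add, mul_assoc]
      module
    have key2 : a (i+1) - EE u v a i = FF u K m b i := by rw [sub_eq_iff_eq_add']; exact hf
    rw [key, key2]
    unfold FF
    rw [sub_add_cancel, smul_smul, mul_inv_cancel₀ hK0.ne', one_smul, sub_add_cancel]

end solve

section mat
variable {A : Type*} [NormedRing A] [StarRing A] [CStarRing A] [NormedAlgebra ℝ A]

lemma matrix_part {u v : A} (huu : star u * u = 1) (hvv : star v * v = 1)
    (m : ℕ) (hm : 1 ≤ m) (K : ℝ) (hK : 1 ≤ K) (hmK : ((m:ℝ) + 1) ^ 2 ≤ K)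
    {s : ℕ → A} (h1 : ∀ i j, i ≤ m → j ≤ m → star (s i) * s j = if i = j then 1 else 0)
    (h2 : ∑ i ∈ Finset.range (m + 1), s i * star (s i) = 1)
    (b : ℕ → A) (hb : ∀ i, ‖b i‖ ≤ 1 / (128 * ((m:ℝ) + 1) ^ 2)) (hbm : b (m + 1) = 0)
    (heq : ∀ i, i < m → K • ((v * b (i+1) - b (i+1) * v) + (u * b i - b i * u)
        + b (i+1) * (u * b m - b m * u)) + ((i:ℝ) + 2) • b (i + 2)
        = (if i + 1 = m then (m + 1 : ℝ) else 0) • (1 : A)) :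
    ∃ d x : A, ‖d * x - x * d - 1‖ ≤ 5 * K / 2 ^ m ∧ ‖d‖ * ‖x‖ ≤ 35 * K := by
  have hm0 : (0:ℝ) ≤ m := by positivity
  have hn1 : (1:ℝ) ≤ (m:ℝ) + 1 := by linarith
  have hs : ∀ i, i ≤ m → ‖s i‖ ≤ 1 := by
    intro i hi
    apply norm_le_one_of_isom
    rw [h1 i i hi hi]; simp
  have hb1 : ∀ i, ‖b i‖ ≤ 1 := by
    intro i
    refine (hb i).trans ?_
    rw [div_le_one (by positivity)]; nlinarith
  obtain ⟨β, hβ⟩ : ∃ β : ℕ → ℝ, ∀ i, β i = 2 ^ i / 2 ^ m := ⟨_, fun _ => rfl⟩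
  have hβs : ∀ i, β (i+1) = 2 * β i := by intro i; rw [hβ, hβ, pow_succ]; ring
  have hβm : β m = 1 := by rw [hβ]; field_simp
  have hβ0 : ∀ i, 0 ≤ β i := by intro i; rw [hβ]; positivity
  have hβ1 : ∀ i, i ≤ m → β i ≤ 1 := by
    intro i hi; rw [hβ, div_le_one (by positivity)]
    exact pow_le_pow_right₀ (by norm_num) hi
  obtain ⟨B, hB⟩ : ∃ B : A, B = ∑ i ∈ Finset.range (m+1), β i • (s i * b i) := ⟨_, rfl⟩
  obtain ⟨X, hX⟩ : ∃ X : A, X = T s m (fun i => if i < m then (2:ℝ) • s (i+1) else B) := ⟨_, rfl⟩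
  obtain ⟨N, hN⟩ : ∃ N : A, N = T s m (fun i => ((i:ℝ)/2) • s (i-1)) := ⟨_, rfl⟩
  obtain ⟨V, hV⟩ : ∃ V : A, V = T s m (fun i => s i * v) := ⟨_, rfl⟩
  obtain ⟨U, hU⟩ : ∃ U : A, U = T s m (fun i => s i * u) := ⟨_, rfl⟩
  have Xs : ∀ i, i < m → X * s i = (2:ℝ) • s (i+1) := by
    intro i hi; rw [hX, T_apply h1 _ hi.le, if_pos hi]
  have Xm : X * s m = B := by rw [hX, T_apply h1 _ le_rfl]; simp
  have Ns : ∀ i, i ≤ m → N * s i = ((i:ℝ)/2) • s (i-1) := by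
    intro i hi; rw [hN, T_apply h1 _ hi]
  have Vs : ∀ i, i ≤ m → V * s i = s i * v := by
    intro i hi; rw [hV, T_apply h1 _ hi]
  have Us : ∀ i, i ≤ m → U * s i = s i * u := by
    intro i hi; rw [hU, T_apply h1 _ hi]
  have nB : ‖B‖ ≤ 1 := by
    rw [hB]
    refine (norm_sum_le _ _).trans ?_
    have : ∀ i ∈ Finset.range (m+1), ‖β i • (s i * b i)‖ ≤ 1 / (128 * ((m:ℝ) + 1) ^ 2) := by
      intro i hi
      have hi' : i ≤ m := by simpa [Nat.lt_succ_iff] using hi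
      rw [norm_smul, Real.norm_of_nonneg (hβ0 i)]
      calc _ ≤ 1 * (1 * (1 / (128 * ((m:ℝ) + 1) ^ 2))) := by
            gcongr
            · exact hβ1 i hi'
            · exact (norm_mul_le _ _).trans (by gcongr; exacts [hs i hi', hb i])
        _ = _ := by ring
    refine (Finset.sum_le_card_nsmul _ _ _ this).trans ?_
    rw [Finset.card_range, nsmul_eq_mul, mul_one_div, div_le_one (by positivity)]
    push_cast
    nlinarith
  have nV : ‖V‖ ≤ 1 := by
    rw [hV]
    apply norm_T_le h2
    intro i j hi hj
    rw [star_mul, show star v * star (s i) * (s j * v) = star v * (star (s i) * s j) * v by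
      noncomm_ring, h1 i j hi hj]
    split_ifs <;> simp [hvv]
  have nU : ‖U‖ ≤ 1 := by
    rw [hU]
    apply norm_T_le h2
    intro i j hi hj
    rw [star_mul, show star u * star (s i) * (s j * u) = star u * (star (s i) * s j) * u by
      noncomm_ring, h1 i j hi hj]
    split_ifs <;> simp [huu]
  have nX : ‖X‖ ≤ 5 := by
    have nW : ‖T s m (fun i => if i < m then s (i+1) else s 0)‖ ≤ 1 := by
      apply norm_T_le h2
      intro i j hi hj
      split_ifs with c1 c2 c3 c4 c5 c6
      · rw [h1 _ _ (by omega) (by omega)]; simp [c3]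
      · rw [h1 _ _ (by omega) (by omega)]; simp [c3]
      · omega
      · rw [h1 _ _ (by omega) (by omega)]; simp
      · omega
      · rw [h1 _ _ (by omega) (by omega)]; simp
      · rw [h1 _ _ (by omega) (by omega)]; simp
      · omega
    have e : X = (2:ℝ) • T s m (fun i => if i < m then s (i+1) else s 0)
        + (B - (2:ℝ) • s 0) * star (s m) := by
      rw [hX]; unfold T
      rw [Finset.sum_range_succ, Finset.sum_range_succ, smul_add, Finset.smul_sum]
      have : ∀ i ∈ Finset.range m, (if i < m then (2:ℝ) • s (i+1) else B) * star (s i)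
          = (2:ℝ) • ((if i < m then s (i+1) else s 0) * star (s i)) := by
        intro i hi
        rw [if_pos (by simpa using hi), if_pos (by simpa using hi), smul_mul_assoc]
      rw [Finset.sum_congr rfl this]
      simp only [lt_irrefl, if_false, sub_mul, smul_mul_assoc]
      abel
    rw [e]
    have k1 : ‖(2:ℝ) • T s m (fun i => if i < m then s (i+1) else s 0)‖ ≤ 2 := by
      rw [norm_smul]; norm_num; linarith
    have k2 : ‖B - (2:ℝ) • s 0‖ ≤ 3 := by
      have k3 : ‖(2:ℝ) • s 0‖ ≤ 2 := by
        rw [norm_smul]; norm_num; linarith [hs 0 (by omega)]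
      exact (norm_sub_le _ _).trans (by linarith)
    have k4 : ‖(B - (2:ℝ) • s 0) * star (s m)‖ ≤ 3 * 1 :=
      (norm_mul_le _ _).trans (by rw [norm_star]; gcongr; exact hs m le_rfl)
    exact (norm_add_le _ _).trans (by linarith)
  have nN : ‖N‖ ≤ ((m:ℝ) + 1) ^ 2 := by
    rw [hN]; unfold T
    refine (norm_sum_le _ _).trans ?_
    have : ∀ i ∈ Finset.range (m+1), ‖((i:ℝ)/2) • s (i-1) * star (s i)‖ ≤ (m:ℝ) + 1 := by
      intro i hi
      have hi' : i ≤ m := by simpa [Nat.lt_succ_iff] using hi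
      have hi'' : (i:ℝ) ≤ m := by exact_mod_cast hi'
      have : ‖s (i-1) * star (s i)‖ ≤ 1 * 1 :=
        (norm_mul_le _ _).trans (by rw [norm_star]; gcongr; exacts [hs _ (by omega), hs _ hi'])
      rw [smul_mul_assoc, norm_smul, Real.norm_of_nonneg (by positivity)]
      have h0 : (0:ℝ) ≤ i := by positivity
      calc _ ≤ (i:ℝ)/2 * (1 * 1) := by gcongr
        _ ≤ _ := by linarith
    refine (Finset.sum_le_card_nsmul _ _ _ this).trans ?_
    rw [Finset.card_range, nsmul_eq_mul]
    push_cast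
    nlinarith
  have hcomm : (N + K • (V + X * U)) * X - X * (N + K • (V + X * U))
      = (N * X - X * N) + K • ((V * X - X * V) + X * (U * X - X * U)) := by
    simp only [add_mul, mul_add, smul_mul_assoc, mul_smul_comm, mul_sub, smul_add, smul_sub,
      mul_assoc]
    abel
  obtain ⟨r, hr⟩ : ∃ r : A, r = b 1 + K • ((v * b 0 - b 0 * v) + b 0 * (u * b m - b m * u)) :=
    ⟨_, rfl⟩
  have nr : ‖r‖ ≤ 5 * K := by
    have hb14 : ∀ i, ‖b i‖ ≤ 1/2 := by
      intro i
      refine (hb i).trans ?_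
      rw [div_le_div_iff₀ (by positivity) (by norm_num)]; nlinarith
    have k1 := norm_comm_le hvv (b 0)
    have k2 : ‖b 0 * (u * b m - b m * u)‖ ≤ 1 * 2 :=
      (norm_mul_le _ _).trans (by
        gcongr
        · exact hb1 0
        · linarith [norm_comm_le huu (b m), hb1 m])
    have k3 : ‖K • ((v * b 0 - b 0 * v) + b 0 * (u * b m - b m * u))‖ ≤ K * 4 := by
      rw [norm_smul, Real.norm_of_nonneg (by linarith)]
      gcongr
      exact (norm_add_le _ _).trans (by linarith [hb1 0])
    rw [hr]
    exact (norm_add_le _ _).trans (by linarith [hb1 1])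
  have low : ∀ i, i < m → ((N + K • (V + X * U)) * X - X * (N + K • (V + X * U)) - 1) * s i = 0 := by
    intro i hi
    rw [hcomm]
    have a1 : (V * X - X * V) * s i = 0 := by
      rw [sub_mul, mul_assoc, mul_assoc, Xs i hi, Vs i hi.le, ← mul_assoc, Xs i hi,
        mul_smul_comm, Vs _ hi, smul_mul_assoc, sub_self]
    have a2 : (U * X - X * U) * s i = 0 := by
      rw [sub_mul, mul_assoc, mul_assoc, Xs i hi, Us i hi.le, ← mul_assoc, Xs i hi,
        mul_smul_comm, Us _ hi, smul_mul_assoc, sub_self]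
    have a3 : (N * X - X * N) * s i = s i := by
      rw [sub_mul, mul_assoc, mul_assoc, Xs i hi, Ns i hi.le, mul_smul_comm, Ns _ hi, mul_smul_comm]
      rcases i with _ | i
      · simp
      · simp only [Nat.add_sub_cancel]
        rw [Xs i (by omega)]
        push_cast
        module
    rw [sub_mul, add_mul, smul_mul_assoc, add_mul, mul_assoc X, a1, a2, a3]
    simp
  have top : ((N + K • (V + X * U)) * X - X * (N + K • (V + X * U)) - 1) * s m
      = β 0 • (s 0 * r) := by
    rw [hcomm]
    have a1 : (V * X - X * V) * s m
        = ∑ i ∈ Finset.range (m+1), β i • (s i * (v * b i - b i * v)) := by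
      rw [sub_mul, mul_assoc, mul_assoc, Xm, Vs m le_rfl, ← mul_assoc, Xm, hB, Finset.mul_sum,
        Finset.sum_mul, ← Finset.sum_sub_distrib]
      apply Finset.sum_congr rfl
      intro i hi
      have hi' : i ≤ m := by simpa [Nat.lt_succ_iff] using hi
      rw [mul_smul_comm, ← mul_assoc, Vs i hi', smul_mul_assoc, mul_sub, smul_sub, mul_assoc,
        mul_assoc]
    have a2 : (U * X - X * U) * s m
        = ∑ i ∈ Finset.range (m+1), β i • (s i * (u * b i - b i * u)) := by
      rw [sub_mul, mul_assoc, mul_assoc, Xm, Us m le_rfl, ← mul_assoc, Xm, hB, Finset.mul_sum,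
        Finset.sum_mul, ← Finset.sum_sub_distrib]
      apply Finset.sum_congr rfl
      intro i hi
      have hi' : i ≤ m := by simpa [Nat.lt_succ_iff] using hi
      rw [mul_smul_comm, ← mul_assoc, Us i hi', smul_mul_assoc, mul_sub, smul_sub, mul_assoc,
        mul_assoc]
    have a2' : X * ((U * X - X * U) * s m)
        = ∑ i ∈ Finset.range m, β (i+1) • (s (i+1) * (u * b i - b i * u))
          + ∑ i ∈ Finset.range (m+1), β i • (s i * (b i * (u * b m - b m * u))) := by
      rw [a2, Finset.sum_range_succ, mul_add, Finset.mul_sum]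
      congr 1
      · apply Finset.sum_congr rfl
        intro i hi
        rw [mul_smul_comm, ← mul_assoc, Xs i (by simpa using hi), smul_mul_assoc, hβs]
        module
      · rw [hβm, one_smul, ← mul_assoc, Xm, hB, Finset.sum_mul]
        apply Finset.sum_congr rfl
        intro i hi
        rw [smul_mul_assoc, mul_assoc]
    have a3 : (N * X - X * N) * s m
        = ∑ i ∈ Finset.range (m+1), (β i * ((i:ℝ)+1)) • (s i * b (i+1)) - (m:ℝ) • s m := by
      rw [sub_mul, mul_assoc, mul_assoc, Xm, Ns m le_rfl, mul_smul_comm, Xs (m-1) (by omega),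
        Nat.sub_add_cancel hm, hB, Finset.mul_sum, Finset.sum_range_succ', Finset.sum_range_succ]
      have z : N * (β 0 • (s 0 * b 0)) = 0 := by
        rw [mul_smul_comm, ← mul_assoc, Ns 0 (by omega)]; simp
      rw [z, hbm, mul_zero, smul_zero, add_zero, add_zero]
      congr 1
      · apply Finset.sum_congr rfl
        intro i hi
        rw [mul_smul_comm, ← mul_assoc, Ns (i+1) (by simpa using hi), hβs, smul_mul_assoc]
        simp only [Nat.add_sub_cancel]
        push_cast
        module
      · module
    rw [sub_mul, add_mul, smul_mul_assoc, add_mul, mul_assoc X, a1, a2', a3,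
      Finset.sum_range_succ' _ m, Finset.sum_range_succ' _ m, Finset.sum_range_succ' _ m]
    have hsum : ∑ i ∈ Finset.range m, (β (i+1) * (((i+1:ℕ):ℝ)+1)) • (s (i+1) * b (i+1+1))
        + K • (∑ i ∈ Finset.range m, β (i+1) • (s (i+1) * (v * b (i+1) - b (i+1) * v))
          + (∑ i ∈ Finset.range m, β (i+1) • (s (i+1) * (u * b i - b i * u))
            + ∑ i ∈ Finset.range m, β (i+1) • (s (i+1) * (b (i+1) * (u * b m - b m * u)))))
        = ((m:ℝ) + 1) • s m := by
      rw [← Finset.sum_add_distrib, ← Finset.sum_add_distrib, Finset.smul_sum,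
        ← Finset.sum_add_distrib]
      have : ∀ i ∈ Finset.range m, (β (i+1) * (((i+1:ℕ):ℝ)+1)) • (s (i+1) * b (i+1+1))
          + K • (β (i+1) • (s (i+1) * (v * b (i+1) - b (i+1) * v))
          + (β (i+1) • (s (i+1) * (u * b i - b i * u))
            + β (i+1) • (s (i+1) * (b (i+1) * (u * b m - b m * u)))))
          = if i = m - 1 then ((m:ℝ) + 1) • s m else 0 := by
        intro i hi
        have hi' : i < m := by simpa using hi
        have h := congrArg (fun t => β (i+1) • (s (i+1) * t)) (heq i hi')
        simp only [mul_add, mul_smul_comm, mul_one] at h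
        have rr : (if i = m - 1 then ((m:ℝ) + 1) • s m else 0)
            = β (i+1) • (if i + 1 = m then ((m:ℝ) + 1) else 0) • s (i+1) := by
          by_cases c : i + 1 = m
          · rw [if_pos (by omega), if_pos c, c, hβm, one_smul]
          · rw [if_neg (by omega), if_neg c, zero_smul, smul_zero]
        rw [rr, ← h]
        push_cast
        module
      rw [Finset.sum_congr rfl this, Finset.sum_ite_eq' , if_pos (by simp; omega)]
    have hr' : s 0 * r = s 0 * b 1 + K • (s 0 * (v * b 0 - b 0 * v)
        + s 0 * (b 0 * (u * b m - b m * u))) := by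
      rw [hr, mul_add, mul_smul_comm, mul_add]
    rw [hr', one_mul]
    have fin := eq_sub_of_add_eq hsum
    rw [fin]
    simp only [zero_add, Nat.cast_zero, mul_one]
    module
  refine ⟨N + K • (V + X * U), X, ?_, ?_⟩
  · set Y := (N + K • (V + X * U)) * X - X * (N + K • (V + X * U)) - 1 with hY
    have hYe : Y = β 0 • (s 0 * r) * star (s m) := by
      rw [← top]
      conv_lhs => rw [eq_T h2 Y]
      unfold T
      rw [Finset.sum_range_succ, Finset.sum_eq_zero, zero_add]
      intro i hi
      have hl := low i (by simpa using hi)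
      simp only [hl, zero_mul]
    rw [hYe, smul_mul_assoc, norm_smul, Real.norm_of_nonneg (hβ0 0), hβ]
    have k : ‖s 0 * r * star (s m)‖ ≤ 1 * (5 * K) * 1 :=
      (norm_mul_le _ _).trans (by
        rw [norm_star]
        gcongr
        · exact (norm_mul_le _ _).trans (by gcongr; exact hs 0 (by omega))
        · exact hs m le_rfl)
    calc _ ≤ 2 ^ 0 / 2 ^ m * (1 * (5 * K) * 1) := by gcongr
      _ = _ := by ring
  · have kXU : ‖X * U‖ ≤ 5 * 1 := (norm_mul_le _ _).trans (by gcongr)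
    have k1 : ‖K • (V + X * U)‖ ≤ K * 6 := by
      rw [norm_smul, Real.norm_of_nonneg (by linarith)]
      gcongr
      exact (norm_add_le _ _).trans (by linarith)
    have k2 : ‖N + K • (V + X * U)‖ ≤ 7 * K := (norm_add_le _ _).trans (by linarith)
    calc _ ≤ 7 * K * 5 := by gcongr
      _ = _ := by ring

end mat

end CCI

/-- **Commutators close to the identity in unital C*-algebras.** Let `A` be a unital C*-algebra
containing elements `u, v` with `u*u = v*v = uu* + vv* = 1` and `u*v = v*u = 0`.  Then there is
a constant `C > 0` such that for every `0 < ε ≤ 1/2` there exist `d, x ∈ A` with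
`‖[d, x] - 1‖ ≤ ε` and `‖d‖ ‖x‖ ≤ C (log (1/ε))⁵`. -/
theorem commutators_close_to_identity
    {A : Type*} [NormedRing A] [StarRing A] [CStarRing A]
    [NormedAlgebra ℂ A] [StarModule ℂ A] [CompleteSpace A]
    (u v : A)
    (huu : star u * u = 1) (hvv : star v * v = 1)
    (hsum : u * star u + v * star v = 1)
    (huv : star u * v = 0) (hvu : star v * u = 0) :
    ∃ C : ℝ, 0 < C ∧ ∀ ε : ℝ, 0 < ε → ε ≤ 1 / 2 →
      ∃ d x : A, ‖d * x - x * d - 1‖ ≤ ε ∧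
        ‖d‖ * ‖x‖ ≤ C * Real.log (1 / ε) ^ 5 := by
  obtain ⟨C, hC, hCm⟩ := CCI.exists_num
  refine ⟨35 * 16384 * C ^ 5, by positivity, ?_⟩
  intro ε h0 h1
  obtain ⟨m, hm, he, hl⟩ := hCm ε h0 h1
  obtain ⟨K, hK⟩ : ∃ K : ℝ, K = 16384 * ((m:ℝ) + 1) ^ 5 := ⟨_, rfl⟩
  have hm0 : (0:ℝ) ≤ m := by positivity
  have hn : (1:ℝ) ≤ (m:ℝ) + 1 := by linarith
  obtain ⟨s, hs1, hs2⟩ := CCI.exists_frame huu hvv hsum huv hvu m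
  obtain ⟨b, hb, hbm, heq⟩ := CCI.exists_solution huu hvv huv hvu m K hK
  have hp : ((m:ℝ) + 1) ^ 2 ≤ ((m:ℝ) + 1) ^ 5 := pow_le_pow_right₀ hn (by norm_num)
  have hp1 : (1:ℝ) ≤ ((m:ℝ) + 1) ^ 5 := one_le_pow₀ hn
  obtain ⟨d, x, hd, hx⟩ := CCI.matrix_part huu hvv m hm K (by rw [hK]; linarith)
    (by rw [hK]; linarith) hs1 hs2 b hb hbm heq
  refine ⟨d, x, hd.trans (le_trans (le_of_eq ?_) he), hx.trans ?_⟩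
  · rw [hK]; ring
  · have : ((m:ℝ) + 1) ^ 5 ≤ (C * Real.log (1 / ε)) ^ 5 := by gcongr
    rw [mul_pow] at this
    rw [hK]; linarith
end
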